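/- If (G, S, L) is a canvas with V(S) = {v1, v2} (and S edgeless), |L(v1)| ≥ 2 and |L(v2)| ≥ 2, then G has an L-coloring. -/

import Mathlib

/-!
Common definitions: plane graphs (given by a concrete embedding in the plane),
outer face, canvases, list colorings, governments, harmonicas and coloring
harmonicas, following Postle–Thomas,
"Five-list-coloring graphs on surfaces III".
-/

open Set

universe u

/-- A finite simple graph together with an embedding in the plane:
each vertex gets a point, each edge a simple arc joining its endpoints;
arcs avoid other vertices, and two distinct edges meet only in common
endpoints. -/
structure PlaneGraph (V : Type u) where
  verts : Set V
  Adj : V → V → Prop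
  finite_verts : verts.Finite
  adj_symm : ∀ u v, Adj u v → Adj v u
  adj_irrefl : ∀ v, ¬Adj v v
  adj_mem : ∀ u v, Adj u v → u ∈ verts
  pos : V → ℝ × ℝ
  arc : Sym2 V → Set (ℝ × ℝ)
  pos_injOn : Set.InjOn pos verts
  arc_arc : ∀ u v, Adj u v → ∃ f : ℝ → ℝ × ℝ,
    ContinuousOn f (Set.Icc 0 1) ∧ Set.InjOn f (Set.Icc 0 1) ∧
    f '' Set.Icc 0 1 = arc s(u, v) ∧ f 0 = pos u ∧ f 1 = pos v
  arc_avoid : ∀ u v, Adj u v → ∀ w ∈ verts, pos w ∈ arc s(u, v) → w = u ∨ w = v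
  arc_meet : ∀ u v x y, Adj u v → Adj x y → s(u, v) ≠ s(x, y) →
    arc s(u, v) ∩ arc s(x, y) ⊆ pos '' (({u, v} : Set V) ∩ ({x, y} : Set V))

namespace PlaneGraph

variable {V : Type u}

/-- The point set of the drawing of the plane graph. -/
def image (G : PlaneGraph V) : Set (ℝ × ℝ) :=
  G.pos '' G.verts ∪ ⋃ (u : V) (v : V) (_ : G.Adj u v), G.arc s(u, v)

/-- The outer (unbounded) face of the drawing. -/
def outerFace (G : PlaneGraph V) : Set (ℝ × ℝ) :=
  {p | p ∉ G.image ∧ ¬Bornology.IsBounded (connectedComponentIn G.imageᶜ p)}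

/-- A vertex incident with (i.e. on the boundary of) the outer face. -/
def OnOuter (G : PlaneGraph V) (v : V) : Prop := G.pos v ∈ frontier G.outerFace

/-- An edge incident with (i.e. on the boundary of) the outer face. -/
def EdgeOnOuter (G : PlaneGraph V) (u v : V) : Prop :=
  G.arc s(u, v) ⊆ frontier G.outerFace

/-- The vertices of the boundary of the outer face. -/
def boundaryVerts (G : PlaneGraph V) : Set V := {v | v ∈ G.verts ∧ G.OnOuter v}

/-- Connectivity of a plane graph. -/
def Connected (G : PlaneGraph V) : Prop :=
  G.verts.Nonempty ∧ ∀ u ∈ G.verts, ∀ v ∈ G.verts, Relation.ReflTransGen G.Adj u v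

/-- `H` is a (plane) subgraph of `G`, drawn the same way. -/
def IsSubgraph (H G : PlaneGraph V) : Prop :=
  H.verts ⊆ G.verts ∧ (∀ u v, H.Adj u v → G.Adj u v) ∧
  (∀ v ∈ H.verts, H.pos v = G.pos v) ∧
  (∀ u v, H.Adj u v → H.arc s(u, v) = G.arc s(u, v))

/-- Delete a set of vertices (and all incident edges) from a plane graph. -/
def deleteVerts (G : PlaneGraph V) (s : Set V) : PlaneGraph V where
  verts := G.verts \ s
  Adj u v := G.Adj u v ∧ u ∉ s ∧ v ∉ s
  finite_verts := G.finite_verts.subset Set.diff_subset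
  adj_symm := fun u v h => ⟨G.adj_symm u v h.1, h.2.2, h.2.1⟩
  adj_irrefl := fun v h => G.adj_irrefl v h.1
  adj_mem := fun u v h => ⟨G.adj_mem u v h.1, h.2.1⟩
  pos := G.pos
  arc := G.arc
  pos_injOn := G.pos_injOn.mono Set.diff_subset
  arc_arc := fun u v h => G.arc_arc u v h.1
  arc_avoid := fun u v h w hw hm => G.arc_avoid u v h.1 w hw.1 hm
  arc_meet := fun u v x y h h' hne => G.arc_meet u v x y h.1 h'.1 hne

/-- `G` has a proper coloring from the lists `L`. -/
def HasLColoring (G : PlaneGraph V) (L : V → Finset ℕ) : Prop :=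
  ∃ φ : V → ℕ, (∀ v ∈ G.verts, φ v ∈ L v) ∧ ∀ u v, G.Adj u v → φ u ≠ φ v

/-- A vertex of degree exactly one. -/
def DegreeOne (G : PlaneGraph V) (x : V) : Prop :=
  (∃ a, G.Adj x a) ∧ ∀ a b, G.Adj x a → G.Adj x b → a = b

end PlaneGraph

/-- The cyclic successor of an index in a list. -/
def cycNext {V : Type u} (C : List V) (i : Fin C.length) : Fin C.length :=
  ⟨((i : ℕ) + 1) % C.length, Nat.mod_lt _ (lt_of_le_of_lt (Nat.zero_le _) i.isLt)⟩

/-- The list `C` is a cycle of `G` whose image is exactly the boundary of the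
outer face of `G`; i.e. `G` is a plane graph with outer cycle `C`. -/
def PlaneGraph.IsOuterCycle {V : Type u} (G : PlaneGraph V) (C : List V) : Prop :=
  C.Nodup ∧ 3 ≤ C.length ∧ (∀ v ∈ C, v ∈ G.verts) ∧
  (∀ i : Fin C.length, G.Adj (C.get i) (C.get (cycNext C i))) ∧
  frontier G.outerFace =
    G.pos '' {v | v ∈ C} ∪ ⋃ i : Fin C.length, G.arc s(C.get i, C.get (cycNext C i))

/-- `pq` is an edge of the cycle (given as a list) `C`. -/
def IsCycleEdge {V : Type u} (C : List V) (p q : V) : Prop :=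
  ∃ i : Fin C.length, s(p, q) = s(C.get i, C.get (cycNext C i))

/-- `(G, S, L)` is a canvas, where the subgraph `S` of the boundary of the
outer face of `G` is given by its vertex set `Sverts` and adjacency `SAdj`. -/
structure IsCanvas {V : Type u} (G : PlaneGraph V) (Sverts : Set V) (SAdj : V → V → Prop)
    (L : V → Finset ℕ) : Prop where
  sadj_symm : ∀ u v, SAdj u v → SAdj v u
  sadj_sub : ∀ u v, SAdj u v → G.Adj u v
  sadj_mem : ∀ u v, SAdj u v → u ∈ Sverts
  sverts_sub : Sverts ⊆ G.verts
  sverts_outer : ∀ v ∈ Sverts, G.OnOuter v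
  sedges_outer : ∀ u v, SAdj u v → G.EdgeOnOuter u v
  lists_nonempty : ∀ v ∈ G.verts, (L v).Nonempty
  card_inner : ∀ v ∈ G.verts, ¬G.OnOuter v → 5 ≤ (L v).card
  card_outside_S : ∀ v ∈ G.verts, v ∉ Sverts → 3 ≤ (L v).card
  scolorable : ∃ φ : V → ℕ, (∀ v ∈ Sverts, φ v ∈ L v) ∧ ∀ u v, SAdj u v → φ u ≠ φ v

/-- The adjacency relation of the single-edge path `p₁p₂`. -/
def pathAdj {V : Type u} (p1 p2 : V) : V → V → Prop :=
  fun u v => (u = p1 ∧ v = p2) ∨ (u = p2 ∧ v = p1)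

/-- `(G, P, L)` is a canvas whose precolored subgraph is a path `P = p₁p₂` of
length one (in the boundary of the outer face of `G`). -/
def IsPathCanvas {V : Type u} (G : PlaneGraph V) (p1 p2 : V) (L : V → Finset ℕ) : Prop :=
  p1 ≠ p2 ∧ IsCanvas G {p1, p2} (pathAdj p1 p2) L

/-- `c = (c₁, c₂)` is a proper `L`-coloring of the edge `p₁p₂`. -/
def ProperEdgeColoring {V : Type u} (L : V → Finset ℕ) (p1 p2 : V) (c : ℕ × ℕ) : Prop :=
  c.1 ∈ L p1 ∧ c.2 ∈ L p2 ∧ c.1 ≠ c.2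

/-- `Φ_T(P', 𝒞)`: the colorings of the edge `q₁q₂` extendable to an `L`-coloring
of `G` whose restriction to `p₁p₂` lies in `C`. -/
def Phi {V : Type u} (G : PlaneGraph V) (L : V → Finset ℕ) (p1 p2 q1 q2 : V)
    (C : Set (ℕ × ℕ)) : Set (ℕ × ℕ) :=
  {c | ∃ φ : V → ℕ, (∀ v ∈ G.verts, φ v ∈ L v) ∧ (∀ u v, G.Adj u v → φ u ≠ φ v) ∧
    (φ p1, φ p2) ∈ C ∧ φ q1 = c.1 ∧ φ q2 = c.2}

/-- The set of colors used on the first vertex of the path. -/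
def fstColors (C : Set (ℕ × ℕ)) : Set ℕ := Prod.fst '' C

/-- The set of colors used on the second vertex of the path. -/
def sndColors (C : Set (ℕ × ℕ)) : Set ℕ := Prod.snd '' C

/-- A dictatorship: at least two (distinct) colorings, all agreeing on one of
the two vertices (the dictator). -/
def IsDictatorship (C : Set (ℕ × ℕ)) : Prop :=
  (∃ c ∈ C, ∃ d ∈ C, c ≠ d) ∧
  ((∃ a, ∀ c ∈ C, c.1 = a) ∨ (∃ a, ∀ c ∈ C, c.2 = a))

/-- A democracy: exactly the two colorings `(x, y)` and `(y, x)`. -/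
def IsDemocracy (C : Set (ℕ × ℕ)) : Prop :=
  ∃ x y : ℕ, x ≠ y ∧ C = {(x, y), (y, x)}

/-- A government is a dictatorship or a democracy. -/
def IsGovernment (C : Set (ℕ × ℕ)) : Prop := IsDictatorship C ∨ IsDemocracy C

/-- A confederacy: not a government, but the union of two governments. -/
def IsConfederacy (C : Set (ℕ × ℕ)) : Prop :=
  ¬IsGovernment C ∧ ∃ C1 C2 : Set (ℕ × ℕ), IsGovernment C1 ∧ IsGovernment C2 ∧ C = C1 ∪ C2

/-- The canvas `(G, p₁p₂, L)` is a harmonica from the path `p₁p₂` to the path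
`q₁q₂` with government `C`. -/
inductive IsHarmonica {V : Type u} (L : V → Finset ℕ) :
    PlaneGraph V → V → V → V → V → Set (ℕ × ℕ) → Prop where
  /-- Rule (i): `G = P = P'`. -/
  | same (G : PlaneGraph V) (p1 p2 q1 q2 : V) (C : Set (ℕ × ℕ))
      (hcanvas : IsPathCanvas G p1 p2 L)
      (hproper : ∀ c ∈ C, ProperEdgeColoring L p1 p2 c)
      (hgov : IsGovernment C)
      (hq : (q1 = p1 ∧ q2 = p2) ∨ (q1 = p2 ∧ q2 = p1))
      (hverts : G.verts = {p1, p2})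
      (hedges : ∀ u v, G.Adj u v → pathAdj p1 p2 u v) :
      IsHarmonica L G p1 p2 q1 q2 C
  /-- Rule (ii): `C` is a dictatorship, `G = P ∪ P'`, `V(P) ∩ V(P') = {z}`
  where `z` is the dictator. -/
  | cherry (G : PlaneGraph V) (p1 p2 q1 q2 z : V) (C : Set (ℕ × ℕ))
      (hcanvas : IsPathCanvas G p1 p2 L)
      (hproper : ∀ c ∈ C, ProperEdgeColoring L p1 p2 c)
      (hdict : IsDictatorship C)
      (hq : q1 ≠ q2) (hqadj : G.Adj q1 q2) (hqout : G.EdgeOnOuter q1 q2)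
      (hverts : G.verts = {p1, p2, q1, q2})
      (hedges : ∀ u v, G.Adj u v → pathAdj p1 p2 u v ∨ pathAdj q1 q2 u v)
      (hz : (({p1, p2} : Set V) ∩ ({q1, q2} : Set V)) = {z})
      (hzdict : (z = p1 ∧ ∃ a, ∀ c ∈ C, c.1 = a) ∨ (z = p2 ∧ ∃ a, ∀ c ∈ C, c.2 = a)) :
      IsHarmonica L G p1 p2 q1 q2 C
  /-- Rule (iii): `C` is a dictatorship with dictator `z ∈ V(P)` in color `c`,
  sitting on a triangle `z u₁ u₂`. -/
  | dict (G : PlaneGraph V) (p1 p2 q1 q2 z w u1 u2 : V) (c : ℕ) (L0 : Finset ℕ)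
      (C C' : Set (ℕ × ℕ))
      (hcanvas : IsPathCanvas G p1 p2 L)
      (hproper : ∀ d ∈ C, ProperEdgeColoring L p1 p2 d)
      (hdict : IsDictatorship C)
      (hq : q1 ≠ q2) (hqadj : G.Adj q1 q2) (hqout : G.EdgeOnOuter q1 q2)
      (hz : (z = p1 ∧ w = p2 ∧ (∀ d ∈ C, d.1 = c) ∧
              (u1 = w → sndColors C = (L0 : Set ℕ)) ∧
              (u2 = w → sndColors C = (L0 : Set ℕ))) ∨
            (z = p2 ∧ w = p1 ∧ (∀ d ∈ C, d.2 = c) ∧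
              (u1 = w → fstColors C = (L0 : Set ℕ)) ∧
              (u2 = w → fstColors C = (L0 : Set ℕ))))
      (hzu1 : G.Adj z u1) (hzu2 : G.Adj z u2) (hu12 : G.Adj u1 u2)
      (hL0 : L0.card = 2)
      (hLu1 : u1 ∉ ({p1, p2} : Set V) → L u1 = L0 ∪ {c})
      (hLu2 : u2 ∉ ({p1, p2} : Set V) → L u2 = L0 ∪ {c})
      (hu1P : u1 ∈ ({p1, p2} : Set V) → u1 = w)
      (hu2P : u2 ∈ ({p1, p2} : Set V) → u2 = w)
      (hdem : IsDemocracy C')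
      (hC'1 : fstColors C' = (L0 : Set ℕ)) (hC'2 : sndColors C' = (L0 : Set ℕ))
      (hrec : IsHarmonica L (G.deleteVerts (({p1, p2} : Set V) \ {u1, u2})) u1 u2 q1 q2 C') :
      IsHarmonica L G p1 p2 q1 q2 C
  /-- Rule (iv), with `i = 1`: `C` is a democracy, `z` is a common neighbor of
  `p₁, p₂`, and `p₁` is deleted. -/
  | demo1 (G : PlaneGraph V) (p1 p2 q1 q2 z : V) (a b c : ℕ) (L0 : Finset ℕ)
      (C C' : Set (ℕ × ℕ))
      (hcanvas : IsPathCanvas G p1 p2 L)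
      (hproper : ∀ d ∈ C, ProperEdgeColoring L p1 p2 d)
      (hdemC : IsDemocracy C)
      (hq : q1 ≠ q2) (hqadj : G.Adj q1 q2) (hqout : G.EdgeOnOuter q1 q2)
      (hz1 : G.Adj z p1) (hz2 : G.Adj z p2)
      (hLz : L z = L0 ∪ {c})
      (hC1 : fstColors C = (L0 : Set ℕ)) (hC2 : sndColors C = (L0 : Set ℕ))
      (hab : a ≠ b) (hL0ab : (L0 : Set ℕ) = {a, b})
      (hC' : C' = {(c, a), (c, b)})
      (hrec : IsHarmonica L (G.deleteVerts {p1}) z p2 q1 q2 C') :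
      IsHarmonica L G p1 p2 q1 q2 C
  /-- Rule (iv), with `i = 2`: `C` is a democracy, `z` is a common neighbor of
  `p₁, p₂`, and `p₂` is deleted. -/
  | demo2 (G : PlaneGraph V) (p1 p2 q1 q2 z : V) (a b c : ℕ) (L0 : Finset ℕ)
      (C C' : Set (ℕ × ℕ))
      (hcanvas : IsPathCanvas G p1 p2 L)
      (hproper : ∀ d ∈ C, ProperEdgeColoring L p1 p2 d)
      (hdemC : IsDemocracy C)
      (hq : q1 ≠ q2) (hqadj : G.Adj q1 q2) (hqout : G.EdgeOnOuter q1 q2)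
      (hz1 : G.Adj z p1) (hz2 : G.Adj z p2)
      (hLz : L z = L0 ∪ {c})
      (hC1 : fstColors C = (L0 : Set ℕ)) (hC2 : sndColors C = (L0 : Set ℕ))
      (hab : a ≠ b) (hL0ab : (L0 : Set ℕ) = {a, b})
      (hC' : C' = {(c, a), (c, b)})
      (hrec : IsHarmonica L (G.deleteVerts {p2}) z p1 q1 q2 C') :
      IsHarmonica L G p1 p2 q1 q2 C

/-- `(G, L)` is a coloring harmonica from `uv` to `w` (source `Sum.inr (u, v)`)
or from `u` to `w` (source `Sum.inl u`). -/
inductive IsColoringHarmonica {V : Type u} [DecidableEq V] :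
    PlaneGraph V → (V → Finset ℕ) → V ⊕ V × V → V → Prop where
  /-- `G` is a triangle with vertex set `{u, v, w}`, `L(u) = L(v) = L(w)` and
  `|L(u)| = 2`. -/
  | tri (G : PlaneGraph V) (L : V → Finset ℕ) (u v w : V)
      (hconn : G.Connected) (huv : u ≠ v) (huw : u ≠ w) (hvw : v ≠ w)
      (hu : G.OnOuter u) (hv : G.OnOuter v) (hw : G.OnOuter w)
      (huvout : G.EdgeOnOuter u v)
      (hverts : G.verts = {u, v, w})
      (hadjuv : G.Adj u v) (hadjvw : G.Adj v w) (hadjuw : G.Adj u w)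
      (hLuv : L u = L v) (hLvw : L v = L w) (hcard : (L u).card = 2) :
      IsColoringHarmonica G L (Sum.inr (u, v)) w
  /-- There is a triangle `uvz` on the outer face; delete one or both of
  `u, v` and recurse from `z`. -/
  | step (G : PlaneGraph V) (L : V → Finset ℕ) (u v w z : V) (s : Set V)
      (hconn : G.Connected) (huv : u ≠ v) (huw : u ≠ w) (hvw : v ≠ w)
      (hu : G.OnOuter u) (hv : G.OnOuter v) (hw : G.OnOuter w)
      (huvout : G.EdgeOnOuter u v)
      (hadjuv : G.Adj u v) (hadjuz : G.Adj u z) (hadjvz : G.Adj v z)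
      (hz : G.OnOuter z)
      (hLuv : L u = L v) (hsub : L u ⊆ L z)
      (hcardu : (L u).card = 2) (hcardz : (L z).card = 3)
      (hs : s = {u} ∨ s = {v} ∨ s = ({u, v} : Set V))
      (hrec : IsColoringHarmonica (G.deleteVerts s)
        (Function.update L z (L z \ L u)) (Sum.inl z) w) :
      IsColoringHarmonica G L (Sum.inr (u, v)) w
  /-- `|L(u)| = 1`, `u` sits on a triangle `uxy`; delete `u` and recurse
  from `xy`. -/
  | vert (G : PlaneGraph V) (L : V → Finset ℕ) (u w x y : V)
      (hconn : G.Connected) (huw : u ≠ w)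
      (hu : G.OnOuter u) (hw : G.OnOuter w)
      (hx : G.OnOuter x) (hy : G.OnOuter y)
      (hadjux : G.Adj u x) (hadjuy : G.Adj u y) (hadjxy : G.Adj x y)
      (hcardu : (L u).card = 1)
      (hLxy : L x \ L u = L y \ L u) (hcardx : (L x \ L u).card = 2)
      (hrec : IsColoringHarmonica (G.deleteVerts {u})
        (Function.update (Function.update L x (L x \ L u)) y (L y \ L u))
        (Sum.inr (x, y)) w) :
      IsColoringHarmonica G L (Sum.inl u) w

/-- `(G, L)` contains a coloring harmonica `(H, L')` with the given source and
target: `H` is a subgraph of `G` and `L'` agrees with `L` on `V(H)`. -/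
def ContainsColoringHarmonica {V : Type u} [DecidableEq V] (G : PlaneGraph V)
    (L : V → Finset ℕ) (st : V ⊕ V × V) (w : V) : Prop :=
  ∃ (H : PlaneGraph V) (L' : V → Finset ℕ), H.IsSubgraph G ∧
    (∀ x ∈ H.verts, L' x = L x) ∧ IsColoringHarmonica H L' st w

/-- `v` is a cutvertex of the boundary of the outer face of `G`. -/
def BoundaryCutvertex {V : Type u} (G : PlaneGraph V) (v : V) : Prop :=
  ∃ a b : V, a ∈ G.boundaryVerts ∧ b ∈ G.boundaryVerts ∧ a ≠ v ∧ b ≠ v ∧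
    Relation.ReflTransGen (fun x y => G.Adj x y ∧ G.EdgeOnOuter x y) a b ∧
    ¬Relation.ReflTransGen
      (fun x y => G.Adj x y ∧ G.EdgeOnOuter x y ∧ x ≠ v ∧ y ≠ v) a b

open Classical in
/-- The list assignment of the democratic reduction `T(P, L0, x)`:
remove the colors of `L0` from the list of `x` and from the lists of all
neighbors of `P` other than `y`. -/
noncomputable def reducedL {V : Type u} (G : PlaneGraph V) (L : V → Finset ℕ)
    (L0 : Finset ℕ) (Q : List V) (x y : V) : V → Finset ℕ := fun w =>
  if w = x ∨ (w ≠ y ∧ ∃ p ∈ Q, G.Adj w p) then L w \ L0 else L w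

/-- The vertex set of the precolored subgraph of the democratic reduction:
`S ∖ V(P)`, together with `x` as an isolated vertex if its new list is
smaller than 3. -/
def reducedSverts {V : Type u} (Sverts : Set V) (Q : List V) (x : V)
    (L' : V → Finset ℕ) : Set V :=
  {v | (v ∈ Sverts ∧ v ∉ Q) ∨ (v = x ∧ (L' x).card < 3)}

/-- The adjacency of the precolored subgraph of the democratic reduction:
`S ∖ V(P)`. -/
def reducedSAdj {V : Type u} (SAdj : V → V → Prop) (Q : List V) : V → V → Prop :=
  fun u v => SAdj u v ∧ u ∉ Q ∧ v ∉ Q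

/-!
Call `(E, B)` good if the edges in `E` belong to a fixed plane graph and the vertices in `B` lie on
a common face of the drawing of `E`. The coloring argument uses only a few closure properties of
good pairs and the absence of a tripod: a center and three feet in `B`, joined by legs, such that
any two feet can be joined avoiding the leg to the third. Tripods are excluded by comparing, for
the three feet, how a complex logarithm changes along the paths.

A set of colorings of an edge on the boundary is *robust* if it offers enough choice to survive
passing to the next boundary edge. If the remaining lists are as in Thomassen's theorem, some
coloring in a robust set extends to the whole graph, even if another boundary vertex is to receive
one of two prescribed colors. The induction splits the graph along a chord, or else colors and
deletes vertices along the boundary. Two lists of size two at `v₁` and `v₂` reduce to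
this situation: at `v₂` the list yields a robust set on an edge, and at `v₁` it is the prescription.
-/

/-! ### Reachability, colorings and planar classes -/

section ListColoring

open scoped Classical

section Coloring

variable {V : Type u} {E E' : Finset (Sym2 V)} {B S T X Y K K' : Set V}
  {L : V → Finset ℕ} {a b c u v w x y : V}

/-- Reachability along edges of `E` with both ends in `S`. -/
def ReachIn (E : Finset (Sym2 V)) (S : Set V) : V → V → Prop :=
  Relation.ReflTransGen fun a b ↦ s(a, b) ∈ E ∧ a ∈ S ∧ b ∈ S

namespace ReachIn

lemma single (h : s(a, b) ∈ E) (ha : a ∈ S) (hb : b ∈ S) : ReachIn E S a b :=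
  Relation.ReflTransGen.single ⟨h, ha, hb⟩

lemma trans (hab : ReachIn E S a b) (hbc : ReachIn E S b c) : ReachIn E S a c :=
  Relation.ReflTransGen.trans hab hbc

lemma symm (h : ReachIn E S a b) : ReachIn E S b a := by
  have : Std.Symm fun a b ↦ s(a, b) ∈ E ∧ a ∈ S ∧ b ∈ S :=
    ⟨fun x y hxy ↦ ⟨Sym2.eq_swap ▸ hxy.1, hxy.2.2, hxy.2.1⟩⟩
  exact Relation.ReflTransGen.stdSymm.symm _ _ h

lemma mono (h : ReachIn E S a b) (hST : S ⊆ T) : ReachIn E T a b :=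
  Relation.ReflTransGen.mono (fun _ _ hxy ↦ ⟨hxy.1, hST hxy.2.1, hST hxy.2.2⟩) _ _ h

lemma mem (h : ReachIn E S a b) (ha : a ∈ S) : b ∈ S := by
  rcases Relation.ReflTransGen.cases_tail h with rfl | ⟨_, -, hb⟩
  exacts [ha, hb.2.2]

end ReachIn

/-- `φ` is a proper coloring of the graph with edge set `E` whose values obey the lists `L`
outside `X`; the vertices of `X` are regarded as precolored. -/
structure IsColoringOff (E : Finset (Sym2 V)) (X : Set V) (L : V → Finset ℕ) (φ : V → ℕ) :
    Prop where
  ne : ∀ {u v}, s(u, v) ∈ E → φ u ≠ φ v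
  mem : ∀ {v}, v ∉ X → φ v ∈ L v

/-- The list sizes of Thomassen's theorem outside `X`: three colors on the boundary `B` and five
colors elsewhere. -/
def HasThomassenLists (B : Set V) (L : V → Finset ℕ) (X : Set V) : Prop :=
  ∀ v ∉ X, 3 ≤ (L v).card ∧ (v ∉ B → 5 ≤ (L v).card)

lemma HasThomassenLists.mono (h : HasThomassenLists B L X) (hXY : X ⊆ Y) :
    HasThomassenLists B L Y :=
  fun v hv ↦ h v fun hX ↦ hv (hXY hX)

/-- The vertices of `X \ Y` can be given dummy lists of size five. -/
lemma HasThomassenLists.exists_coloring_of_subset (h : HasThomassenLists B L X) (hYX : Y ⊆ X)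
    {P : (V → ℕ) → Prop}
    (hY : ∀ L', HasThomassenLists B L' Y → (∀ v ∉ X \ Y, L' v = L v) →
      ∃ φ, IsColoringOff E Y L' φ ∧ P φ) :
    ∃ φ, IsColoringOff E X L φ ∧ P φ := by
  obtain ⟨φ, hφ, hP⟩ := hY (fun v ↦ if v ∈ X \ Y then Finset.range 5 else L v)
    (fun v hv ↦ by
      by_cases hX : v ∈ X
      · simp [hX, hv]
      · simpa [hX] using h v hX)
    (fun v hv ↦ if_neg hv)
  refine ⟨φ, ⟨hφ.ne, fun {v} hv ↦ ?_⟩, hP⟩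
  simpa [hv] using hφ.mem fun h ↦ hv (hYX h)

/-- Three legs `S i` from the center `x` to the feet `y i`, any two feet being still connected when
the third leg is removed. -/
structure IsTripod (E : Finset (Sym2 V)) (x : V) (y : Fin 3 → V) (S : Fin 3 → Set V) : Prop where
  center_mem : ∀ i, x ∈ S i
  foot_mem_iff : ∀ i j, y i ∈ S j ↔ i = j
  leg : ∀ i, ReachIn E (S i) x (y i)
  joined : ∀ {i j k}, k ≠ i → k ≠ j → ReachIn E (S k)ᶜ (y i) (y j)

/-- The properties of the pairs (edge set, set of outer vertices) of plane graphs on which the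
combinatorial argument rests. Deleting an outer vertex exposes its neighbors; an edge may be
regarded as lying on the outer face once it is removed; and there is no tripod with its center and
feet on the outer face, since the middle leg separates the other two. -/
structure PlanarClass (Good : Finset (Sym2 V) → Set V → Prop) : Prop where
  noloop : ∀ {E B}, Good E B → ∀ v, s(v, v) ∉ E
  finite : ∀ {E B}, Good E B → B.Finite
  mono : ∀ {E B E'}, Good E B → E' ⊆ E → Good E' B
  delete : ∀ {E B x}, Good E B → x ∈ B →
    Good (E.filter (x ∉ ·)) (B ∪ {n | s(x, n) ∈ E})
  edge : ∀ {E B u v}, Good E B → s(u, v) ∈ E → Good (E.erase s(u, v)) {u, v}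
  not_tripod : ∀ {E B x} {y : Fin 3 → V} {S}, Good E B → x ∈ B → (∀ i, y i ∈ B) →
    ¬IsTripod E x y S

variable {Good : Finset (Sym2 V) → Set V → Prop}

lemma PlanarClass.ne (H : PlanarClass Good) (hG : Good E B) (h : s(a, b) ∈ E) : a ≠ b := by
  rintro rfl
  exact H.noloop hG _ h

/-! ### Chord splits -/

/-- The edge `uw` is a chord splitting the graph into the nontrivial sides `K` and `K'`, with no
edge between them. -/
structure ChordSplit (E : Finset (Sym2 V)) (u w : V) (K K' : Set V) : Prop where
  edge : s(u, w) ∈ E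
  disjoint : Disjoint K K'
  union_eq : K ∪ K' = {u, w}ᶜ
  not_edge : ∀ {a b}, s(a, b) ∈ E → a ∈ K → b ∉ K'
  touch_left : ∃ a b, s(a, b) ∈ E ∧ a ∈ K
  touch_right : ∃ a b, s(a, b) ∈ E ∧ a ∈ K'

/-- The edges of `E` with both ends in `K ∪ {u, w}`. -/
noncomputable def chordSide (E : Finset (Sym2 V)) (u w : V) (K : Set V) : Finset (Sym2 V) :=
  E.filter fun e ↦ ∀ x ∈ e, x ∈ K ∨ x = u ∨ x = w

lemma mem_chordSide : s(a, b) ∈ chordSide E u w K ↔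
    s(a, b) ∈ E ∧ (a ∈ K ∨ a = u ∨ a = w) ∧ (b ∈ K ∨ b = u ∨ b = w) := by
  simp [chordSide]

lemma chordSide_subset : chordSide E u w K ⊆ E :=
  Finset.filter_subset _ _

namespace ChordSplit

lemma symm (h : ChordSplit E u w K K') : ChordSplit E u w K' K :=
  ⟨h.edge, h.disjoint.symm, Set.union_comm K K' ▸ h.union_eq,
    fun hab ha hb ↦ h.not_edge (Sym2.eq_swap ▸ hab) hb ha, h.touch_right, h.touch_left⟩

lemma mem_or_mem (h : ChordSplit E u w K K') (hu : v ≠ u) (hw : v ≠ w) : v ∈ K ∨ v ∈ K' :=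
  h.union_eq.symm.subset (by simp [hu, hw])

lemma left_notMem (h : ChordSplit E u w K K') : u ∉ K :=
  fun hu ↦ by simpa using h.union_eq.subset (Or.inl hu)

lemma right_notMem (h : ChordSplit E u w K K') : w ∉ K :=
  fun hw ↦ by simpa using h.union_eq.subset (Or.inl hw)

lemma notMem_of_mem_side (h : ChordSplit E u w K K') (hv : v ∈ K ∨ v = u ∨ v = w) : v ∉ K' := by
  rcases hv with hv | rfl | rfl
  exacts [h.disjoint.notMem_of_mem_left hv, h.symm.left_notMem, h.symm.right_notMem]

lemma edge_mem_chordSide (h : ChordSplit E u w K K') : s(u, w) ∈ chordSide E u w K :=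
  mem_chordSide.2 ⟨h.edge, by simp, by simp⟩

lemma card_chordSide_lt (h : ChordSplit E u w K K') : (chordSide E u w K).card < E.card := by
  obtain ⟨a, b, hab, ha⟩ := h.touch_right
  refine Finset.card_lt_card ⟨chordSide_subset, fun hs ↦ ?_⟩
  exact h.notMem_of_mem_side (mem_chordSide.1 (hs hab)).2.1 ha

lemma mem_chordSide_or (h : ChordSplit E u w K K') (hab : s(a, b) ∈ E) :
    s(a, b) ∈ chordSide E u w K ∨ s(a, b) ∈ chordSide E u w K' := by
  have hside (v : V) : v ∈ K ∨ v ∈ K' ∨ v = u ∨ v = w := by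
    have := h.mem_or_mem (v := v); tauto
  have ha := hside a
  have hb := hside b
  have hKK' := h.not_edge hab
  have hK'K := h.symm.not_edge hab
  simp only [mem_chordSide]
  tauto

lemma exists_edge_mem_chordSide (h : ChordSplit E u w K K') (hab : s(a, b) ∈ E) :
    ∃ K₁ K₂, ChordSplit E u w K₁ K₂ ∧ s(a, b) ∈ chordSide E u w K₁ :=
  (h.mem_chordSide_or hab).elim (⟨K, K', h, ·⟩) (⟨K', K, h.symm, ·⟩)

lemma glue (h : ChordSplit E u w K K') {φ φ' : V → ℕ}
    (hφ : IsColoringOff (chordSide E u w K) X L φ)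
    (hφ' : IsColoringOff (chordSide E u w K') (X ∪ {u, w}) L φ')
    (hu : φ' u = φ u) (hw : φ' w = φ w) : IsColoringOff E X L (K'.piecewise φ' φ) := by
  have eq_left : ∀ {v}, (v ∈ K ∨ v = u ∨ v = w) → K'.piecewise φ' φ v = φ v := fun hv ↦
    Set.piecewise_eq_of_notMem _ _ _ (h.notMem_of_mem_side hv)
  have eq_right : ∀ {v}, (v ∈ K' ∨ v = u ∨ v = w) → K'.piecewise φ' φ v = φ' v := by
    rintro v (hv | rfl | rfl)
    exacts [Set.piecewise_eq_of_mem _ _ _ hv, (eq_left (by simp)).trans hu.symm,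
      (eq_left (by simp)).trans hw.symm]
  refine ⟨fun {a b} hab ↦ ?_, fun {v} hv ↦ ?_⟩
  · rcases h.mem_chordSide_or hab with hs | hs <;>
      obtain ⟨-, ha, hb⟩ := mem_chordSide.1 hs
    · rw [eq_left ha, eq_left hb]
      exact hφ.ne hs
    · rw [eq_right ha, eq_right hb]
      exact hφ'.ne hs
  · by_cases hK' : v ∈ K'
    · rw [eq_right (Or.inl hK')]
      have hv' := h.union_eq.subset (Or.inr hK')
      exact hφ'.mem (by simp_all)
    · rw [Set.piecewise_eq_of_notMem _ _ _ hK']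
      exact hφ.mem hv

lemma of_closed (hu : u ∉ K) (hw : w ∉ K) (hE : s(u, w) ∈ E)
    (hK : ∀ {a b}, s(a, b) ∈ E → a ∈ K → b ∈ K ∨ b = u ∨ b = w)
    (ht : ∃ a b, s(a, b) ∈ E ∧ a ∈ K)
    (ht' : ∃ a b, s(a, b) ∈ E ∧ a ∉ K ∧ a ≠ u ∧ a ≠ w) :
    ChordSplit E u w K ({u, w}ᶜ \ K) where
  edge := hE
  disjoint := Set.disjoint_sdiff_right
  union_eq := Set.union_sdiff_cancel fun v hv ↦ by
    rintro (rfl | rfl)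
    exacts [hu hv, hw hv]
  not_edge hab ha hb := by
    have := hK hab ha
    simp_all
  touch_left := ht
  touch_right := by
    obtain ⟨a, b, hab, haK, hau, haw⟩ := ht'
    exact ⟨a, b, hab, by simp [hau, haw], haK⟩

end ChordSplit

/-- No edge between two vertices of `B` splits the graph. -/
def Chordless (E : Finset (Sym2 V)) (B : Set V) : Prop :=
  ∀ u w K K', u ∈ B → w ∈ B → ¬ChordSplit E u w K K'

/-- Every vertex of `B` has at most two neighbors in `B`. -/
def BoundaryDegLeTwo (E : Finset (Sym2 V)) (B : Set V) : Prop :=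
  ∀ x ∈ B, ∀ a ∈ B, ∀ b ∈ B, ∀ c ∈ B, s(x, a) ∈ E → s(x, b) ∈ E → s(x, c) ∈ E →
    a = b ∨ a = c ∨ b = c

lemma Chordless.reachIn_compl (hN : Chordless E B) (H : PlanarClass Good) (hG : Good E B)
    (hx : x ∈ B) (hy : y ∈ B) (hxy : s(x, y) ∈ E) (hxa : s(x, a) ∈ E) (hxb : s(x, b) ∈ E)
    (hay : a ≠ y) (hby : b ≠ y) : ReachIn E {x, y}ᶜ a b := by
  by_contra hab
  have ha : a ∈ ({x, y}ᶜ : Set V) := by simp [(H.ne hG hxa).symm, hay]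
  refine hN x y {v | ReachIn E {x, y}ᶜ a v} _ hx hy (.of_closed ?_ ?_ hxy ?_
    ⟨a, x, Sym2.eq_swap ▸ hxa, .refl⟩ ⟨b, x, Sym2.eq_swap ▸ hxb, hab, (H.ne hG hxb).symm, hby⟩)
  · exact fun h ↦ h.mem ha (Or.inl rfl)
  · exact fun h ↦ h.mem ha (Or.inr rfl)
  · intro c d hcd hc
    by_cases hd : d = x ∨ d = y
    · exact Or.inr hd
    · exact Or.inl (hc.trans (.single hcd (hc.mem ha) hd))

/-- Three boundary neighbors of `x` would be the feet of a tripod whose legs are edges, as no edge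
at `x` is a splitting chord. -/
lemma Chordless.boundaryDegLeTwo (hN : Chordless E B) (H : PlanarClass Good) (hG : Good E B) :
    BoundaryDegLeTwo E B := by
  intro x hx a ha b hb c hc hxa hxb hxc
  by_contra! ⟨hab, hac, hbc⟩
  have hyB : ∀ i, (![a, b, c] : Fin 3 → V) i ∈ B := by simp [Fin.forall_fin_succ, ha, hb, hc]
  have hyE : ∀ i, s(x, (![a, b, c] : Fin 3 → V) i) ∈ E := by
    simp [Fin.forall_fin_succ, hxa, hxb, hxc]
  have hinj : Function.Injective (![a, b, c] : Fin 3 → V) := by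
    intro i j
    fin_cases i <;> fin_cases j <;> simp [hab, hac, hbc, hab.symm, hac.symm, hbc.symm]
  generalize (![a, b, c] : Fin 3 → V) = y at hyB hyE hinj
  exact H.not_tripod hG hx hyB (S := fun i ↦ {x, y i})
    { center_mem := fun i ↦ Or.inl rfl
      foot_mem_iff := fun i j ↦ by simp [(H.ne hG (hyE i)).symm, hinj.eq_iff]
      leg := fun i ↦ .single (hyE i) (Or.inl rfl) (Or.inr rfl)
      joined := fun {i j k} hki hkj ↦ hN.reachIn_compl H hG hx (hyB k) (hyE k) (hyE i) (hyE j)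
        (hinj.ne hki.symm) (hinj.ne hkj.symm) }

/-! ### Deleting boundary vertices -/

/-- The edges of `E` avoiding the vertices of `D`. -/
noncomputable def deleteEdges (E : Finset (Sym2 V)) (D : List V) : Finset (Sym2 V) :=
  E.filter fun e ↦ ∀ x ∈ e, x ∉ D

/-- The outer vertices after the deletion of `D ⊆ B`. The deleted vertices are kept, as isolated
vertices. -/
def exposedBoundary (E : Finset (Sym2 V)) (B : Set V) (D : List V) : Set V :=
  B ∪ {n | ∃ d ∈ D, s(d, n) ∈ E}

/-- The lists after the deletion of `D`: the colors `R`, reserved for `D`, are removed at the inner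
neighbors of `D`. -/
noncomputable def pruneLists (E : Finset (Sym2 V)) (B : Set V) (D : List V) (R : Finset ℕ)
    (L : V → Finset ℕ) : V → Finset ℕ :=
  fun v ↦ if v ∉ B ∧ ∃ d ∈ D, s(d, v) ∈ E then L v \ R else L v

variable {D : List V} {R : Finset ℕ}

lemma mem_deleteEdges : s(a, b) ∈ deleteEdges E D ↔ s(a, b) ∈ E ∧ a ∉ D ∧ b ∉ D := by
  simp [deleteEdges]

lemma card_deleteEdges_lt (hab : s(a, b) ∈ E) (ha : a ∈ D) :
    (deleteEdges E D).card < E.card :=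
  Finset.card_lt_card ⟨Finset.filter_subset _ _, fun hs ↦ (mem_deleteEdges.1 (hs hab)).2.1 ha⟩

lemma subset_exposedBoundary : B ⊆ exposedBoundary E B D :=
  Set.subset_union_left

lemma deleteEdges_cons :
    deleteEdges E (x :: D) = (deleteEdges E D).filter (x ∉ ·) := by
  ext e
  induction e with | _ a b =>
  simp only [Finset.mem_filter, mem_deleteEdges, Sym2.mem_iff, List.mem_cons, eq_comm (a := x)]
  tauto

lemma exposedBoundary_cons (hD : ∀ d ∈ x :: D, d ∈ B) :
    exposedBoundary E B (x :: D) =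
      exposedBoundary E B D ∪ {n | s(x, n) ∈ deleteEdges E D} := by
  ext n
  simp only [exposedBoundary, Set.mem_union, Set.mem_ofPred_eq, mem_deleteEdges,
    List.mem_cons, exists_eq_or_imp]
  have hn : n ∈ D → n ∈ B := fun hn ↦ hD n (.tail x hn)
  grind

lemma PlanarClass.deleteEdges (H : PlanarClass Good) (hG : Good E B) :
    ∀ {D : List V}, (∀ d ∈ D, d ∈ B) → Good (deleteEdges E D) (exposedBoundary E B D)
  | [], _ => by simpa [_root_.deleteEdges, exposedBoundary] using hG
  | x :: D, hD => by
    rw [deleteEdges_cons, exposedBoundary_cons hD]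
    exact H.delete (H.deleteEdges hG fun d hd ↦ hD d (.tail x hd)) (Or.inl (hD x (.head D)))

lemma HasThomassenLists.prune (h : HasThomassenLists B L X) (hR : R.card ≤ 2) :
    HasThomassenLists (exposedBoundary E B D) (pruneLists E B D R L) X := by
  intro v hv
  obtain ⟨h3, h5⟩ := h v hv
  have hsdiff := Finset.le_card_sdiff R (L v)
  simp only [pruneLists, exposedBoundary, Set.mem_union, Set.mem_ofPred_eq]
  split_ifs with hD
  · have := h5 hD.1
    exact ⟨by omega, fun h ↦ absurd (Or.inr hD.2) h⟩
  · exact ⟨h3, fun h ↦ h5 (not_or.1 h).1⟩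

/-- A coloring of the graph without `D` extends over `D` by colors reserved for `D`: they were
removed at the inner neighbors, so only the boundary neighbors can cause a conflict. -/
lemma IsColoringOff.extend_deleted {φ κ : V → ℕ}
    (hφ : IsColoringOff (deleteEdges E D) (X ∪ {v | v ∈ D}) (pruneLists E B D R L) φ)
    (hX : X ⊆ B) (hκ : ∀ {a b}, a ∈ D → b ∈ D → s(a, b) ∈ E → κ a ≠ κ b)
    (hR : ∀ {a}, a ∈ D → κ a ∈ R) (hL : ∀ {a}, a ∈ D → a ∉ X → κ a ∈ L a)
    (hB : ∀ {a b}, a ∈ D → b ∉ D → b ∈ B → s(a, b) ∈ E → κ a ≠ φ b) :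
    IsColoringOff E X L (fun v ↦ if v ∈ D then κ v else φ v) := by
  have hcross : ∀ {a b}, a ∈ D → b ∉ D → s(a, b) ∈ E → κ a ≠ φ b := by
    intro a b ha hb hab h
    by_cases hbB : b ∈ B
    · exact hB ha hb hbB hab h
    · have hmem : φ b ∈ pruneLists E B D R L b := hφ.mem (not_or.2 ⟨fun h ↦ hbB (hX h), hb⟩)
      rw [pruneLists, if_pos ⟨hbB, a, ha, hab⟩, ← h] at hmem
      exact (Finset.mem_sdiff.1 hmem).2 (hR ha)
  refine ⟨fun {a b} hab ↦ ?_, fun {v} hv ↦ ?_⟩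
  · by_cases ha : a ∈ D <;> by_cases hb : b ∈ D <;> simp only [ha, hb, if_true, if_false]
    · exact hκ ha hb hab
    · exact hcross ha hb hab
    · exact (hcross hb ha (Sym2.eq_swap ▸ hab)).symm
    · exact hφ.ne (mem_deleteEdges.2 ⟨hab, ha, hb⟩)
  · split_ifs with hD
    · exact hL hD hv
    · have hmem : φ v ∈ pruneLists E B D R L v := hφ.mem (by simp [hD, hv])
      unfold pruneLists at hmem
      split_ifs at hmem
      exacts [(Finset.mem_sdiff.1 hmem).1, hmem]

lemma IsColoringOff.extend_vertex {φ : V → ℕ} {δ : ℕ}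
    (hφ : IsColoringOff (deleteEdges E [x]) (X ∪ {x}) (pruneLists E B [x] R L) φ)
    (hX : X ⊆ B) (hx : s(x, x) ∉ E) (hR : δ ∈ R) (hL : x ∉ X → δ ∈ L x)
    (hB : ∀ b ∈ B, s(x, b) ∈ E → δ ≠ φ b) :
    ∃ ψ, IsColoringOff E X L ψ ∧ ψ x = δ ∧ ∀ v ≠ x, ψ v = φ v := by
  refine ⟨fun v ↦ if v ∈ [x] then δ else φ v, ?_, by simp, fun v hv ↦ by simp [hv]⟩
  refine IsColoringOff.extend_deleted (κ := fun _ ↦ δ) (R := R) (B := B) ?_ hX ?_ (fun _ ↦ hR) ?_ ?_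
  · simpa using hφ
  · simp [hx]
  · simpa using hL
  · simp only [List.mem_singleton]
    rintro a b rfl - hb hab
    exact hB b hb hab

lemma IsColoringOff.recolor_isolated {φ f : V → ℕ} {I : Set V} (hφ : IsColoringOff E X L φ)
    (hI : ∀ v ∈ I, ∀ a, s(v, a) ∉ E) (hf : ∀ v ∈ I, v ∉ Y → f v ∈ L v) (hX : X ⊆ Y ∪ I) :
    IsColoringOff E Y L (I.piecewise f φ) := by
  have eq_off : ∀ {v a}, s(v, a) ∈ E → I.piecewise f φ v = φ v := fun h ↦
    Set.piecewise_eq_of_notMem _ _ _ fun hv ↦ hI _ hv _ h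
  refine ⟨fun {u v} huv ↦ ?_, fun {v} hv ↦ ?_⟩
  · rw [eq_off huv, eq_off (Sym2.eq_swap ▸ huv)]
    exact hφ.ne huv
  · by_cases hvI : v ∈ I
    · simpa [hvI] using hf v hvI hv
    · simpa [hvI] using hφ.mem fun hvX ↦ (hX hvX).elim hv hvI

lemma BoundaryDegLeTwo.exists_color (hdeg : BoundaryDegLeTwo E B) (hx : x ∈ B) (hy : y ∈ B)
    (hxy : s(x, y) ∈ E) (hR : 1 < R.card) (φ : V → ℕ) :
    ∃ δ ∈ R, ∀ b ∈ B, s(x, b) ∈ E → b ≠ y → δ ≠ φ b := by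
  by_cases hb : ∃ b ∈ B, s(x, b) ∈ E ∧ b ≠ y
  · obtain ⟨b, hbB, hxb, hby⟩ := hb
    obtain ⟨δ, hδ, hδb⟩ := Finset.exists_mem_ne hR (φ b)
    refine ⟨δ, hδ, fun b' hb' hxb' hb'y ↦ ?_⟩
    rcases hdeg x hx y hy b hbB b' hb' hxy hxb hxb' with h | h | rfl
    exacts [absurd h.symm hby, absurd h.symm hb'y, hδb]
  · obtain ⟨δ, hδ⟩ := Finset.card_pos.1 (Nat.zero_lt_of_lt hR)
    exact ⟨δ, hδ, fun b hbB hxb hby ↦ absurd ⟨b, hbB, hxb, hby⟩ hb⟩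

end Coloring

/-! ### Thomassen's theorem -/

section Thomassen

variable {V : Type u} {E : Finset (Sym2 V)} {B X K K' : Set V} {L : V → Finset ℕ}
  {p q u w x : V} {c d n : ℕ}

/-- Thomassen's theorem for graphs with fewer than `n` edges: every coloring of a boundary edge
extends. -/
def EdgePrecoloringExtends (Good : Finset (Sym2 V) → Set V → Prop) (n : ℕ) : Prop :=
  ∀ ⦃E B L X p q c d⦄, E.card < n → Good E B → s(p, q) ∈ E → p ∈ B → q ∈ B → p ∈ X → q ∈ X →
    c ≠ d → HasThomassenLists B L X → ∃ φ, IsColoringOff E X L φ ∧ φ p = c ∧ φ q = d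

/-- Every coloring of a single boundary vertex extends, for graphs with fewer than `n` edges. -/
def VertexPrecoloringExtends (Good : Finset (Sym2 V) → Set V → Prop) (n : ℕ) : Prop :=
  ∀ ⦃E B L X p c⦄, E.card < n → Good E B → p ∈ B → p ∈ X →
    HasThomassenLists B L X → ∃ φ, IsColoringOff E X L φ ∧ φ p = c

/-- List-colorability from lists as in Thomassen's theorem, for graphs with fewer than `n` edges. -/
def ListColoringExists (Good : Finset (Sym2 V) → Set V → Prop) (n : ℕ) : Prop :=
  ∀ ⦃E B L X⦄, E.card < n → Good E B → HasThomassenLists B L X → ∃ φ, IsColoringOff E X L φ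

variable {Good : Finset (Sym2 V) → Set V → Prop}

lemma HasThomassenLists.nonempty (h : HasThomassenLists B L X) (hx : x ∉ X) : (L x).Nonempty :=
  Finset.card_pos.1 (by have := (h x hx).1; omega)

lemma ChordSplit.exists_extend (hs : ChordSplit E u w K K') (H : PlanarClass Good)
    (hZ : EdgePrecoloringExtends Good n) (hE : E.card ≤ n) (hG : Good E B) (hu : u ∈ B)
    (hw : w ∈ B) (hL : HasThomassenLists B L X) {φ : V → ℕ}
    (hφ : IsColoringOff (chordSide E u w K) X L φ) :
    ∃ ψ, IsColoringOff E X L ψ ∧ ∀ v ∉ K', ψ v = φ v := by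
  obtain ⟨φ', hφ', hφu, hφw⟩ := hZ (X := X ∪ {u, w}) (hs.symm.card_chordSide_lt.trans_le hE)
    (H.mono hG chordSide_subset) hs.symm.edge_mem_chordSide hu hw (by simp) (by simp)
    (hφ.ne hs.edge_mem_chordSide) (hL.mono Set.subset_union_left)
  exact ⟨_, hs.glue hφ hφ' hφu hφw, fun v hv ↦ Set.piecewise_eq_of_notMem _ _ _ hv⟩

lemma ChordSplit.exists_edge_extend (hs : ChordSplit E u w K K') (H : PlanarClass Good)
    (hZ : EdgePrecoloringExtends Good n) (hE : E.card ≤ n) (hG : Good E B) (hu : u ∈ B)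
    (hw : w ∈ B) (hpq : s(p, q) ∈ E) (hp : p ∈ B) (hq : q ∈ B) (hpX : p ∈ X) (hqX : q ∈ X)
    (hcd : c ≠ d) (hL : HasThomassenLists B L X) :
    ∃ φ, IsColoringOff E X L φ ∧ φ p = c ∧ φ q = d := by
  obtain ⟨K₁, K₂, hs, hside⟩ := hs.exists_edge_mem_chordSide hpq
  obtain ⟨-, hpK, hqK⟩ := mem_chordSide.1 hside
  obtain ⟨φ, hφ, rfl, rfl⟩ := hZ (hs.card_chordSide_lt.trans_le hE) (H.mono hG chordSide_subset)
    hside hp hq hpX hqX hcd hL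
  obtain ⟨ψ, hψ, hψφ⟩ := hs.exists_extend H hZ hE hG hu hw hL hφ
  exact ⟨ψ, hψ, hψφ p (hs.notMem_of_mem_side hpK), hψφ q (hs.notMem_of_mem_side hqK)⟩

/-- Thomassen's deletion: a further boundary neighbor `x` of `p` is deleted, two of its colors
being reserved; one of them remains for `x` as it has at most one other boundary neighbor. -/
lemma exists_edge_extend_of_boundary_neighbor (H : PlanarClass Good)
    (hZ : EdgePrecoloringExtends Good n) (hdeg : BoundaryDegLeTwo E B) (hE : E.card ≤ n)
    (hG : Good E B) (hpq : s(p, q) ∈ E) (hp : p ∈ B) (hq : q ∈ B) (hx : x ∈ B)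
    (hpx : s(p, x) ∈ E) (hxq : x ≠ q) (hcd : c ≠ d) (hL : HasThomassenLists B L {p, q}) :
    ∃ φ, IsColoringOff E {p, q} L φ ∧ φ p = c ∧ φ q = d := by
  have hxp : s(x, p) ∈ E := Sym2.eq_swap ▸ hpx
  have hxnp := H.ne hG hxp
  obtain ⟨R, hRL, hR⟩ : ∃ R ⊆ (L x).erase c, R.card = 2 := by
    have := (hL x (by simp [hxnp, hxq])).1
    have := Finset.pred_card_le_card_erase (s := L x) (a := c)
    exact Finset.exists_subset_card_eq (by omega)
  obtain ⟨φ, hφ, hφp, hφq⟩ := hZ (X := {p, q} ∪ {x})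
    ((card_deleteEdges_lt hxp (List.mem_singleton_self x)).trans_le hE)
    (H.deleteEdges hG (D := [x]) (by simpa)) (mem_deleteEdges.2 ⟨hpq, by simpa using hxnp.symm,
      by simpa using hxq.symm⟩) (subset_exposedBoundary hp) (subset_exposedBoundary hq)
    (by simp) (by simp) hcd ((hL.prune hR.le).mono Set.subset_union_left)
  obtain ⟨δ, hδ, hδφ⟩ := hdeg.exists_color hx hp hxp (by omega : 1 < R.card) φ
  obtain ⟨hδc, hδL⟩ := Finset.mem_erase.1 (hRL hδ)
  obtain ⟨ψ, hψ, -, hψφ⟩ := hφ.extend_vertex (Set.pair_subset hp hq) (H.noloop hG x) hδ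
    (fun _ ↦ hδL) fun b hb hxb ↦ by
      by_cases hbp : b = p
      · rwa [hbp, hφp]
      · exact hδφ b hb hxb hbp
  exact ⟨ψ, hψ, (hψφ p hxnp.symm).trans hφp, (hψφ q hxq.symm).trans hφq⟩

lemma exists_edge_extend_of_forall_neighbor_eq (H : PlanarClass Good)
    (hZv : VertexPrecoloringExtends Good n) (hE : E.card ≤ n) (hG : Good E B)
    (hpq : s(p, q) ∈ E) (hp : p ∈ B) (hq : q ∈ B) (hx : ∀ x ∈ B, s(p, x) ∈ E → x = q)
    (hcd : c ≠ d) (hL : HasThomassenLists B L {p, q}) :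
    ∃ φ, IsColoringOff E {p, q} L φ ∧ φ p = c ∧ φ q = d := by
  obtain ⟨φ, hφ, hφq⟩ := hZv (X := {p, q} ∪ {p}) (c := d)
    ((card_deleteEdges_lt hpq (List.mem_singleton_self p)).trans_le hE)
    (H.deleteEdges hG (D := [p]) (by simpa)) (subset_exposedBoundary hq) (by simp)
    ((hL.prune (R := {c}) (by simp)).mono Set.subset_union_left)
  obtain ⟨ψ, hψ, hψp, hψφ⟩ := hφ.extend_vertex (δ := c) (Set.pair_subset hp hq) (H.noloop hG p)
    (by simp) (by simp) fun b hb hpb ↦ by rwa [hx b hb hpb, hφq]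
  exact ⟨ψ, hψ, hψp, (hψφ q (H.ne hG hpq).symm).trans hφq⟩

lemma EdgePrecoloringExtends.succ (H : PlanarClass Good) (hZ : EdgePrecoloringExtends Good n)
    (hZv : VertexPrecoloringExtends Good n) : EdgePrecoloringExtends Good (n + 1) := by
  intro E B L X p q c d hE hG hpq hp hq hpX hqX hcd hL
  have hE := Nat.le_of_lt_succ hE
  by_cases hN : Chordless E B
  · refine hL.exists_coloring_of_subset (Set.pair_subset hpX hqX) fun L' hL' _ ↦ ?_
    by_cases hx : ∃ x ∈ B, s(p, x) ∈ E ∧ x ≠ q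
    · obtain ⟨x, hx, hpx, hxq⟩ := hx
      exact exists_edge_extend_of_boundary_neighbor H hZ (hN.boundaryDegLeTwo H hG) hE hG hpq hp hq
        hx hpx hxq hcd hL'
    · push Not at hx
      exact exists_edge_extend_of_forall_neighbor_eq H hZv hE hG hpq hp hq hx hcd hL'
  · unfold Chordless at hN
    push Not at hN
    obtain ⟨u, w, K, K', hu, hw, hs⟩ := hN
    exact hs.exists_edge_extend H hZ hE hG hu hw hpq hp hq hpX hqX hcd hL

lemma exists_vertex_extend_of_not_isolated (H : PlanarClass Good)
    (hZ : EdgePrecoloringExtends Good (n + 1)) (hW : ListColoringExists Good n) (hE : E.card ≤ n)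
    (hG : Good E B) (hp : p ∈ B) (hpX : p ∈ X) (hL : HasThomassenLists B L X)
    (hpx : s(p, x) ∈ E) : ∃ φ, IsColoringOff E X L φ ∧ φ p = c := by
  refine hL.exists_coloring_of_subset (Set.singleton_subset_iff.2 hpX) fun L hL _ ↦ ?_
  by_cases hy : ∃ y ∈ B, s(p, y) ∈ E
  · obtain ⟨y, hy, hpy⟩ := hy
    have hyp := (H.ne hG hpy).symm
    have hLy : 1 < (L y).card := by have := (hL y hyp).1; omega
    obtain ⟨d, hd, hdc⟩ := Finset.exists_mem_ne hLy c
    obtain ⟨φ, hφ, hφp, hφy⟩ := hZ (X := {p, y}) (Nat.lt_succ_of_le hE) hG hpy hp hy (by simp)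
      (by simp) hdc.symm (hL.mono (by simp))
    refine ⟨φ, ⟨hφ.ne, fun {v} hv ↦ ?_⟩, hφp⟩
    by_cases hvy : v = y
    · rwa [hvy, hφy]
    · exact hφ.mem (by simpa [hvy] using hv)
  · push Not at hy
    obtain ⟨φ, hφ⟩ := hW ((card_deleteEdges_lt hpx (List.mem_singleton_self p)).trans_le hE)
      (H.deleteEdges hG (D := [p]) (by simpa))
      ((hL.prune (R := {c}) (by simp)).mono (Set.subset_union_left (t := {p})))
    obtain ⟨ψ, hψ, hψp, -⟩ := hφ.extend_vertex (δ := c) (Set.singleton_subset_iff.2 hp)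
      (H.noloop hG p) (by simp) (by simp) fun b hb hpb ↦ absurd hpb (hy b hb)
    exact ⟨ψ, hψ, hψp⟩

/-- If the boundary vertices are isolated, then all other vertices have five colors, and an
arbitrary edge may be moved to the outer face. -/
lemma exists_coloring_of_isolated_boundary (H : PlanarClass Good)
    (hZv : VertexPrecoloringExtends Good n) (hE : E.card ≤ n) (hG : Good E B)
    (hL : HasThomassenLists B L ∅) (hB : ∀ b ∈ B, ∀ a, s(b, a) ∉ E) (huw : s(u, w) ∈ E) :
    ∃ φ, IsColoringOff E ∅ L φ := by
  choose f hf using fun v ↦ hL.nonempty (Set.notMem_empty v)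
  have hne := H.ne hG huw
  let I : Set V := {v | ∀ a, s(v, a) ∉ E}
  have hu : u ∉ I := fun h ↦ h w huw
  have hw : w ∉ I := fun h ↦ h u (Sym2.eq_swap ▸ huw)
  have hL' : HasThomassenLists {u, w} (Function.update L w ((L w).erase (f u))) (I ∪ {u}) := by
    intro v hv
    have h5 := (hL v (Set.notMem_empty v)).2 fun hvB ↦ hv (Or.inl (hB v hvB))
    rcases eq_or_ne v w with rfl | hvw
    · have := Finset.pred_card_le_card_erase (s := L v) (a := f u)
      simp only [Function.update_self]
      exact ⟨by omega, fun h ↦ absurd (by simp) h⟩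
    · simp only [Function.update_of_ne hvw]
      exact ⟨by omega, fun _ ↦ h5⟩
  obtain ⟨φ, hφ, hφu⟩ := hZv (c := f u) ((Finset.card_erase_lt_of_mem huw).trans_le hE)
    (H.edge hG huw) (Or.inl rfl) (by simp) hL'
  have hφw := hφ.mem (v := w) (by simp [hw, hne.symm])
  rw [Function.update_self, Finset.mem_erase, ← hφu] at hφw
  have hφI : IsColoringOff E I L φ := by
    refine ⟨fun {a b} hab ↦ ?_, fun {v} hv ↦ ?_⟩
    · by_cases hab' : s(a, b) = s(u, w)
      · rcases Sym2.eq_iff.1 hab' with ⟨rfl, rfl⟩ | ⟨rfl, rfl⟩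
        exacts [hφw.1.symm, hφw.1]
      · exact hφ.ne (Finset.mem_erase.2 ⟨hab', hab⟩)
    · rcases eq_or_ne v w with rfl | hvw
      · exact hφw.2
      rcases eq_or_ne v u with rfl | hvu
      · exact hφu ▸ hf v
      · simpa [Function.update_of_ne hvw] using hφ.mem (v := v) (by simp [hv, hvu])
  exact ⟨_, hφI.recolor_isolated (f := f) (fun v hv ↦ hv) (fun v _ _ ↦ hf v)
    Set.subset_union_right⟩

lemma ListColoringExists.succ (H : PlanarClass Good) (hZ : EdgePrecoloringExtends Good (n + 1))
    (hZv : VertexPrecoloringExtends Good n) (hW : ListColoringExists Good n) :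
    ListColoringExists Good (n + 1) := by
  intro E B L X hE hG hL
  have hE := Nat.le_of_lt_succ hE
  suffices ∃ φ, IsColoringOff E X L φ ∧ True from this.imp fun _ ↦ And.left
  refine hL.exists_coloring_of_subset (Set.empty_subset X) fun L hL _ ↦ ?_
  suffices ∃ φ, IsColoringOff E ∅ L φ from this.imp fun _ h ↦ ⟨h, trivial⟩
  by_cases hb : ∃ b ∈ B, ∃ a, s(b, a) ∈ E
  · obtain ⟨b, hb, a, hba⟩ := hb
    obtain ⟨c, hc⟩ := hL.nonempty (Set.notMem_empty b)
    obtain ⟨φ, hφ, hφb⟩ := exists_vertex_extend_of_not_isolated (X := {b}) (c := c) H hZ hW hE hG hb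
      rfl (hL.mono (Set.empty_subset _)) hba
    refine ⟨φ, hφ.ne, fun {v} _ ↦ ?_⟩
    rcases eq_or_ne v b with rfl | hvb
    exacts [hφb ▸ hc, hφ.mem hvb]
  · push Not at hb
    rcases E.eq_empty_or_nonempty with rfl | ⟨⟨u, w⟩, huw⟩
    · choose f hf using fun v ↦ hL.nonempty (Set.notMem_empty v)
      exact ⟨f, fun huv ↦ absurd huv (Finset.notMem_empty _), fun _ ↦ hf _⟩
    · exact exists_coloring_of_isolated_boundary H hZv hE hG hL hb huw

lemma VertexPrecoloringExtends.succ (H : PlanarClass Good)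
    (hZ : EdgePrecoloringExtends Good (n + 1)) (hW : ListColoringExists Good (n + 1))
    (hW' : ListColoringExists Good n) : VertexPrecoloringExtends Good (n + 1) := by
  intro E B L X p c hE hG hp hpX hL
  by_cases hx : ∃ x, s(p, x) ∈ E
  · obtain ⟨x, hpx⟩ := hx
    exact exists_vertex_extend_of_not_isolated H hZ hW' (Nat.le_of_lt_succ hE) hG hp hpX hL hpx
  · push Not at hx
    obtain ⟨φ, hφ⟩ := hW hE hG hL
    exact ⟨_, hφ.recolor_isolated (I := {p}) (f := fun _ ↦ c) (by simpa using hx)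
      (by simp [hpX]) Set.subset_union_left, Set.piecewise_eq_of_mem _ _ _ rfl⟩

lemma PlanarClass.precoloring_extends (H : PlanarClass Good) (n : ℕ) :
    EdgePrecoloringExtends Good n ∧ VertexPrecoloringExtends Good n ∧
      ListColoringExists Good n := by
  induction n with
  | zero =>
    simp [EdgePrecoloringExtends, VertexPrecoloringExtends, ListColoringExists]
  | succ n ih =>
    obtain ⟨hZ, hZv, hW⟩ := ih
    have hZ' := hZ.succ H hZv
    have hW' := hW.succ H hZ' hZv
    exact ⟨hZ', .succ H hZ' hW' hW, hW'⟩

lemma PlanarClass.edgePrecoloringExtends (H : PlanarClass Good) (n : ℕ) :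
    EdgePrecoloringExtends Good n :=
  (H.precoloring_extends n).1

lemma PlanarClass.exists_edge_extend (H : PlanarClass Good) (hG : Good E B) (hpq : s(p, q) ∈ E)
    (hp : p ∈ B) (hq : q ∈ B) (hpX : p ∈ X) (hqX : q ∈ X) (hcd : c ≠ d)
    (hL : HasThomassenLists B L X) : ∃ φ, IsColoringOff E X L φ ∧ φ p = c ∧ φ q = d :=
  (H.precoloring_extends _).1 (Nat.lt_succ_self _) hG hpq hp hq hpX hqX hcd hL

lemma PlanarClass.exists_vertex_extend (H : PlanarClass Good) (hG : Good E B) (hp : p ∈ B)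
    (hpX : p ∈ X) (c : ℕ) (hL : HasThomassenLists B L X) :
    ∃ φ, IsColoringOff E X L φ ∧ φ p = c :=
  (H.precoloring_extends _).2.1 (Nat.lt_succ_self _) hG hp hpX hL

end Thomassen

/-! ### Boundary walks -/

section Walk

variable {V : Type u} {E : Finset (Sym2 V)} {B Q S X : Set V} {a b c d h q v w x y z : V}
  {t : List V}

/-- Adjacency of two vertices of `B`. -/
def BoundaryAdj (E : Finset (Sym2 V)) (B : Set V) (a b : V) : Prop :=
  s(a, b) ∈ E ∧ a ∈ B ∧ b ∈ B

lemma BoundaryAdj.symm (h : BoundaryAdj E B a b) : BoundaryAdj E B b a :=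
  ⟨Sym2.eq_swap ▸ h.1, h.2.2, h.2.1⟩

lemma BoundaryDegLeTwo.eq_or (hdeg : BoundaryDegLeTwo E B) (ha : BoundaryAdj E B x a)
    (hb : BoundaryAdj E B x b) (hc : BoundaryAdj E B x c) : a = b ∨ a = c ∨ b = c :=
  hdeg x ha.2.1 a ha.2.2 b hb.2.2 c hc.2.2 ha.1 hb.1 hc.1

/-- A path in the boundary from `d` to `h` that avoids `Q` and the vertex `y` behind `d`. The list
`h :: t` contains its vertices in reverse order. -/
inductive BoundaryWalk (E : Finset (Sym2 V)) (B Q : Set V) (d y : V) : V → List V → Prop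
  | start : BoundaryWalk E B Q d y d []
  | step {h : V} {t : List V} {x : V} : BoundaryWalk E B Q d y h t → BoundaryAdj E B h x →
      x ∉ h :: t → x ≠ y → x ∉ Q → BoundaryWalk E B Q d y x (h :: t)

/-- The conditions under which boundary walks that leave `d` in the direction opposite to `y` are
determined by their length: boundary degrees are at most two, and `y` is a boundary neighbor of `d`
(or else `d` has none at all). -/
structure WalkStart (E : Finset (Sym2 V)) (B Q : Set V) (d y : V) : Prop where
  noloop : ∀ v, s(v, v) ∉ E
  deg : BoundaryDegLeTwo E B
  mem : d ∈ B
  notMem : d ∉ Q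
  ne : d ≠ y
  adj_or : BoundaryAdj E B d y ∨ ∀ w, ¬BoundaryAdj E B d w

/-- Apart from the edge `dy`, boundary edges leave the walk `h :: t` only from its head `h` and only
to vertices of `X`. -/
def LeavesOnlyTo (E : Finset (Sym2 V)) (B : Set V) (d y h : V) (t : List V) (X : Set V) : Prop :=
  ∀ z ∈ h :: t, ∀ w, BoundaryAdj E B z w → w ∈ h :: t ∨ (z = d ∧ w = y) ∨ (z = h ∧ w ∈ X)

/-- The vertex `x` comes next after the head of the walk `h :: t`. -/
structure IsExit (E : Finset (Sym2 V)) (B : Set V) (d y h : V) (t : List V) (x : V) : Prop where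
  adj : BoundaryAdj E B h x
  notMem : x ∉ h :: t
  ne : x ≠ y
  leaves : LeavesOnlyTo E B d y h t {x}

namespace BoundaryWalk

lemma start_mem (hw : BoundaryWalk E B Q d y h t) : d ∈ h :: t := by
  induction hw with
  | start => exact List.mem_singleton_self d
  | step _ _ _ _ _ ih => exact List.mem_cons_of_mem _ ih

lemma nodup (hw : BoundaryWalk E B Q d y h t) : (h :: t).Nodup := by
  induction hw with
  | start => exact List.nodup_singleton d
  | step _ _ hx _ _ ih => exact List.nodup_cons.2 ⟨hx, ih⟩

lemma isChain (hw : BoundaryWalk E B Q d y h t) : List.IsChain (BoundaryAdj E B) (h :: t) := by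
  induction hw with
  | start => exact List.isChain_singleton d
  | step _ hx _ _ _ ih => exact List.isChain_cons_cons.2 ⟨hx.symm, ih⟩

lemma getLast?_eq (hw : BoundaryWalk E B Q d y h t) : (h :: t).getLast? = some d := by
  induction hw with
  | start => rfl
  | step _ _ _ _ _ ih => rw [List.getLast?_cons_cons, ih]

lemma mem_and_notMem_and_ne (hs : WalkStart E B Q d y) (hw : BoundaryWalk E B Q d y h t) :
    ∀ z ∈ h :: t, z ∈ B ∧ z ∉ Q ∧ z ≠ y := by
  induction hw with
  | start => simpa using ⟨hs.mem, hs.notMem, hs.ne⟩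
  | step _ hx _ hy hQ ih => exact List.forall_mem_cons.2 ⟨⟨hx.2.2, hQ, hy⟩, ih⟩

lemma mem_boundary (hw : BoundaryWalk E B Q d y h t) (hs : WalkStart E B Q d y)
    (hz : z ∈ h :: t) : z ∈ B :=
  (mem_and_notMem_and_ne hs hw z hz).1

lemma notMem_avoided (hw : BoundaryWalk E B Q d y h t) (hs : WalkStart E B Q d y)
    (hz : z ∈ h :: t) : z ∉ Q :=
  (mem_and_notMem_and_ne hs hw z hz).2.1

lemma back_notMem (hw : BoundaryWalk E B Q d y h t) (hs : WalkStart E B Q d y) : y ∉ h :: t :=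
  fun hy ↦ (mem_and_notMem_and_ne hs hw y hy).2.2 rfl

lemma eq_start_or (hw : BoundaryWalk E B Q d y h t) :
    (h = d ∧ t = []) ∨ (h ≠ d ∧ ∃ z ∈ t, BoundaryAdj E B h z) := by
  cases hw with
  | start => exact Or.inl ⟨rfl, rfl⟩
  | step hw hx hxt =>
    refine Or.inr ⟨?_, _, List.mem_cons_self, hx.symm⟩
    rintro rfl
    exact hxt hw.start_mem

lemma mem_or_of_adj_head (hs : WalkStart E B Q d y) (hw : BoundaryWalk E B Q d y h t)
    (hx : BoundaryAdj E B h x) (hxt : x ∉ h :: t) (hxy : x ≠ y) (hhw : BoundaryAdj E B h w) :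
    w ∈ h :: t ∨ (h = d ∧ w = y) ∨ w = x := by
  rcases hw.eq_start_or with ⟨rfl, rfl⟩ | ⟨-, z, hz, hhz⟩
  · rcases hs.deg.eq_or hx (hs.adj_or.resolve_right fun h ↦ h x hx) hhw with rfl | rfl | rfl
    exacts [absurd rfl hxy, Or.inr (Or.inr rfl), Or.inr (Or.inl ⟨rfl, rfl⟩)]
  · rcases hs.deg.eq_or hx hhz hhw with rfl | rfl | rfl
    exacts [absurd (.tail h hz) hxt, Or.inr (Or.inr rfl), Or.inl (.tail h hz)]

lemma mem_or_of_adj_tail (hs : WalkStart E B Q d y) (hw : BoundaryWalk E B Q d y h t) :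
    ∀ z ∈ t, ∀ w, BoundaryAdj E B z w → w ∈ h :: t ∨ (z = d ∧ w = y) := by
  induction hw with
  | start => simp
  | @step h t x hw hx hxt hxy _ ih =>
    intro z hz w hzw
    rcases List.mem_cons.1 hz with rfl | hz
    · rcases mem_or_of_adj_head hs hw hx hxt hxy hzw with h | h | rfl
      exacts [Or.inl (.tail x h), Or.inr h, Or.inl (.head _)]
    · exact (ih z hz w hzw).imp_left (.tail x)

lemma isExit (hw : BoundaryWalk E B Q d y h t) (hs : WalkStart E B Q d y)
    (hx : BoundaryAdj E B h x) (hxt : x ∉ h :: t) (hxy : x ≠ y) : IsExit E B d y h t x := by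
  refine ⟨hx, hxt, hxy, fun z hz w hzw ↦ ?_⟩
  rcases List.mem_cons.1 hz with rfl | hz
  · exact (mem_or_of_adj_head hs hw hx hxt hxy hzw).imp_right (.imp_right (⟨rfl, ·⟩))
  · exact (mem_or_of_adj_tail hs hw z hz w hzw).imp_right Or.inl

lemma exists_coloring (hw : BoundaryWalk E B Q d y h t) (hs : WalkStart E B Q d y)
    {R : Finset ℕ} (hR : 1 < R.card) {δ : ℕ} (hδ : δ ∈ R) :
    ∃ κ : V → ℕ, κ d = δ ∧ (∀ z, κ z ∈ R) ∧
      ∀ a ∈ h :: t, ∀ b ∈ h :: t, s(a, b) ∈ E → κ a ≠ κ b := by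
  induction hw with
  | start => exact ⟨fun _ ↦ δ, rfl, fun _ ↦ hδ, by simp [hs.noloop d]⟩
  | @step h t x hw hx hxt hxy _ ih =>
    obtain ⟨κ, hκd, hκR, hκ⟩ := ih
    obtain ⟨ε, hε, hεh⟩ := Finset.exists_mem_ne hR (κ h)
    have hxd : d ≠ x := fun hdx ↦ hxt (hdx ▸ hw.start_mem)
    have hnbr : ∀ b ∈ h :: t, s(x, b) ∈ E → b = h := by
      intro b hb hxb
      by_contra hbh
      have hbx : BoundaryAdj E B b x :=
        ⟨Sym2.eq_swap ▸ hxb, hw.mem_boundary hs hb, hx.2.2⟩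
      rcases mem_or_of_adj_tail hs hw b ((List.mem_cons.1 hb).resolve_left hbh) x hbx with h | h
      exacts [hxt h, hxy h.2]
    have hne : ∀ b ∈ h :: t, s(x, b) ∈ E → ε ≠ κ b := fun b hb hxb ↦ hnbr b hb hxb ▸ hεh
    have hold : ∀ b ∈ h :: t, Function.update κ x ε b = κ b := fun b hb ↦
      Function.update_of_ne (ne_of_mem_of_not_mem hb hxt) _ _
    refine ⟨Function.update κ x ε, by simp [hxd, hκd], fun z ↦ ?_, ?_⟩
    · rcases eq_or_ne z x with rfl | hz <;> simp [*]
    · rw [List.forall_mem_cons]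
      refine ⟨List.forall_mem_cons.2 ⟨fun h ↦ absurd h (hs.noloop x), fun b hb hxb ↦ ?_⟩,
        fun a ha ↦ List.forall_mem_cons.2 ⟨fun hax ↦ ?_, fun b hb hab ↦ ?_⟩⟩
      · rw [Function.update_self, hold b hb]
        exact hne b hb hxb
      · rw [Function.update_self, hold a ha]
        exact (hne a ha (Sym2.eq_swap ▸ hax)).symm
      · rw [hold a ha, hold b hb]
        exact hκ a ha b hb hab

lemma exists_longer_or (hw : BoundaryWalk E B Q d y h t) (hs : WalkStart E B Q d y) :
    (h ≠ d ∧ BoundaryAdj E B h y) ∨ LeavesOnlyTo E B d y h t ∅ ∨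
      (∃ x ∈ Q, IsExit E B d y h t x) ∨ ∃ x, BoundaryWalk E B Q d y x (h :: t) := by
  by_cases hx : ∃ x, BoundaryAdj E B h x ∧ x ∉ h :: t ∧ (h = d → x ≠ y)
  · obtain ⟨x, hx, hxt, hxd⟩ := hx
    by_cases hxy : x = y
    · subst hxy
      exact Or.inl ⟨fun h ↦ hxd h rfl, hx⟩
    · by_cases hxQ : x ∈ Q
      · exact Or.inr (Or.inr (Or.inl ⟨x, hxQ, hw.isExit hs hx hxt hxy⟩))
      · exact Or.inr (Or.inr (Or.inr ⟨x, hw.step hx hxt hxy hxQ⟩))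
  · refine Or.inr (Or.inl fun z hz w hzw ↦ ?_)
    rcases List.mem_cons.1 hz with rfl | hz
    · by_contra! hw
      exact hx ⟨w, hzw, hw.1, hw.2.1⟩
    · exact (mem_or_of_adj_tail hs hw z hz w hzw).imp_right Or.inl

lemma exists_maximal (hs : WalkStart E B Q d y) (hB : B.Finite) :
    ∃ h t, BoundaryWalk E B Q d y h t ∧ ((h ≠ d ∧ BoundaryAdj E B h y) ∨
      LeavesOnlyTo E B d y h t ∅ ∨ ∃ x ∈ Q, IsExit E B d y h t x) := by
  by_contra! hcon
  have hlong : ∀ n : ℕ, ∃ h t, BoundaryWalk E B Q d y h t ∧ t.length = n := by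
    intro n
    induction n with
    | zero => exact ⟨d, [], .start, rfl⟩
    | succ n ih =>
      obtain ⟨h, t, hw, hn⟩ := ih
      have := hw.exists_longer_or hs
      obtain ⟨x, hx⟩ : ∃ x, BoundaryWalk E B Q d y x (h :: t) := by grind
      exact ⟨x, h :: t, hx, by simp [hn]⟩
  obtain ⟨h, t, hw, hn⟩ := hlong hB.toFinset.card
  have hsub : (h :: t).toFinset ⊆ hB.toFinset := fun z hz ↦
    hB.mem_toFinset.2 (hw.mem_boundary hs (List.mem_toFinset.1 hz))
  have := Finset.card_le_card hsub
  rw [List.toFinset_card_of_nodup hw.nodup, List.length_cons] at this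
  omega

lemma forall_mem_or_exists_isExit (hw : BoundaryWalk E B Q d y h t) (hs : WalkStart E B Q d y)
    {P : V → Prop} (hP : P d) : (∀ z ∈ h :: t, P z) ∨ ∃ h' t' x, BoundaryWalk E B Q d y h' t' ∧
      (∀ z ∈ h' :: t', P z) ∧ IsExit E B d y h' t' x ∧ x ∉ Q ∧ ¬P x := by
  induction hw with
  | start => exact Or.inl (by simpa using hP)
  | @step h t x hw hx hxt hxy hxQ ih =>
    rcases ih with ih | ih
    · by_cases hPx : P x
      · exact Or.inl (List.forall_mem_cons.2 ⟨hPx, ih⟩)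
      · exact Or.inr ⟨h, t, x, hw, ih, hw.isExit hs hx hxt hxy, hxQ, hPx⟩
    · exact Or.inr ih

lemma exists_adj_start (hw : BoundaryWalk E B Q d y h t) (hx : IsExit E B d y h t x) :
    ∃ w ∈ x :: h :: t, w ≠ y ∧ BoundaryAdj E B d w := by
  have hadj := hx.adj
  have hxy := hx.ne
  clear hx
  induction hw generalizing x with
  | start => exact ⟨x, .head _, hxy, hadj⟩
  | step _ hx _ hy _ ih =>
    obtain ⟨w, hw, hwd⟩ := ih hx hy
    exact ⟨w, .tail x hw, hwd⟩

lemma exists_step_leaving (hw : BoundaryWalk E B Q d y h t) (hh : h ∈ S) (hz : z ∈ h :: t)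
    (hzS : z ∉ S) : ∃ a ∈ h :: t, ∃ b ∈ h :: t, a ≠ d ∧ a ∈ S ∧ b ∉ S ∧ BoundaryAdj E B a b := by
  induction hw with
  | start =>
    rw [List.mem_singleton.1 hz] at hzS
    exact absurd hh hzS
  | @step h t x hw hx hxt _ _ ih =>
    by_cases hhS : h ∈ S
    · have hzx : z ≠ x := fun h ↦ hzS (h ▸ hh)
      obtain ⟨a, ha, b, hb, hab⟩ := ih hhS ((List.mem_cons.1 hz).resolve_left hzx)
      exact ⟨a, .tail x ha, b, .tail x hb, hab⟩
    · exact ⟨x, .head _, h, .tail x (.head t), fun h ↦ hxt (h ▸ hw.start_mem), hh, hhS, hx.symm⟩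

variable {q' d₁ d₂ y₁ y₂ h₁ h₂ p₁ p₂ : V} {t₁ t₂ : List V}

/-- Two walks stopped by the same vertex have the same head, and the first one cannot leave the
second except at its starting vertex. -/
lemma subset_of_isExit (hq : BoundaryAdj E B q q') (hq' : q' ∈ Q)
    (hs₁ : WalkStart E B Q d₁ y₁) (hs₂ : WalkStart E B Q d₂ y₂)
    (hw₁ : BoundaryWalk E B Q d₁ y₁ h₁ t₁) (hw₂ : BoundaryWalk E B Q d₂ y₂ h₂ t₂)
    (he₁ : IsExit E B d₁ y₁ h₁ t₁ q) (he₂ : IsExit E B d₂ y₂ h₂ t₂ q)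
    (hd : d₂ ∈ h₁ :: t₁ → d₁ = d₂) : h₁ :: t₁ ⊆ h₂ :: t₂ := by
  have hh : h₁ = h₂ := by
    rcases hs₁.deg.eq_or hq he₁.adj.symm he₂.adj.symm with rfl | rfl | h
    exacts [absurd hq' (hw₁.notMem_avoided hs₁ (.head _)),
      absurd hq' (hw₂.notMem_avoided hs₂ (.head _)), h]
  intro z hz
  by_contra hz'
  obtain ⟨a, ha, b, hb, had, ha', hb', hab⟩ :=
    hw₁.exists_step_leaving (S := {v | v ∈ h₂ :: t₂}) (hh ▸ .head _) hz hz'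
  rcases he₂.leaves a ha' b hab with h | ⟨rfl, -⟩ | ⟨-, rfl⟩
  exacts [hb' h, had (hd ha).symm, he₁.notMem hb]

lemma not_isExit_of_pair (hq : BoundaryAdj E B q q') (hq' : q' ∈ Q)
    (hs₁ : WalkStart E B Q p₁ p₂) (hs₂ : WalkStart E B Q p₂ p₁)
    (hw₁ : BoundaryWalk E B Q p₁ p₂ h₁ t₁) (hw₂ : BoundaryWalk E B Q p₂ p₁ h₂ t₂)
    (he₁ : IsExit E B p₁ p₂ h₁ t₁ q) : ¬IsExit E B p₂ p₁ h₂ t₂ q := fun he₂ ↦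
  hw₂.back_notMem hs₂ (subset_of_isExit hq hq' hs₁ hs₂ hw₁ hw₂ he₁ he₂
    (fun h ↦ absurd h (hw₁.back_notMem hs₁)) hw₁.start_mem)

lemma not_isExit_of_ne (hq : BoundaryAdj E B q q') (hq' : q' ∈ Q) (hy : y₁ ≠ y₂)
    (hvy₁ : BoundaryAdj E B v y₁) (hvy₂ : BoundaryAdj E B v y₂)
    (hs₁ : WalkStart E B Q v y₁) (hs₂ : WalkStart E B Q v y₂)
    (hw₁ : BoundaryWalk E B Q v y₁ h₁ t₁) (hw₂ : BoundaryWalk E B Q v y₂ h₂ t₂)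
    (he₁ : IsExit E B v y₁ h₁ t₁ q) : ¬IsExit E B v y₂ h₂ t₂ q := by
  intro he₂
  obtain ⟨w, hw, hwy, hvw⟩ := hw₁.exists_adj_start he₁
  obtain rfl : y₂ = w := by
    rcases hs₁.deg.eq_or hvy₁ hvy₂ hvw with h | rfl | h
    exacts [absurd h hy, absurd rfl hwy, h]
  rcases List.mem_cons.1 hw with rfl | hw
  · exact he₂.ne rfl
  · exact hw₂.back_notMem hs₂
      (subset_of_isExit hq hq' hs₁ hs₂ hw₁ hw₂ he₁ he₂ (fun _ ↦ rfl) hw)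

end BoundaryWalk

end Walk

/-! ### Boundary cycles -/

section Cycle

variable {V : Type u} {E : Finset (Sym2 V)} {B C Q S : Set V} {a b c d h k q q₁ q₂ w x y : V}
  {l m t : List V} {Good : Finset (Sym2 V) → Set V → Prop}

lemma reachIn_of_isChain (hl : l.IsChain (BoundaryAdj E B)) (hS : ∀ z ∈ l, z ∈ S) (ha : a ∈ l)
    (hb : b ∈ l) : ReachIn E S a b := by
  have : Trans (ReachIn E S) (ReachIn E S) (ReachIn E S) := ⟨ReachIn.trans⟩
  have : Std.Symm (ReachIn E S) := ⟨fun _ _ ↦ ReachIn.symm⟩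
  have hl' : l.IsChain (ReachIn E S) :=
    hl.imp_of_mem_imp fun x y hx hy hxy ↦ .single hxy.1 (hS x hx) (hS y hy)
  exact hl'.pairwise.forall_of_forall (fun _ _ ↦ .refl) ha hb

/-- The boundary cycle with vertex set `C` runs through `w`, between its neighbors `a` and `b`. -/
structure IsBoundaryCycleAt (E : Finset (Sym2 V)) (B C : Set V) (w a b : V) : Prop where
  adj_left : BoundaryAdj E B w a
  adj_right : BoundaryAdj E B w b
  mem : w ∈ C
  left_mem : a ∈ C
  right_mem : b ∈ C
  ne : a ≠ b
  joined : ReachIn E (C \ {w}) a b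
  joined_left : ∀ x ∈ C, x ≠ w → x ≠ b → ReachIn E {w, b}ᶜ a x
  joined_right : ∀ x ∈ C, x ≠ w → x ≠ a → ReachIn E {w, a}ᶜ b x

lemma IsBoundaryCycleAt.symm (hC : IsBoundaryCycleAt E B C w a b) :
    IsBoundaryCycleAt E B C w b a :=
  ⟨hC.adj_right, hC.adj_left, hC.mem, hC.right_mem, hC.left_mem, hC.ne.symm, hC.joined.symm,
    hC.joined_right, hC.joined_left⟩

lemma exists_isRotated_cons (hl : 3 ≤ l.length) (hw : w ∈ l) :
    ∃ a m b, l ~r w :: a :: (m ++ [b]) := by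
  obtain ⟨s, t, rfl⟩ := List.append_of_mem hw
  have hr : s ++ w :: t ~r w :: (t ++ s) := List.isRotated_append
  have hlen := hr.perm.length_eq
  generalize t ++ s = r at hr hlen
  match r with
  | [] => simp at hlen hl; omega
  | a :: r =>
    rcases r.eq_nil_or_concat with rfl | ⟨m, b, rfl⟩
    · simp at hlen hl; omega
    · exact ⟨a, m, b, by simpa using hr⟩

lemma IsBoundaryCycleAt.of_isChain (hnd : (w :: a :: (m ++ [b])).Nodup)
    (hch : (a :: (m ++ [b])).IsChain (BoundaryAdj E B)) (hwa : BoundaryAdj E B w a)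
    (hwb : BoundaryAdj E B w b) :
    IsBoundaryCycleAt E B {x | x ∈ w :: a :: (m ++ [b])} w a b where
  adj_left := hwa
  adj_right := hwb
  mem := by simp
  left_mem := by simp
  right_mem := by simp
  ne := by rintro rfl; simp at hnd
  joined := by
    refine reachIn_of_isChain hch (fun z hz ↦ ⟨.tail w hz, ?_⟩) (by simp) (by simp)
    exact ne_of_mem_of_not_mem hz (List.nodup_cons.1 hnd).1
  joined_left x hx hxw hxb := by
    have hch' : (a :: m).IsChain (BoundaryAdj E B) := by
      rw [← List.cons_append] at hch
      exact hch.left_of_append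
    refine reachIn_of_isChain hch' (fun z hz ↦ ?_) (by simp) (by simp at hx ⊢; tauto)
    rintro (rfl | rfl) <;> simp at hz hnd <;> grind
  joined_right x hx hxw hxa := by
    refine reachIn_of_isChain hch.tail (fun z hz ↦ ?_) (by simp) (by simp at hx ⊢; tauto)
    rintro (rfl | rfl) <;> simp at hz hnd <;> grind

lemma exists_isBoundaryCycleAt (hnd : l.Nodup) (hl : 3 ≤ l.length)
    (hch : Cycle.Chain (BoundaryAdj E B) (l : Cycle V)) (hw : w ∈ l) :
    ∃ a b, IsBoundaryCycleAt E B {x | x ∈ l} w a b := by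
  obtain ⟨a, m, b, hr⟩ := exists_isRotated_cons hl hw
  have hch : (w :: a :: (m ++ [b]) ++ [w]).IsChain (BoundaryAdj E B) := by
    rwa [Cycle.coe_eq_coe.2 hr, Cycle.chain_coe_cons] at hch
  have hC : {x | x ∈ l} = {x | x ∈ w :: a :: (m ++ [b])} := Set.ext fun x ↦ hr.perm.mem_iff
  rw [hC]
  have hbw : BoundaryAdj E B b w :=
    (List.isChain_append.1 hch).2.2 b (by simp [List.getLast?_cons]) w rfl
  have hch' := hch.left_of_append
  exact ⟨a, b, .of_isChain (hr.nodup_iff.1 hnd) hch'.tail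
    (List.isChain_cons_cons.1 hch').1 hbw.symm⟩

lemma ReachIn.within_component (h : ReachIn E S a b) :
    ReachIn E {v | ReachIn E S a v} a b := by
  induction h with
  | refl => exact .refl
  | tail hab hbc ih => exact ih.trans (.single hbc.1 hab (hab.tail hbc))

/-- Otherwise the edge `wb` would separate the component of `q` from the rest of the cycle. -/
lemma IsBoundaryCycleAt.exists_attachment (hC : IsBoundaryCycleAt E B C w a b)
    (hN : Chordless E B) (H : PlanarClass Good) (hG : Good E B) (hq : q ∉ C) (hqx : s(q, x) ∈ E) :
    ∃ c ∈ C, c ≠ w ∧ c ≠ b ∧ ∃ k, ReachIn E Cᶜ q k ∧ s(k, c) ∈ E := by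
  by_contra! hcon
  have hCK : ∀ {v}, v ∈ C → ¬ReachIn E Cᶜ q v := fun hv h ↦ h.mem hq hv
  refine hN w b {v | ReachIn E Cᶜ q v} _ hC.adj_right.2.1 hC.adj_right.2.2
    (.of_closed (hCK hC.mem) (hCK hC.right_mem) hC.adj_right.1 (fun {u v} huv hu ↦ ?_)
      ⟨q, x, hqx, .refl⟩ ⟨a, w, hC.adj_left.symm.1, hCK hC.left_mem, ?_, hC.ne⟩)
  · by_cases hv : v ∈ C
    · by_contra! hv'
      exact hcon v hv hv'.2.1 hv'.2.2 u hu huv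
    · exact Or.inl (hu.trans (.single huv (hu.mem hq) hv))
  · exact (H.ne hG hC.adj_left.1).symm

lemma IsBoundaryCycleAt.reachIn_left (hC : IsBoundaryCycleAt E B C w a b)
    (hN : Chordless E B) (H : PlanarClass Good) (hG : Good E B) (hq : q ∉ C) (hqx : s(q, x) ∈ E) :
    ReachIn E {w, b}ᶜ a q := by
  obtain ⟨c, hc, hcw, hcb, k, hk, hkc⟩ := hC.exists_attachment hN H hG hq hqx
  have hsub : Cᶜ ⊆ {w, b}ᶜ :=
    Set.compl_subset_compl.2 (Set.pair_subset hC.mem hC.right_mem)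
  exact (hC.joined_left c hc hcw hcb).trans ((ReachIn.single (Sym2.eq_swap ▸ hkc)
    (by simp [hcw, hcb]) (hsub (hk.mem hq))).trans (hk.symm.mono hsub))

lemma IsTripod.of_three {y : Fin 3 → V} {S : Fin 3 → Set V} (center_mem : ∀ i, x ∈ S i)
    (foot_mem_iff : ∀ i j, y i ∈ S j ↔ i = j) (leg : ∀ i, ReachIn E (S i) x (y i))
    (h₀₁ : ReachIn E (S 2)ᶜ (y 0) (y 1)) (h₀₂ : ReachIn E (S 1)ᶜ (y 0) (y 2))
    (h₁₂ : ReachIn E (S 0)ᶜ (y 1) (y 2)) : IsTripod E x y S := by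
  refine ⟨center_mem, foot_mem_iff, leg, fun {i j k} hki hkj ↦ ?_⟩
  rcases eq_or_ne i j with rfl | hij
  · exact .refl
  · fin_cases i <;> fin_cases j <;> fin_cases k <;>
      first | exact absurd rfl hij | exact absurd rfl hki | exact absurd rfl hkj | assumption |
        exact ReachIn.symm ‹_›

/-- The two edges of the cycle at an attachment `w` of the component of `q`, together with a path
from `w` to `q` in this component, form a tripod. -/
lemma IsBoundaryCycleAt.not_attachment (hC : IsBoundaryCycleAt E B C w a b)
    (hN : Chordless E B) (H : PlanarClass Good) (hG : Good E B) (hq : q ∉ C) (hqB : q ∈ B)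
    (hqx : s(q, x) ∈ E) (hk : ReachIn E Cᶜ q k) : s(k, w) ∉ E := by
  intro hkw
  set K := {v | ReachIn E Cᶜ q v}
  have hqK : q ∈ K := .refl
  have hKC : ∀ {v}, v ∈ C → v ∉ K := fun hv h ↦ h.mem hq hv
  have haw := (H.ne hG hC.adj_left.1).symm
  have hbw := (H.ne hG hC.adj_right.1).symm
  have hqne : ∀ {v}, v ∈ C → q ≠ v := fun hv hqv ↦ hq (hqv ▸ hv)
  refine H.not_tripod hG hC.adj_left.2.1 (y := ![a, b, q]) (S := ![{w, a}, {w, b}, insert w K])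
    ?_ (.of_three ?_ ?_ ?_ ?_ ?_ ?_)
  · simp [Fin.forall_fin_succ, hC.adj_left.2.2, hC.adj_right.2.2, hqB]
  · simp [Fin.forall_fin_succ]
  · simp [Fin.forall_fin_succ, haw, hbw, hC.ne, hC.ne.symm, hqK, hKC hC.left_mem,
      hKC hC.right_mem, hqne hC.mem, hqne hC.left_mem, hqne hC.right_mem]
  · simp only [Fin.forall_fin_succ, IsEmpty.forall_iff, and_true]
    refine ⟨.single hC.adj_left.1 (by simp) (by simp), .single hC.adj_right.1 (by simp) (by simp),
      ?_⟩
    have hwk : ReachIn E (insert w K) w k :=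
      .single (Sym2.eq_swap ▸ hkw) (Or.inl rfl) (Or.inr hk)
    exact hwk.trans (hk.within_component.symm.mono (Set.subset_insert w K))
  · exact hC.joined.mono fun v hv ↦ not_or.2 ⟨hv.2, hKC hv.1⟩
  · exact hC.reachIn_left hN H hG hq hqx
  · exact hC.symm.reachIn_left hN H hG hq hqx

lemma Chordless.mem_of_isCycle (hN : Chordless E B) (H : PlanarClass Good) (hG : Good E B)
    (hnd : l.Nodup) (hl : 3 ≤ l.length) (hch : Cycle.Chain (BoundaryAdj E B) (l : Cycle V))
    (hqB : q ∈ B) (hqx : s(q, x) ∈ E) : q ∈ l := by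
  by_contra hq
  obtain ⟨w, hw⟩ := List.exists_mem_of_length_pos (l := l) (by omega)
  obtain ⟨a, b, hC⟩ := exists_isBoundaryCycleAt hnd hl hch hw
  obtain ⟨c, hc, -, -, k, hk, hkc⟩ := hC.exists_attachment hN H hG hq hqx
  obtain ⟨a', b', hC'⟩ := exists_isBoundaryCycleAt hnd hl hch hc
  exact hC'.not_attachment hN H hG hq hqB hqx hk hkc

lemma BoundaryWalk.start_adj_or (hw : BoundaryWalk E B Q d y h t) :
    h = d ∨ ∃ w, BoundaryAdj E B d w := by
  induction hw with
  | start => exact Or.inl rfl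
  | step _ hx _ _ _ ih => exact Or.inr (ih.elim (fun hd ↦ ⟨_, hd ▸ hx⟩) id)

lemma BoundaryWalk.chain_cons_back (hw : BoundaryWalk E B Q d y h t) (hhy : BoundaryAdj E B h y)
    (hdy : BoundaryAdj E B d y) : Cycle.Chain (BoundaryAdj E B) (y :: h :: t : List V) := by
  rw [Cycle.chain_coe_cons, List.cons_append, List.isChain_cons_cons, ← List.cons_append,
    List.isChain_append]
  refine ⟨hhy.symm, hw.isChain, List.isChain_singleton y, fun a ha b hb ↦ ?_⟩
  simp_all [hw.getLast?_eq]

/-- The walk would close up to a boundary cycle that misses the edge `q₁q₂`. -/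
lemma BoundaryWalk.not_adj_back (hw : BoundaryWalk E B {q₁, q₂} d y h t)
    (hs : WalkStart E B {q₁, q₂} d y) (hN : Chordless E B) (H : PlanarClass Good) (hG : Good E B)
    (hq : BoundaryAdj E B q₁ q₂) (hhd : h ≠ d) : ¬BoundaryAdj E B h y := by
  intro hhy
  obtain ⟨w, hdw⟩ := hw.start_adj_or.resolve_left hhd
  have hdy := hs.adj_or.resolve_right fun h ↦ h w hdw
  have hl : 3 ≤ (y :: h :: t).length := by
    obtain ⟨-, z, hz, -⟩ := hw.eq_start_or.resolve_left fun h ↦ hhd h.1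
    have := List.length_pos_of_mem hz
    simp only [List.length_cons]
    omega
  have hmem : ∀ {q x}, BoundaryAdj E B q x → q ∈ y :: h :: t := fun hqx ↦
    hN.mem_of_isCycle H hG (List.nodup_cons.2 ⟨hw.back_notMem hs, hw.nodup⟩) hl
      (hw.chain_cons_back hhy hdy) hqx.2.1 hqx.1
  have hQ : ∀ {q}, q ∈ ({q₁, q₂} : Set V) → q ∈ y :: h :: t → q = y := fun hqQ hq ↦
    (List.mem_cons.1 hq).resolve_right fun hq ↦ hw.notMem_avoided hs hq hqQ
  exact H.ne hG hq.1
    ((hQ (Or.inl rfl) (hmem hq)).trans (hQ (Or.inr rfl) (hmem hq.symm)).symm)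

end Cycle

/-! ### Robust sets of precolorings -/

section Robust

variable {V : Type u} {E : Finset (Sym2 V)} {B K K' : Set V} {L : V → Finset ℕ}
  {T : Set (ℕ × ℕ)} {q₁ q₂ u w : V} {τ : ℕ × ℕ} {n : ℕ} {φ ψ : V → ℕ}

/-- A set of colorings of an edge that is covered neither by a row, nor by a column, nor by two
single colorings. -/
structure IsRobust (T : Set (ℕ × ℕ)) : Prop where
  ne : ∀ τ ∈ T, τ.1 ≠ τ.2
  fst : ∀ a, ∃ τ ∈ T, τ.1 ≠ a
  snd : ∀ a, ∃ τ ∈ T, τ.2 ≠ a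
  two : ∀ t₁ t₂, ∃ τ ∈ T, τ ≠ t₁ ∧ τ ≠ t₂

/-- A condition on colorings: avoid one color at a vertex, or avoid two colorings of an edge. -/
inductive Demand (V : Type u) : Type u
  | vertex (v : V) (c : ℕ) : Demand V
  | edge (p₁ p₂ : V) (t₁ t₂ : ℕ × ℕ) : Demand V

namespace Demand

/-- The demand concerns a boundary vertex or a boundary edge. Two colorings of an edge that agree
at one end are excluded, since they are better avoided by a demand at that end. -/
def IsValid (E : Finset (Sym2 V)) (B : Set V) : Demand V → Prop
  | vertex v _ => v ∈ B
  | edge p₁ p₂ t₁ t₂ => BoundaryAdj E B p₁ p₂ ∧ t₁.1 ≠ t₂.1 ∧ t₁.2 ≠ t₂.2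

/-- The coloring `φ` satisfies the demand. -/
def IsMet (φ : V → ℕ) : Demand V → Prop
  | vertex v c => φ v ≠ c
  | edge p₁ p₂ t₁ t₂ => (φ p₁, φ p₂) ≠ t₁ ∧ (φ p₁, φ p₂) ≠ t₂

/-- The vertices that the demand mentions. -/
def support : Demand V → Set V
  | vertex v _ => {v}
  | edge p₁ p₂ _ _ => {p₁, p₂}

variable {D : Demand V}

lemma IsMet.congr (h : D.IsMet φ) (hφψ : ∀ v ∈ D.support, ψ v = φ v) : D.IsMet ψ := by
  cases D with
  | vertex v c => simpa only [IsMet, hφψ v rfl] using h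
  | edge p₁ p₂ t₁ t₂ => simpa only [IsMet, hφψ p₁ (Or.inl rfl), hφψ p₂ (Or.inr rfl)] using h

lemma IsValid.support_subset_or (h : D.IsValid E B) (hs : ChordSplit E u w K K') :
    D.support ⊆ {v | v ∈ K ∨ v = u ∨ v = w} ∨ D.support ⊆ {v | v ∈ K' ∨ v = u ∨ v = w} := by
  cases D with
  | vertex v c =>
    have := hs.mem_or_mem (v := v)
    simp only [support, Set.singleton_subset_iff, Set.mem_ofPred_eq]
    tauto
  | edge p₁ p₂ t₁ t₂ =>
    exact (hs.mem_chordSide_or h.1.1).imp (fun h ↦ Set.pair_subset_iff.2 (mem_chordSide.1 h).2)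
      (fun h ↦ Set.pair_subset_iff.2 (mem_chordSide.1 h).2)

lemma IsValid.chordSide (h : D.IsValid E B) (hD : D.support ⊆ {v | v ∈ K ∨ v = u ∨ v = w}) :
    D.IsValid (chordSide E u w K) B := by
  cases D with
  | vertex v c => exact h
  | edge p₁ p₂ t₁ t₂ =>
    exact ⟨⟨mem_chordSide.2 ⟨h.1.1, Set.pair_subset_iff.1 hD⟩, h.1.2⟩, h.2⟩

end Demand

lemma exists_demand_of_not_isRobust {F : Set (ℕ × ℕ)} (hF : ∀ τ ∈ F, τ.1 ≠ τ.2)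
    (hF' : ¬IsRobust F) (huw : BoundaryAdj E B u w) :
    ∃ D : Demand V, D.IsValid E B ∧ ∀ φ, D.IsMet φ → (φ u, φ w) ∉ F := by
  have row : ∀ a, (∀ τ ∈ F, τ.1 = a) →
      ∃ D : Demand V, D.IsValid E B ∧ ∀ φ, D.IsMet φ → (φ u, φ w) ∉ F :=
    fun a ha ↦ ⟨.vertex u a, huw.2.1, fun φ hφ h ↦ hφ (ha _ h)⟩
  have col : ∀ a, (∀ τ ∈ F, τ.2 = a) →
      ∃ D : Demand V, D.IsValid E B ∧ ∀ φ, D.IsMet φ → (φ u, φ w) ∉ F :=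
    fun a ha ↦ ⟨.vertex w a, huw.2.2, fun φ hφ h ↦ hφ (ha _ h)⟩
  by_contra hcon
  have hrow : ∀ a, ∃ τ ∈ F, τ.1 ≠ a := by
    intro a
    by_contra! ha
    exact hcon (row a ha)
  have hcol : ∀ a, ∃ τ ∈ F, τ.2 ≠ a := by
    intro a
    by_contra! ha
    exact hcon (col a ha)
  refine hF' ⟨hF, hrow, hcol, fun t₁ t₂ ↦ ?_⟩
  by_contra! h
  have hmem : ∀ τ ∈ F, τ = t₁ ∨ τ = t₂ := fun τ hτ ↦ or_iff_not_imp_left.2 (h τ hτ)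
  by_cases h₁ : t₁.1 = t₂.1
  · exact hcon (row t₁.1 fun τ hτ ↦ (hmem τ hτ).elim (· ▸ rfl) (· ▸ h₁.symm))
  by_cases h₂ : t₁.2 = t₂.2
  · exact hcon (col t₁.2 fun τ hτ ↦ (hmem τ hτ).elim (· ▸ rfl) (· ▸ h₂.symm))
  exact hcon ⟨.edge u w t₁ t₂, ⟨huw, h₁, h₂⟩, fun φ hφ h ↦ (hmem _ h).elim hφ.1 hφ.2⟩

/-- Some coloring in `T` of the edge `q₁q₂` extends to a list coloring with the property `P`. -/
def HasExtension (E : Finset (Sym2 V)) (L : V → Finset ℕ) (q₁ q₂ : V) (T : Set (ℕ × ℕ))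
    (P : (V → ℕ) → Prop) : Prop :=
  ∃ φ, IsColoringOff E {q₁, q₂} L φ ∧ (φ q₁, φ q₂) ∈ T ∧ P φ

/-- The setting of Thomassen's theorem with a boundary edge `q₁q₂`, for which a robust set `T` of
colorings is allowed. -/
structure RobustInstance (Good : Finset (Sym2 V) → Set V → Prop) (E : Finset (Sym2 V)) (B : Set V)
    (L : V → Finset ℕ) (q₁ q₂ : V) (T : Set (ℕ × ℕ)) : Prop where
  good : Good E B
  adj : BoundaryAdj E B q₁ q₂
  lists : HasThomassenLists B L {q₁, q₂}
  robust : IsRobust T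

/-- In graphs with fewer than `n` edges, every valid demand can be met by extending a member of a
given robust set of colorings of a boundary edge. -/
def RobustExtensionExists (Good : Finset (Sym2 V) → Set V → Prop) (n : ℕ) : Prop :=
  ∀ ⦃E B L q₁ q₂ T⦄ ⦃D : Demand V⦄, E.card < n → RobustInstance Good E B L q₁ q₂ T →
    D.IsValid E B → HasExtension E L q₁ q₂ T D.IsMet

lemma IsRobust.swap (h : IsRobust T) : IsRobust (Prod.swap ⁻¹' T) where
  ne _ hτ := (h.ne _ hτ).symm
  fst a := let ⟨τ, hτ, ha⟩ := h.snd a; ⟨τ.swap, hτ, ha⟩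
  snd a := let ⟨τ, hτ, ha⟩ := h.fst a; ⟨τ.swap, hτ, ha⟩
  two t₁ t₂ :=
    let ⟨τ, hτ, h₁, h₂⟩ := h.two t₁.swap t₂.swap
    ⟨τ.swap, hτ, fun h ↦ h₁ (Prod.swap_eq_iff_eq_swap.1 h),
      fun h ↦ h₂ (Prod.swap_eq_iff_eq_swap.1 h)⟩

variable {Good : Finset (Sym2 V) → Set V → Prop} {P Q : (V → ℕ) → Prop}

lemma HasExtension.mono (h : HasExtension E L q₁ q₂ T P) (hPQ : ∀ φ, P φ → Q φ) :
    HasExtension E L q₁ q₂ T Q :=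
  let ⟨φ, hφ, hφT, hP⟩ := h
  ⟨φ, hφ, hφT, hPQ φ hP⟩

lemma HasExtension.of_swap (h : HasExtension E L q₂ q₁ (Prod.swap ⁻¹' T) P) :
    HasExtension E L q₁ q₂ T P :=
  let ⟨φ, hφ, hφT, hP⟩ := h
  ⟨φ, Set.pair_comm q₁ q₂ ▸ hφ, hφT, hP⟩

namespace RobustInstance

lemma swap (I : RobustInstance Good E B L q₁ q₂ T) :
    RobustInstance Good E B L q₂ q₁ (Prod.swap ⁻¹' T) :=
  ⟨I.good, I.adj.symm, Set.pair_comm q₁ q₂ ▸ I.lists, I.robust.swap⟩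

lemma subset_boundary (I : RobustInstance Good E B L q₁ q₂ T) : {q₁, q₂} ⊆ B :=
  Set.pair_subset I.adj.2.1 I.adj.2.2

lemma hasExtension_of_mem (I : RobustInstance Good E B L q₁ q₂ T) (H : PlanarClass Good)
    (hτ : τ ∈ T) (hP : ∀ φ, φ q₁ = τ.1 → φ q₂ = τ.2 → P φ) : HasExtension E L q₁ q₂ T P := by
  obtain ⟨φ, hφ, h₁, h₂⟩ := H.exists_edge_extend I.good I.adj.1 I.adj.2.1 I.adj.2.2
    (X := {q₁, q₂}) (Or.inl rfl) (Or.inr rfl) (I.robust.ne τ hτ) I.lists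
  exact ⟨φ, hφ, by rwa [h₁, h₂], hP φ h₁ h₂⟩

/-- The colorings of the chord that do not extend over the far side while meeting the demand do not
form a robust set, so that they are avoided by a demand on the near side. -/
lemma hasExtension_of_support_subset_far (I : RobustInstance Good E B L q₁ q₂ T)
    (H : PlanarClass Good) (hR : RobustExtensionExists Good n) (hE : E.card ≤ n)
    (hs : ChordSplit E u w K K') (hu : u ∈ B) (hw : w ∈ B)
    (hq : s(q₁, q₂) ∈ chordSide E u w K) {D : Demand V} (hD : D.IsValid E B)
    (hDK : D.support ⊆ {v | v ∈ K' ∨ v = u ∨ v = w}) : HasExtension E L q₁ q₂ T D.IsMet := by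
  have hmono {K : Set V} := H.mono I.good (E' := chordSide E u w K) chordSide_subset
  have hcard := hs.card_chordSide_lt.trans_le hE
  have hcard' := hs.symm.card_chordSide_lt.trans_le hE
  obtain ⟨-, hq₁, hq₂⟩ := mem_chordSide.1 hq
  let F : Set (ℕ × ℕ) := {τ | τ.1 ≠ τ.2 ∧ ¬∃ φ,
    IsColoringOff (chordSide E u w K') ({q₁, q₂} ∪ {u, w}) L φ ∧ (φ u, φ w) = τ ∧ D.IsMet φ}
  have hF : ¬IsRobust F := fun hF ↦ by
    obtain ⟨φ, hφ, hφF, hφD⟩ : ∃ φ, IsColoringOff (chordSide E u w K') ({q₁, q₂} ∪ {u, w}) L φ ∧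
        (φ u, φ w) ∈ F ∧ D.IsMet φ :=
      (I.lists.mono Set.subset_union_left).exists_coloring_of_subset Set.subset_union_right
        fun L' hL' _ ↦ hR hcard' ⟨hmono, ⟨hs.symm.edge_mem_chordSide, hu, hw⟩, hL', hF⟩
          (hD.chordSide hDK)
    exact hφF.2 ⟨φ, hφ, rfl, hφD⟩
  obtain ⟨D', hD', hD'F⟩ := exists_demand_of_not_isRobust (fun τ hτ ↦ hτ.1) hF
    (⟨hs.edge_mem_chordSide, hu, hw⟩ : BoundaryAdj (chordSide E u w K) B u w)
  obtain ⟨φ, hφ, hφT, hφD'⟩ := hR hcard ⟨hmono, ⟨hq, I.adj.2⟩, I.lists, I.robust⟩ hD'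
  have hφF : ¬¬∃ φ', _ := fun h ↦ hD'F φ hφD' ⟨hφ.ne hs.edge_mem_chordSide, h⟩
  obtain ⟨φ', hφ', hφφ', hφ'D⟩ := not_not.1 hφF
  obtain ⟨hφu, hφw⟩ := Prod.mk.inj hφφ'
  refine ⟨_, hs.glue hφ hφ' hφu hφw, ?_, hφ'D.congr fun v hv ↦ ?_⟩
  · rwa [Set.piecewise_eq_of_notMem _ _ _ (hs.notMem_of_mem_side hq₁),
      Set.piecewise_eq_of_notMem _ _ _ (hs.notMem_of_mem_side hq₂)]
  · rcases hDK hv with hv | rfl | rfl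
    exacts [Set.piecewise_eq_of_mem _ _ _ hv,
      (Set.piecewise_eq_of_notMem _ _ _ hs.symm.left_notMem).trans hφu.symm,
      (Set.piecewise_eq_of_notMem _ _ _ hs.symm.right_notMem).trans hφw.symm]

lemma hasExtension_of_chordSplit (I : RobustInstance Good E B L q₁ q₂ T) (H : PlanarClass Good)
    (hR : RobustExtensionExists Good n) (hE : E.card ≤ n) (hs : ChordSplit E u w K K')
    (hu : u ∈ B) (hw : w ∈ B) {D : Demand V} (hD : D.IsValid E B) :
    HasExtension E L q₁ q₂ T D.IsMet := by
  obtain ⟨K₁, K₂, hs, hq⟩ := hs.exists_edge_mem_chordSide I.adj.1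
  obtain ⟨-, hq₁, hq₂⟩ := mem_chordSide.1 hq
  rcases hD.support_subset_or hs with hDK | hDK
  · obtain ⟨φ, hφ, hφT, hφD⟩ := hR (hs.card_chordSide_lt.trans_le hE)
      ⟨H.mono I.good chordSide_subset, ⟨hq, I.adj.2⟩, I.lists, I.robust⟩ (hD.chordSide hDK)
    obtain ⟨ψ, hψ, hψφ⟩ :=
      hs.exists_extend H (H.edgePrecoloringExtends n) hE I.good hu hw I.lists hφ
    refine ⟨ψ, hψ, ?_, hφD.congr fun v hv ↦ hψφ v (hs.notMem_of_mem_side (hDK hv))⟩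
    rwa [hψφ _ (hs.notMem_of_mem_side hq₁), hψφ _ (hs.notMem_of_mem_side hq₂)]
  · exact I.hasExtension_of_support_subset_far H hR hE hs hu hw hq hD hDK

end RobustInstance

end Robust

/-! ### Coloring along boundary walks -/

section WalkColoring

variable {V : Type u} {Good : Finset (Sym2 V) → Set V → Prop} {E : Finset (Sym2 V)}
  {B Q X : Set V} {L : V → Finset ℕ} {T : Set (ℕ × ℕ)} {d h q q' q₁ q₂ v x y : V} {t : List V}
  {τ : ℕ × ℕ} {n c : ℕ} {A R : Finset ℕ} {δ : ℕ → ℕ} {φ κ : V → ℕ}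

/-- A rule that answers every color by a different color of `R`. -/
def IsResponse (R : Finset ℕ) (δ : ℕ → ℕ) : Prop :=
  ∀ b, δ b ∈ R ∧ δ b ≠ b

lemma exists_isResponse (hR : 1 < R.card) : ∃ δ, IsResponse R δ :=
  Classical.skolem.1 (Finset.exists_mem_ne hR)

lemma IsResponse.one_lt_card (hδ : IsResponse R δ) : 1 < R.card :=
  Finset.one_lt_card.2 ⟨_, (hδ (δ 0)).1, _, (hδ 0).1, (hδ (δ 0)).2⟩

lemma WalkStart.of_adj (H : PlanarClass Good) (hG : Good E B) (hN : Chordless E B)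
    (hdy : BoundaryAdj E B d y) (hd : d ∉ Q) : WalkStart E B Q d y :=
  ⟨H.noloop hG, hN.boundaryDegLeTwo H hG, hdy.2.1, hd, H.ne hG hdy.1, Or.inl hdy⟩

lemma BoundaryWalk.extend_deleted (hw : BoundaryWalk E B Q d y h t) (hs : WalkStart E B Q d y)
    (hQ : Q ⊆ B) (hX : LeavesOnlyTo E B d y h t X) (hL : ∀ z ∈ h :: t, R ⊆ L z)
    (hφ : IsColoringOff (deleteEdges E (h :: t)) Q (pruneLists E B (h :: t) R L) φ)
    (hκR : ∀ z, κ z ∈ R) (hκ : ∀ a ∈ h :: t, ∀ b ∈ h :: t, s(a, b) ∈ E → κ a ≠ κ b)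
    (hκy : κ d ≠ φ y) (hκX : ∀ w ∈ X, κ h ≠ φ w) :
    ∃ ψ, IsColoringOff E Q L ψ ∧ (∀ v ∉ h :: t, ψ v = φ v) ∧ ψ d = κ d := by
  refine ⟨_, IsColoringOff.extend_deleted ⟨hφ.ne, fun hv ↦ hφ.mem fun hvQ ↦ hv (Or.inl hvQ)⟩ hQ
    (hκ _ · _) (fun _ ↦ hκR _) (fun ha _ ↦ hL _ ha (hκR _)) ?_, fun v hv ↦ if_neg hv,
    if_pos hw.start_mem⟩
  intro a b ha hb hbB hab
  rcases hX a ha b ⟨hab, hw.mem_boundary hs ha, hbB⟩ with h | ⟨rfl, rfl⟩ | ⟨rfl, hbX⟩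
  exacts [absurd h hb, hκy, hκX b hbX]

/-- The walk is colored starting from `d`, after the rest of the graph. -/
lemma BoundaryWalk.extend_deleted_of_isResponse (hw : BoundaryWalk E B Q d y h t)
    (hs : WalkStart E B Q d y) (hQ : Q ⊆ B) (hX : LeavesOnlyTo E B d y h t X)
    (hL : ∀ z ∈ h :: t, R ⊆ L z) (hδ : IsResponse R δ)
    (hφ : IsColoringOff (deleteEdges E (h :: t)) Q (pruneLists E B (h :: t) R L) φ)
    (hφX : ∀ w ∈ X, φ w ∉ R) :
    ∃ ψ, IsColoringOff E Q L ψ ∧ (∀ v ∉ h :: t, ψ v = φ v) ∧ ψ d = δ (ψ y) := by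
  obtain ⟨κ, hκd, hκR, hκ⟩ := hw.exists_coloring hs hδ.one_lt_card (hδ (φ y)).1
  obtain ⟨ψ, hψ, hψφ, hψd⟩ := hw.extend_deleted hs hQ hX hL hφ hκR hκ (hκd ▸ (hδ (φ y)).2)
    fun w hw h ↦ hφX w hw (h ▸ hκR _)
  exact ⟨ψ, hψ, hψφ, by rw [hψd, hκd, hψφ y (hw.back_notMem hs)]⟩

/-- The colors that members of `T` give to the vertex `q ∈ {q₁, q₂}`. -/
def endColors (T : Set (ℕ × ℕ)) (q₁ q₂ q : V) : Set ℕ :=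
  {a | ∃ τ ∈ T, (q = q₁ ∧ τ.1 = a) ∨ (q = q₂ ∧ τ.2 = a)}

lemma IsRobust.endColors_nontrivial (hT : IsRobust T) (hq : q ∈ ({q₁, q₂} : Set V)) :
    (endColors T q₁ q₂ q).Nontrivial := by
  rcases hq with rfl | rfl
  · obtain ⟨τ, hτ, -⟩ := hT.fst 0
    obtain ⟨τ', hτ', hne⟩ := hT.fst τ.1
    exact ⟨_, ⟨τ', hτ', Or.inl ⟨rfl, rfl⟩⟩, _, ⟨τ, hτ, Or.inl ⟨rfl, rfl⟩⟩, hne⟩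
  · obtain ⟨τ, hτ, -⟩ := hT.snd 0
    obtain ⟨τ', hτ', hne⟩ := hT.snd τ.2
    exact ⟨_, ⟨τ', hτ', Or.inr ⟨rfl, rfl⟩⟩, _, ⟨τ, hτ, Or.inr ⟨rfl, rfl⟩⟩, hne⟩

lemma IsRobust.exists_notMem_of_card_le_two (hT : IsRobust T) (hR : R.card ≤ 2) :
    ∃ τ ∈ T, τ.1 ∉ R ∨ τ.2 ∉ R := by
  by_contra! hcon
  obtain ⟨⟨a, b⟩, hab, -⟩ := hT.fst 0
  obtain ⟨⟨a', b'⟩, hab', h, h'⟩ := hT.two (a, b) (b, a)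
  have hne := hT.ne _ hab
  have hne' := hT.ne _ hab'
  obtain ⟨ha, hb⟩ := hcon _ hab
  obtain ⟨ha', hb'⟩ := hcon _ hab'
  obtain rfl : {a, b} = R := Finset.eq_of_subset_of_card_le (by simp [Finset.insert_subset_iff, *])
    (by rwa [Finset.card_pair hne])
  grind

lemma IsRobust.not_endColors_subset (hT : IsRobust T) (hR : R.card ≤ 2) (hqq' : q ≠ q')
    (hq : q ∈ ({q₁, q₂} : Set V)) (hq' : q' ∈ ({q₁, q₂} : Set V))
    (h : endColors T q₁ q₂ q ⊆ R) : ¬endColors T q₁ q₂ q' ⊆ R := by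
  intro h'
  obtain ⟨τ, hτ, hτR⟩ := hT.exists_notMem_of_card_le_two hR
  have h₁ : τ.1 ∈ endColors T q₁ q₂ q₁ := ⟨τ, hτ, Or.inl ⟨rfl, rfl⟩⟩
  have h₂ : τ.2 ∈ endColors T q₁ q₂ q₂ := ⟨τ, hτ, Or.inr ⟨rfl, rfl⟩⟩
  rcases hq with rfl | rfl <;> rcases hq' with rfl | rfl
  exacts [hqq' rfl, hτR.elim (· (h h₁)) (· (h' h₂)), hτR.elim (· (h' h₁)) (· (h h₂)), hqq' rfl]

/-- The demand `φ x ≠ c` for a color `c` outside `A` makes up for a list `A` of size two. -/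
lemma RobustExtensionExists.hasExtension_mem (hM : RobustExtensionExists Good n)
    (hE : E.card < n) (hG : Good E B) (hq : BoundaryAdj E B q₁ q₂) (hT : IsRobust T)
    (hL : HasThomassenLists B L ({q₁, q₂} ∪ {x})) (hx : x ∈ B) (hxQ : x ∉ ({q₁, q₂} : Set V))
    (hAL : A ⊆ L x) (hA : 2 ≤ A.card) : HasExtension E L q₁ q₂ T fun φ ↦ φ x ∈ A := by
  obtain ⟨c, hc⟩ := Infinite.exists_notMem_finset A
  have hL' : HasThomassenLists B (Function.update L x (insert c A)) {q₁, q₂} := by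
    intro v hv
    rcases eq_or_ne v x with rfl | hvx
    · rw [Function.update_self, Finset.card_insert_of_notMem hc]
      exact ⟨by omega, fun hv ↦ absurd hx hv⟩
    · simpa [hvx] using hL v (by simp_all)
  obtain ⟨φ, hφ, hφT, hφc⟩ := hM (D := .vertex x c) hE ⟨hG, hq, hL', hT⟩ hx
  have hφx : φ x ∈ A := by
    have := hφ.mem hxQ
    rw [Function.update_self] at this
    exact (Finset.mem_insert.1 this).resolve_left hφc
  refine ⟨φ, ⟨hφ.ne, fun {v} hv ↦ ?_⟩, hφT, hφx⟩
  rcases eq_or_ne v x with rfl | hvx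
  · exact hAL hφx
  · simpa [hvx] using hφ.mem hv

namespace RobustInstance

lemma adj_deleteEdges (I : RobustInstance Good E B L q₁ q₂ T)
    (hw : BoundaryWalk E B {q₁, q₂} d y h t) (hs : WalkStart E B {q₁, q₂} d y) :
    BoundaryAdj (deleteEdges E (h :: t)) (exposedBoundary E B (h :: t)) q₁ q₂ :=
  ⟨mem_deleteEdges.2 ⟨I.adj.1, fun h ↦ hw.notMem_avoided hs h (Or.inl rfl),
    fun h ↦ hw.notMem_avoided hs h (Or.inr rfl)⟩, Or.inl I.adj.2.1, Or.inl I.adj.2.2⟩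

lemma hasExtension_of_deleted (I : RobustInstance Good E B L q₁ q₂ T)
    (hw : BoundaryWalk E B {q₁, q₂} d y h t) (hs : WalkStart E B {q₁, q₂} d y)
    (hX : LeavesOnlyTo E B d y h t X) (hL : ∀ z ∈ h :: t, R ⊆ L z) (hδ : IsResponse R δ)
    (hφ : HasExtension (deleteEdges E (h :: t)) (pruneLists E B (h :: t) R L) q₁ q₂ T
      fun φ ↦ ∀ w ∈ X, φ w ∉ R) : HasExtension E L q₁ q₂ T fun φ ↦ φ d = δ (φ y) := by
  obtain ⟨φ, hφ, hφT, hφX⟩ := hφ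
  obtain ⟨ψ, hψ, hψφ, hψd⟩ :=
    hw.extend_deleted_of_isResponse hs I.subset_boundary hX hL hδ hφ hφX
  obtain ⟨-, hq₁, hq₂⟩ := mem_deleteEdges.1 (I.adj_deleteEdges hw hs).1
  exact ⟨ψ, hψ, by rwa [hψφ _ hq₁, hψφ _ hq₂], hψd⟩

lemma deleteWalk (I : RobustInstance Good E B L q₁ q₂ T) (H : PlanarClass Good)
    (hw : BoundaryWalk E B {q₁, q₂} d y h t) (hs : WalkStart E B {q₁, q₂} d y)
    (hR : R.card ≤ 2) :
    RobustInstance Good (deleteEdges E (h :: t)) (exposedBoundary E B (h :: t))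
      (pruneLists E B (h :: t) R L) q₁ q₂ T :=
  ⟨H.deleteEdges I.good fun _ ↦ hw.mem_boundary hs, I.adj_deleteEdges hw hs, I.lists.prune hR,
    I.robust⟩

lemma hasExtension_of_isExit (I : RobustInstance Good E B L q₁ q₂ T) (H : PlanarClass Good)
    (hM : RobustExtensionExists Good n) (hE : E.card ≤ n)
    (hw : BoundaryWalk E B {q₁, q₂} d y h t) (hs : WalkStart E B {q₁, q₂} d y)
    (hx : IsExit E B d y h t x) (hxQ : x ∉ ({q₁, q₂} : Set V)) (hxR : ¬R ⊆ L x)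
    (hL : ∀ z ∈ h :: t, R ⊆ L z) (hR : R.card ≤ 2) (hδ : IsResponse R δ) :
    HasExtension E L q₁ q₂ T fun φ ↦ φ d = δ (φ y) := by
  refine I.hasExtension_of_deleted hw hs hx.leaves hL hδ ?_
  have hprune : pruneLists E B (h :: t) R L x = L x := if_neg fun h ↦ h.1 hx.adj.2.2
  have hcard : 2 ≤ (L x \ R).card := by
    have hlt : (R ∩ L x).card < R.card :=
      Finset.card_lt_card ⟨Finset.inter_subset_left, fun h ↦ hxR (Finset.inter_eq_left.1
        (Finset.inter_subset_left.antisymm h))⟩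
    have := (I.lists x hxQ).1
    rw [Finset.card_sdiff]
    omega
  have I' := I.deleteWalk H hw hs hR
  exact (hM.hasExtension_mem ((card_deleteEdges_lt hx.adj.1 (.head t)).trans_le hE) I'.good I'.adj
    I'.robust (I'.lists.mono Set.subset_union_left) (Or.inl hx.adj.2.2) hxQ
    (hprune ▸ Finset.sdiff_subset) hcard).mono
      fun φ hφ w hw ↦ Set.mem_singleton_iff.1 hw ▸ (Finset.mem_sdiff.1 hφ).2

end RobustInstance

/-- No member of `T` extends in such a way that `d` answers the color of `y` by `δ`, where `δ`
picks from two colors of `L d`. -/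
structure IsUnrealizable (E : Finset (Sym2 V)) (L : V → Finset ℕ) (q₁ q₂ : V) (T : Set (ℕ × ℕ))
    (d y : V) (R : Finset ℕ) (δ : ℕ → ℕ) : Prop where
  card : R.card ≤ 2
  subset : R ⊆ L d
  response : IsResponse R δ
  not_hasExtension : ¬HasExtension E L q₁ q₂ T fun φ ↦ φ d = δ (φ y)

namespace RobustInstance

lemma subset_of_isUnrealizable (I : RobustInstance Good E B L q₁ q₂ T) (H : PlanarClass Good)
    (hM : RobustExtensionExists Good n) (hE : E.card ≤ n)
    (hw : BoundaryWalk E B {q₁, q₂} d y h t) (hs : WalkStart E B {q₁, q₂} d y)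
    (hR : IsUnrealizable E L q₁ q₂ T d y R δ) : ∀ z ∈ h :: t, R ⊆ L z := by
  refine (hw.forall_mem_or_exists_isExit hs (P := (R ⊆ L ·)) hR.subset).resolve_right ?_
  rintro ⟨h', t', x, hw', hL, hx, hxQ, hxR⟩
  exact hR.not_hasExtension
    (I.hasExtension_of_isExit H hM hE hw' hs hx hxQ hxR hL hR.card hR.response)

lemma endColors_subset_of_isUnrealizable (I : RobustInstance Good E B L q₁ q₂ T)
    (H : PlanarClass Good) (hw : BoundaryWalk E B {q₁, q₂} d y h t)
    (hs : WalkStart E B {q₁, q₂} d y) (hq : IsExit E B d y h t q)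
    (hL : ∀ z ∈ h :: t, R ⊆ L z) (hR : IsUnrealizable E L q₁ q₂ T d y R δ) :
    endColors T q₁ q₂ q ⊆ R := by
  rintro a ⟨τ, hτ, ha⟩
  by_contra haR
  refine hR.not_hasExtension (I.hasExtension_of_deleted hw hs hq.leaves hL hR.response
    ((I.deleteWalk H hw hs hR.card).hasExtension_of_mem H hτ fun φ h₁ h₂ w hw ↦ ?_))
  obtain rfl := Set.mem_singleton_iff.1 hw
  rcases ha with ⟨rfl, rfl⟩ | ⟨rfl, rfl⟩
  · rwa [h₁]
  · rwa [h₂]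

/-- The maximal walk from `d` in the direction opposite to `y` can neither close up nor get stuck
if some response is unrealizable. -/
lemma exists_isExit_of_isUnrealizable (I : RobustInstance Good E B L q₁ q₂ T)
    (H : PlanarClass Good) (hM : RobustExtensionExists Good n) (hE : E.card ≤ n)
    (hN : Chordless E B) (hs : WalkStart E B {q₁, q₂} d y)
    (hR : IsUnrealizable E L q₁ q₂ T d y R δ) :
    ∃ h t, ∃ q ∈ ({q₁, q₂} : Set V), BoundaryWalk E B {q₁, q₂} d y h t ∧ IsExit E B d y h t q := by
  obtain ⟨h, t, hw, ⟨hhd, hhy⟩ | hX | ⟨q, hq, hex⟩⟩ :=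
    BoundaryWalk.exists_maximal hs (H.finite I.good)
  · exact absurd hhy (hw.not_adj_back hs hN H I.good I.adj hhd)
  · obtain ⟨τ, hτ, -⟩ := I.robust.fst 0
    exact absurd (I.hasExtension_of_deleted hw hs hX
      (I.subset_of_isUnrealizable H hM hE hw hs hR) hR.response
      ((I.deleteWalk H hw hs hR.card).hasExtension_of_mem H hτ (by simp))) hR.not_hasExtension
  · exact ⟨h, t, q, hq, hw, hex⟩

lemma hasExtension_vertex (I : RobustInstance Good E B L q₁ q₂ T)
    (H : PlanarClass Good) (hM : RobustExtensionExists Good n) (hE : E.card ≤ n)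
    (hN : Chordless E B) (hv : v ∈ B) (hvQ : v ∉ ({q₁, q₂} : Set V)) :
    HasExtension E L q₁ q₂ T (Demand.vertex v c).IsMet := by
  obtain ⟨R, hRL, hR⟩ : ∃ R ⊆ (L v).erase c, R.card = 2 := by
    have := (I.lists v hvQ).1
    have := Finset.pred_card_le_card_erase (s := L v) (a := c)
    exact Finset.exists_subset_card_eq (by omega)
  obtain ⟨δ, hδ⟩ := exists_isResponse (hR ▸ Nat.one_lt_two)
  by_contra hcon
  have hun (y : V) : IsUnrealizable E L q₁ q₂ T v y R δ :=
    ⟨hR.le, hRL.trans (Finset.erase_subset _ _), hδ, fun h ↦ hcon (h.mono fun φ hφ ↦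
      ne_of_eq_of_ne hφ (Finset.ne_of_mem_erase (hRL (hδ _).1)))⟩
  by_cases hy : ∃ y, BoundaryAdj E B v y
  · obtain ⟨y₁, hy₁⟩ := hy
    have hs₁ := WalkStart.of_adj H I.good hN hy₁ hvQ
    obtain ⟨h₁, t₁, q, hq, hw₁, hex₁⟩ := I.exists_isExit_of_isUnrealizable H hM hE hN hs₁ (hun y₁)
    obtain ⟨y₂, -, hne, hy₂⟩ := hw₁.exists_adj_start hex₁
    have hs₂ := WalkStart.of_adj H I.good hN hy₂ hvQ
    obtain ⟨h₂, t₂, q', hq', hw₂, hex₂⟩ := I.exists_isExit_of_isUnrealizable H hM hE hN hs₂ (hun y₂)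
    refine I.robust.not_endColors_subset hR.le ?_ hq hq'
      (I.endColors_subset_of_isUnrealizable H hw₁ hs₁ hex₁
        (I.subset_of_isUnrealizable H hM hE hw₁ hs₁ (hun y₁)) (hun y₁))
      (I.endColors_subset_of_isUnrealizable H hw₂ hs₂ hex₂
        (I.subset_of_isUnrealizable H hM hE hw₂ hs₂ (hun y₂)) (hun y₂))
    rintro rfl
    rcases hq with rfl | rfl
    · exact hw₁.not_isExit_of_ne I.adj (by simp) hne.symm hy₁ hy₂ hs₁ hs₂ hw₂ hex₁ hex₂
    · exact hw₁.not_isExit_of_ne I.adj.symm (by simp) hne.symm hy₁ hy₂ hs₁ hs₂ hw₂ hex₁ hex₂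
  · push Not at hy
    have hs : WalkStart E B {q₁, q₂} v q₁ := ⟨H.noloop I.good, hN.boundaryDegLeTwo H I.good, hv,
      hvQ, fun h ↦ hvQ (Or.inl h), Or.inr hy⟩
    obtain ⟨h, t, q, -, hw, hex⟩ := I.exists_isExit_of_isUnrealizable H hM hE hN hs (hun q₁)
    obtain ⟨w, -, -, hvw⟩ := hw.exists_adj_start hex
    exact hy w hvw

end RobustInstance

end WalkColoring

/-! ### Extending robust sets of precolorings -/

section RobustExtension

variable {V : Type u} {Good : Finset (Sym2 V) → Set V → Prop} {E : Finset (Sym2 V)} {B : Set V}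
  {L : V → Finset ℕ} {T : Set (ℕ × ℕ)} {p₁ p₂ q₁ q₂ v v₁ v₂ : V} {t₁ t₂ : ℕ × ℕ} {n c c' : ℕ}
  {A C R S s₁ s₂ : Finset ℕ}

lemma exists_two_subset_ne (hS : 3 ≤ S.card) (s₁ s₂ : Finset ℕ) :
    ∃ R ⊆ S, R.card = 2 ∧ R ≠ s₁ ∧ R ≠ s₂ := by
  have h₁ : ({s₁, s₂} : Finset (Finset ℕ)).card ≤ 2 := Finset.card_le_two
  have h₂ : Nat.choose 3 2 ≤ (S.powersetCard 2).card :=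
    Finset.card_powersetCard 2 S ▸ Nat.choose_le_choose 2 hS
  obtain ⟨R, hR, hRs⟩ := Finset.exists_mem_notMem_of_card_lt_card
    (h₁.trans_lt (lt_of_lt_of_le (by decide) h₂))
  obtain ⟨hRS, hR⟩ := Finset.mem_powersetCard.1 hR
  exact ⟨R, hRS, hR, by simpa using hRs⟩

/-- If `a` and `b` lie in all but two pairs from `S`, then those two are `{a, x}` and `{b, x}`. -/
lemma subset_symmDiff_of_forall_subset {P : Set ℕ} (hS : 3 ≤ S.card) (hP : P.Nontrivial)
    (h : ∀ R ⊆ S, R.card = 2 → R ≠ s₁ → R ≠ s₂ → P ⊆ R) :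
    P ⊆ (symmDiff s₁ s₂ : Finset ℕ) ∧ (symmDiff s₁ s₂).card ≤ 2 := by
  obtain ⟨a, ha, b, hb, hab⟩ := hP
  obtain ⟨R, hRS, hR, h₁, h₂⟩ := exists_two_subset_ne hS s₁ s₂
  have haS := hRS (h R hRS hR h₁ h₂ ha)
  have hbS := hRS (h R hRS hR h₁ h₂ hb)
  obtain ⟨x, hxS, hx⟩ := Finset.exists_mem_notMem_of_card_lt_card
    (lt_of_le_of_lt (Finset.card_le_two (a := a) (b := b)) hS)
  obtain ⟨hxa, hxb⟩ : x ≠ a ∧ x ≠ b := by simpa using hx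
  have hmem {y z : ℕ} (hy : y ∈ S) (hz : z ∈ S) (hyz : y ≠ z) :
      {y, z} = s₁ ∨ {y, z} = s₂ ∨ P ⊆ ({y, z} : Finset ℕ) := by
    have := h {y, z} (by simp [Finset.insert_subset_iff, *]) (Finset.card_pair hyz)
    tauto
  have hax : {a, x} = s₁ ∨ {a, x} = s₂ := (or_assoc.2 (hmem haS hxS hxa.symm)).resolve_right
    fun h ↦ by simpa [hab.symm, hxb.symm] using h hb
  have hbx : {b, x} = s₁ ∨ {b, x} = s₂ := (or_assoc.2 (hmem hbS hxS hxb.symm)).resolve_right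
    fun h ↦ by simpa [hab, hxa.symm] using h ha
  have hne : ({a, x} : Finset ℕ) ≠ {b, x} := fun h ↦ by
    have : a ∈ ({b, x} : Finset ℕ) := h ▸ Finset.mem_insert_self a _
    simp [hab, hxa.symm] at this
  have hs : symmDiff s₁ s₂ = {a, b} ∧ x ∈ s₁ ∧ x ∈ s₂ := by
    obtain ⟨rfl, rfl⟩ | ⟨rfl, rfl⟩ :
        (s₁ = {a, x} ∧ s₂ = {b, x}) ∨ (s₁ = {b, x} ∧ s₂ = {a, x}) := by
      rcases hax with h₁ | h₁ <;> rcases hbx with h₂ | h₂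
      exacts [absurd (h₁.trans h₂.symm) hne, Or.inl ⟨h₁.symm, h₂.symm⟩,
        Or.inr ⟨h₂.symm, h₁.symm⟩, absurd (h₁.trans h₂.symm) hne]
    all_goals
      refine ⟨?_, by simp, by simp⟩
      ext z
      simp only [Finset.mem_symmDiff, Finset.mem_insert, Finset.mem_singleton]
      grind
  rw [hs.1]
  refine ⟨?_, Finset.card_le_two⟩
  rcases hmem haS hbS hab with rfl | rfl | h
  exacts [absurd hs.2.1 hx, absurd hs.2.2 hx, h]

lemma exists_isResponse_edge (hR : R.card = 2) (h₁ : R ≠ {t₁.1, t₁.2}) (h₂ : R ≠ {t₂.1, t₂.2})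
    (hfst : t₁.1 ≠ t₂.1) (hsnd : t₁.2 ≠ t₂.2) :
    ∃ δ, IsResponse R δ ∧ ∀ b, (δ b, b) ≠ t₁ ∧ (δ b, b) ≠ t₂ := by
  have (b : ℕ) : ∃ a, (a ∈ R ∧ a ≠ b) ∧ (a, b) ≠ t₁ ∧ (a, b) ≠ t₂ := by
    obtain ⟨x, y, hxy, rfl⟩ := Finset.card_eq_two.1 hR
    have hxy' : ∀ t ∈ ({t₁, t₂} : Set (ℕ × ℕ)), (x, y) ≠ t ∧ (y, x) ≠ t := by
      rintro t (rfl | rfl) <;> constructor <;> rintro rfl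
      exacts [h₁ rfl, h₁ (Finset.pair_comm _ _), h₂ rfl, h₂ (Finset.pair_comm _ _)]
    have ht₁ := hxy' t₁ (Or.inl rfl)
    have ht₂ := hxy' t₂ (Or.inr rfl)
    by_contra! hcon
    have hx := hcon x
    have hy := hcon y
    clear hcon h₁ h₂ hR hxy'
    obtain ⟨a₁, b₁⟩ := t₁
    obtain ⟨a₂, b₂⟩ := t₂
    simp only [ne_eq, Prod.mk.injEq, Finset.mem_insert, Finset.mem_singleton] at *
    grind
  choose δ hδ hδt using this
  exact ⟨δ, hδ, hδt⟩

lemma HasExtension.edge_comm (h : HasExtension E L q₁ q₂ T (Demand.edge p₁ p₂ t₁ t₂).IsMet) :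
    HasExtension E L q₁ q₂ T (Demand.edge p₂ p₁ t₁.swap t₂.swap).IsMet :=
  h.mono fun _ hφ ↦ ⟨fun h ↦ hφ.1 (Prod.swap_injective h), fun h ↦ hφ.2 (Prod.swap_injective h)⟩

namespace RobustInstance

lemma isUnrealizable_of_not_hasExtension_edge
    (hD : (Demand.edge p₁ p₂ t₁ t₂).IsValid E B)
    (hcon : ¬HasExtension E L q₁ q₂ T (Demand.edge p₁ p₂ t₁ t₂).IsMet) (hRL : R ⊆ L p₁)
    (hR : R.card = 2) (h₁ : R ≠ {t₁.1, t₁.2}) (h₂ : R ≠ {t₂.1, t₂.2}) :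
    ∃ δ, IsUnrealizable E L q₁ q₂ T p₁ p₂ R δ := by
  obtain ⟨δ, hδ, hδt⟩ := exists_isResponse_edge hR h₁ h₂ hD.2.1 hD.2.2
  refine ⟨δ, hR.le, hRL, hδ, fun h ↦ hcon (h.mono fun φ hφ ↦ ?_)⟩
  simpa only [Demand.IsMet, hφ] using hδt (φ p₂)

lemma exists_isExit_of_not_hasExtension_edge (I : RobustInstance Good E B L q₁ q₂ T)
    (H : PlanarClass Good) (hM : RobustExtensionExists Good n) (hE : E.card ≤ n)
    (hN : Chordless E B) (hD : (Demand.edge p₁ p₂ t₁ t₂).IsValid E B)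
    (hp : p₁ ∉ ({q₁, q₂} : Set V))
    (hcon : ¬HasExtension E L q₁ q₂ T (Demand.edge p₁ p₂ t₁ t₂).IsMet) :
    ∃ h t, ∃ q ∈ ({q₁, q₂} : Set V), BoundaryWalk E B {q₁, q₂} p₁ p₂ h t ∧
      IsExit E B p₁ p₂ h t q ∧
      endColors T q₁ q₂ q ⊆ (symmDiff {t₁.1, t₁.2} {t₂.1, t₂.2} : Finset ℕ) ∧
      (symmDiff ({t₁.1, t₁.2} : Finset ℕ) {t₂.1, t₂.2}).card ≤ 2 := by
  have hs := WalkStart.of_adj H I.good hN hD.1 hp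
  have hL := (I.lists p₁ hp).1
  have hun {R : Finset ℕ} := isUnrealizable_of_not_hasExtension_edge (R := R) hD hcon
  obtain ⟨R₀, hRL₀, hR₀, h₁, h₂⟩ := exists_two_subset_ne hL {t₁.1, t₁.2} {t₂.1, t₂.2}
  obtain ⟨δ₀, hδ₀⟩ := hun hRL₀ hR₀ h₁ h₂
  obtain ⟨h, t, q, hq, hw, hex⟩ := I.exists_isExit_of_isUnrealizable H hM hE hN hs hδ₀
  refine ⟨h, t, q, hq, hw, hex,
    subset_symmDiff_of_forall_subset hL (I.robust.endColors_nontrivial hq) ?_⟩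
  intro R hRL hR h₁ h₂
  obtain ⟨δ, hδ⟩ := hun hRL hR h₁ h₂
  exact I.endColors_subset_of_isUnrealizable H hw hs hex
    (I.subset_of_isUnrealizable H hM hE hw hs hδ) hδ

lemma hasExtension_edge_of_disjoint (I : RobustInstance Good E B L q₁ q₂ T)
    (H : PlanarClass Good) (hM : RobustExtensionExists Good n) (hE : E.card ≤ n)
    (hN : Chordless E B) (hD : (Demand.edge p₁ p₂ t₁ t₂).IsValid E B)
    (hp₁ : p₁ ∉ ({q₁, q₂} : Set V)) (hp₂ : p₂ ∉ ({q₁, q₂} : Set V)) :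
    HasExtension E L q₁ q₂ T (Demand.edge p₁ p₂ t₁ t₂).IsMet := by
  by_contra hcon
  obtain ⟨h, t, q, hq, hw, hex, hqT, hcard⟩ :=
    I.exists_isExit_of_not_hasExtension_edge H hM hE hN hD hp₁ hcon
  obtain ⟨h', t', q', hq', hw', hex', hqT', -⟩ :=
    I.exists_isExit_of_not_hasExtension_edge H hM hE hN (t₁ := t₁.swap) (t₂ := t₂.swap)
      ⟨hD.1.symm, hD.2.2, hD.2.1⟩ hp₂ fun h ↦ hcon h.edge_comm
  have hs := WalkStart.of_adj H I.good hN hD.1 hp₁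
  have hs' := WalkStart.of_adj H I.good hN hD.1.symm hp₂
  refine I.robust.not_endColors_subset hcard ?_ hq hq' hqT ?_
  · rintro rfl
    rcases hq with rfl | rfl
    · exact hw.not_isExit_of_pair I.adj (by simp) hs hs' hw' hex hex'
    · exact hw.not_isExit_of_pair I.adj.symm (by simp) hs hs' hw' hex hex'
  · simpa only [Prod.fst_swap, Prod.snd_swap, Finset.pair_comm] using hqT'

/-- The walk from `p₁` away from `q₁` can only end at `q₂`. It is colored from `p₁` on with the
color `e`, and its last vertex leaves one of the two colors `c`, `c'` to `q₂`. -/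
lemma hasExtension_edge_of_mem_mem (I : RobustInstance Good E B L q₁ q₂ T)
    (H : PlanarClass Good) (hM : RobustExtensionExists Good n) (hE : E.card ≤ n)
    (hN : Chordless E B) (hD : (Demand.edge p₁ q₁ t₁ t₂).IsValid E B)
    (hp : p₁ ∉ ({q₁, q₂} : Set V)) (hc : (t₁.2, c) ∈ T) (hc' : (t₁.2, c') ∈ T) (hcc' : c ≠ c') :
    HasExtension E L q₁ q₂ T (Demand.edge p₁ q₁ t₁ t₂).IsMet := by
  by_contra hcon
  have hs := WalkStart.of_adj H I.good hN hD.1 hp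
  have hpick (x y : ℕ) : ∃ e ∈ L p₁, e ≠ x ∧ e ≠ y := by
    simpa using Finset.exists_mem_notMem_of_card_lt_card
      ((Finset.card_le_two (a := x) (b := y)).trans_lt (I.lists p₁ hp).1)
  obtain ⟨e, he, he₂, he₁⟩ := hpick t₁.2 t₁.1
  obtain ⟨β, hβ, hβe, hβ'⟩ := hpick e (if e = t₂.1 then t₂.2 else t₂.1)
  have hR := Finset.card_pair hβe.symm
  obtain ⟨δ, hδ⟩ := isUnrealizable_of_not_hasExtension_edge hD hcon
    (Finset.insert_subset he (Finset.singleton_subset_iff.2 hβ)) hR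
    (fun h ↦ by simpa [he₁, he₂] using h.subset (Finset.mem_insert_self _ _))
    (fun h ↦ by have := h.subset; simp only [Finset.insert_subset_iff] at this; grind)
  obtain ⟨h, t, q, hq, hw, hex⟩ := I.exists_isExit_of_isUnrealizable H hM hE hN hs hδ
  obtain rfl := hq.resolve_left hex.ne
  obtain ⟨κ, hκp, hκR, hκ⟩ :=
    hw.exists_coloring hs (hR ▸ Nat.one_lt_two) (Finset.mem_insert_self e {β})
  obtain ⟨c₀, hc₀, hκc₀⟩ : ∃ c, (t₁.2, c) ∈ T ∧ κ h ≠ c := by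
    by_cases hk : κ h = c
    · exact ⟨c', hc', hk ▸ hcc'⟩
    · exact ⟨c, hc, hk⟩
  obtain ⟨φ, hφ, hφT, hφ₁, hφ₂⟩ := (I.deleteWalk H hw hs hR.le).hasExtension_of_mem H hc₀
    (P := fun φ ↦ φ q₁ = t₁.2 ∧ φ q = c₀) fun _ ↦ And.intro
  obtain ⟨ψ, hψ, hψφ, hψp⟩ := hw.extend_deleted hs I.subset_boundary hex.leaves
    (I.subset_of_isUnrealizable H hM hE hw hs hδ) hφ hκR hκ (by rwa [hκp, hφ₁])
    fun w hw ↦ by rwa [Set.mem_singleton_iff.1 hw, hφ₂]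
  obtain ⟨-, hq₁, hq₂⟩ := mem_deleteEdges.1 (I.adj_deleteEdges hw hs).1
  have hψ₁ : ψ q₁ = t₁.2 := (hψφ _ hq₁).trans hφ₁
  exact hcon ⟨ψ, hψ, by rwa [hψφ _ hq₁, hψφ _ hq₂], fun h ↦ he₁ (hκp ▸ hψp ▸ congrArg Prod.fst h),
    fun h ↦ hD.2.2 (hψ₁ ▸ congrArg Prod.snd h)⟩

lemma hasExtension_edge_of_snd_eq (I : RobustInstance Good E B L q₁ q₂ T)
    (H : PlanarClass Good) (hM : RobustExtensionExists Good n) (hE : E.card ≤ n)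
    (hN : Chordless E B) (hD : (Demand.edge p₁ q₁ t₁ t₂).IsValid E B)
    (hp : p₁ ∉ ({q₁, q₂} : Set V)) : HasExtension E L q₁ q₂ T (Demand.edge p₁ q₁ t₁ t₂).IsMet := by
  by_cases hτ : ∃ τ ∈ T, τ.1 ≠ t₁.2 ∧ τ.1 ≠ t₂.2
  · obtain ⟨τ, hτ, h₁, h₂⟩ := hτ
    exact I.hasExtension_of_mem H hτ fun φ hφ _ ↦
      ⟨fun h ↦ h₁ (hφ ▸ congrArg Prod.snd h), fun h ↦ h₂ (hφ ▸ congrArg Prod.snd h)⟩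
  have hor : ∀ τ ∈ T, τ.1 = t₁.2 ∨ τ.1 = t₂.2 := fun τ h ↦ by
    by_contra! h'
    exact hτ ⟨τ, h, h'⟩
  obtain ⟨⟨x₁, x⟩, hx, hx₂⟩ := I.robust.fst t₂.2
  obtain ⟨⟨y₁, y⟩, hy, hy₁⟩ := I.robust.fst t₁.2
  obtain rfl : x₁ = t₁.2 := (hor _ hx).resolve_right hx₂
  obtain rfl : y₁ = t₂.2 := (hor _ hy).resolve_left hy₁
  obtain ⟨⟨z₁, z⟩, hz, hzx, hzy⟩ := I.robust.two (t₁.2, x) (t₂.2, y)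
  rcases hor _ hz with rfl | rfl
  · exact I.hasExtension_edge_of_mem_mem H hM hE hN hD hp hz hx fun h ↦ hzx (h ▸ rfl)
  · exact (I.hasExtension_edge_of_mem_mem H hM hE hN ⟨hD.1, hD.2.1.symm, hD.2.2.symm⟩ hp hz hy
      fun h ↦ hzy (h ▸ rfl)).mono fun _ ↦ And.symm

lemma hasExtension_edge_of_right_mem (I : RobustInstance Good E B L q₁ q₂ T)
    (H : PlanarClass Good) (hM : RobustExtensionExists Good n) (hE : E.card ≤ n)
    (hN : Chordless E B) (hD : (Demand.edge p₁ p₂ t₁ t₂).IsValid E B)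
    (hp : p₂ ∈ ({q₁, q₂} : Set V)) : HasExtension E L q₁ q₂ T (Demand.edge p₁ p₂ t₁ t₂).IsMet := by
  wlog h₂ : p₂ = q₁ generalizing q₁ q₂ T
  · exact (this I.swap (Set.pair_comm q₁ q₂ ▸ hp) (hp.resolve_left h₂)).of_swap
  subst h₂
  by_cases h₁ : p₁ = q₂
  · subst h₁
    obtain ⟨τ, hτ, h₁, h₂⟩ := I.robust.two t₁.swap t₂.swap
    refine I.hasExtension_of_mem H hτ fun φ hφ hφ' ↦ ?_
    rw [Demand.IsMet, hφ, hφ']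
    exact ⟨fun h ↦ h₁ (congrArg Prod.swap h), fun h ↦ h₂ (congrArg Prod.swap h)⟩
  · exact I.hasExtension_edge_of_snd_eq H hM hE hN hD (by simp [H.ne I.good hD.1.1, h₁])

lemma hasExtension_of_chordless (I : RobustInstance Good E B L q₁ q₂ T)
    (H : PlanarClass Good) (hM : RobustExtensionExists Good n) (hE : E.card ≤ n)
    (hN : Chordless E B) {D : Demand V} (hD : D.IsValid E B) :
    HasExtension E L q₁ q₂ T D.IsMet := by
  cases D with
  | vertex v c =>
    by_cases hv : v ∈ ({q₁, q₂} : Set V)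
    · rcases hv with rfl | rfl
      · obtain ⟨τ, hτ, hτc⟩ := I.robust.fst c
        exact I.hasExtension_of_mem H hτ fun φ hφ _ ↦ ne_of_eq_of_ne hφ hτc
      · obtain ⟨τ, hτ, hτc⟩ := I.robust.snd c
        exact I.hasExtension_of_mem H hτ fun φ _ hφ ↦ ne_of_eq_of_ne hφ hτc
    · exact I.hasExtension_vertex H hM hE hN hD hv
  | edge p₁ p₂ t₁ t₂ =>
    by_cases hp₂ : p₂ ∈ ({q₁, q₂} : Set V)
    · exact I.hasExtension_edge_of_right_mem H hM hE hN hD hp₂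
    by_cases hp₁ : p₁ ∈ ({q₁, q₂} : Set V)
    · exact (I.hasExtension_edge_of_right_mem H hM hE hN (t₁ := t₁.swap) (t₂ := t₂.swap)
        ⟨hD.1.symm, hD.2.2, hD.2.1⟩ hp₁).edge_comm
    exact I.hasExtension_edge_of_disjoint H hM hE hN hD hp₁ hp₂

end RobustInstance

theorem PlanarClass.robustExtensionExists (H : PlanarClass Good) (n : ℕ) :
    RobustExtensionExists Good n := by
  induction n with
  | zero => exact fun _ _ _ _ _ _ _ hE ↦ absurd hE (Nat.not_lt_zero _)
  | succ n hM =>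
    intro E B L q₁ q₂ T D hE I hD
    by_cases hN : Chordless E B
    · exact I.hasExtension_of_chordless H hM (Nat.le_of_lt_succ hE) hN hD
    · simp only [Chordless, not_forall, not_not] at hN
      obtain ⟨u, w, K, K', hu, hw, hs⟩ := hN
      exact I.hasExtension_of_chordSplit H hM (Nat.le_of_lt_succ hE) hs hu hw hD

/-! ### Two vertices with lists of size two -/

lemma isRobust_setOf_ne (hA : 2 ≤ A.card) (hC : 3 ≤ C.card) :
    IsRobust {τ | τ.1 ∈ A ∧ τ.2 ∈ C ∧ τ.1 ≠ τ.2} := by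
  have hpick (x y : ℕ) : ∃ e ∈ C, e ≠ x ∧ e ≠ y := by
    simpa using Finset.exists_mem_notMem_of_card_lt_card
      ((Finset.card_le_two (a := x) (b := y)).trans_lt hC)
  obtain ⟨a, ha, b, hb, hab⟩ := Finset.one_lt_card.1 hA
  refine ⟨fun τ hτ ↦ hτ.2.2, fun x ↦ ?_, fun x ↦ ?_, fun x y ↦ ?_⟩
  · obtain ⟨b, hb, hbx⟩ := Finset.exists_mem_ne hA x
    obtain ⟨c, hc, hcb, -⟩ := hpick b b
    exact ⟨(b, c), ⟨hb, hc, hcb.symm⟩, hbx⟩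
  · obtain ⟨c, hc, hca, hcx⟩ := hpick a x
    exact ⟨(a, c), ⟨ha, hc, hca.symm⟩, hcx⟩
  · obtain ⟨c, hc, hca, -⟩ := hpick a a
    obtain ⟨d, hd, hda, hdc⟩ := hpick a c
    obtain ⟨e, he, heb, -⟩ := hpick b b
    by_contra! hcon
    have h₁ := hcon (a, c) ⟨ha, hc, hca.symm⟩
    have h₂ := hcon (a, d) ⟨ha, hd, hda.symm⟩
    have h₃ := hcon (b, e) ⟨hb, he, heb.symm⟩
    clear hcon
    obtain ⟨x₁, x₂⟩ := x
    obtain ⟨y₁, y₂⟩ := y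
    simp only [ne_eq, Prod.mk.injEq] at h₁ h₂ h₃
    grind

lemma PlanarClass.exists_coloring_of_adj (H : PlanarClass Good) (hG : Good E B) (hv : v₁ ≠ v₂)
    (hq : BoundaryAdj E B v₂ v) (h₁ : v₁ ∈ B)
    (hL : HasThomassenLists B L {v₁, v₂}) (hc₁ : 2 ≤ (L v₁).card) (hc₂ : 2 ≤ (L v₂).card) :
    ∃ φ, IsColoringOff E ∅ L φ := by
  by_cases hvv₁ : v = v₁
  · subst hvv₁
    obtain ⟨a, ha⟩ := Finset.card_pos.1 (Nat.zero_lt_two.trans_le hc₁)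
    obtain ⟨b, hb, hba⟩ := Finset.exists_mem_ne hc₂ a
    obtain ⟨φ, hφ, hφa, hφb⟩ := H.exists_edge_extend hG hq.symm.1 h₁ hq.2.1 (X := {v, v₂})
      (Or.inl rfl) (Or.inr rfl) hba.symm hL
    refine ⟨φ, hφ.ne, fun {w} _ ↦ ?_⟩
    by_cases hw : w ∈ ({v, v₂} : Set V)
    · rcases hw with rfl | rfl
      exacts [hφa ▸ ha, hφb ▸ hb]
    · exact hφ.mem hw
  have hne := H.ne hG hq.1
  obtain ⟨φ, hφ, ⟨hφ₂, hφv, -⟩, -⟩ :=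
    (H.robustExtensionExists (E.card + 1)).hasExtension_mem (Nat.lt_succ_self _) hG hq
      (isRobust_setOf_ne hc₂ (hL v (by simp [hvv₁, hne.symm])).1)
      (hL.mono (by grind)) h₁ (by simp [hv, Ne.symm hvv₁]) subset_rfl hc₁
  refine ⟨φ, hφ.ne, fun {w} _ ↦ ?_⟩
  by_cases hw : w ∈ ({v₂, v} : Set V)
  · rcases hw with rfl | rfl
    exacts [hφ₂, hφv]
  · exact hφ.mem hw

theorem PlanarClass.exists_coloring (H : PlanarClass Good) (hG : Good E B) (hv : v₁ ≠ v₂)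
    (h₁ : v₁ ∈ B) (h₂ : v₂ ∈ B)
    (hL : HasThomassenLists B L {v₁, v₂}) (hc₁ : 2 ≤ (L v₁).card) (hc₂ : 2 ≤ (L v₂).card) :
    ∃ φ, IsColoringOff E ∅ L φ := by
  by_cases hq : ∃ q, BoundaryAdj E B v₂ q
  · obtain ⟨q, hq⟩ := hq
    exact H.exists_coloring_of_adj hG hv hq h₁ hL hc₁ hc₂
  push Not at hq
  obtain ⟨a, ha⟩ := Finset.card_pos.1 (Nat.zero_lt_two.trans_le hc₁)
  obtain ⟨c, hc⟩ := Finset.card_pos.1 (Nat.zero_lt_two.trans_le hc₂)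
  obtain ⟨φ, hφ, hφa⟩ := H.exists_vertex_extend
    (H.deleteEdges hG (D := [v₂]) (by simpa using h₂)) (Or.inl h₁) (X := {v₁} ∪ {v₂})
    (Or.inl rfl) a (hL.prune (E := E) (R := {c}) (D := [v₂]) (by simp))
  obtain ⟨ψ, hψ, -, hψφ⟩ := hφ.extend_vertex (Set.singleton_subset_iff.2 h₁) (H.noloop hG _)
    (Finset.mem_singleton_self c) (fun _ ↦ hc) fun b hb h ↦ absurd ⟨h, h₂, hb⟩ (hq b)
  refine ⟨ψ, hψ.ne, fun {w} _ ↦ ?_⟩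
  by_cases hw : w = v₁
  · rw [hw, hψφ v₁ hv, hφa]
    exact ha
  · exact hψ.mem hw

end RobustExtension

end ListColoring

/-! ### Logarithms along paths in the complex plane -/

section LogChange

variable {a b c d p q x y z : ℂ}

lemma exists_continuous_exp_eq {X : Type*} [TopologicalSpace X] [ContractibleSpace X]
    [LocallyPathConnectedSpace X] {g : X → ℂ} (hg : Continuous g) (h0 : ∀ x, g x ≠ 0) :
    ∃ f : X → ℂ, Continuous f ∧ ∀ x, Complex.exp (f x) = g x := by
  have : ContractibleSpace (univ : Set X) := (Homeomorph.Set.univ X).contractibleSpace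
  have hX : IsSimplyConnected (univ : Set X) :=
    (inferInstance : SimplyConnectedSpace (univ : Set X))
  obtain ⟨f, hf, hfg⟩ := Complex.exists_continuousOn_eqOn_exp_comp hX isOpen_univ
    hg.continuousOn (by rintro ⟨x, -, hx⟩; exact h0 x hx)
  exact ⟨f, continuousOn_univ.1 hf, fun x ↦ hfg (mem_univ x)⟩

lemma sub_eq_sub_of_exp_eq_exp {X : Type*} [TopologicalSpace X] [PreconnectedSpace X]
    {f g : X → ℂ} (hf : Continuous f) (hg : Continuous g)
    (h : ∀ x, Complex.exp (f x) = Complex.exp (g x)) (s t : X) : f s - f t = g s - g t := by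
  choose n hn using fun x ↦ Complex.exp_eq_exp_iff_exists_int.1 (h x)
  have hre : (fun x ↦ ((n x : ℤ) : ℝ)) =
      fun x ↦ ((f x - g x) / (2 * Real.pi * Complex.I)).re := by
    funext x
    rw [hn x, add_sub_cancel_left, mul_div_cancel_right₀ _ Complex.two_pi_I_ne_zero,
      Complex.intCast_re]
  have hn_cont : Continuous n := by
    refine Int.isClosedEmbedding_coe_real.isEmbedding.continuous_iff.2 ?_
    change Continuous fun x ↦ ((n x : ℤ) : ℝ)
    rw [hre]
    fun_prop
  have hst := isPreconnected_univ.constant hn_cont.continuousOn (mem_univ s) (mem_univ t)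
  rw [hn s, hn t, hst]
  ring

open scoped Classical in
/-- The change of a continuous logarithm of `γ - p` along the path `γ`; zero if `p` is on `γ`. -/
noncomputable def logChange (γ : Path a b) (p : ℂ) : ℂ :=
  if h : ∃ f : ℝ → ℂ, Continuous f ∧ ∀ t, Complex.exp (f t) = γ.extend t - p then
    h.choose 1 - h.choose 0
  else 0

lemma logChange_eq {γ : Path a b} {f : ℝ → ℂ} (hf : Continuous f)
    (h : ∀ t, Complex.exp (f t) = γ.extend t - p) : logChange γ p = f 1 - f 0 := by
  have hex : ∃ f : ℝ → ℂ, Continuous f ∧ ∀ t, Complex.exp (f t) = γ.extend t - p := ⟨f, hf, h⟩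
  rw [logChange, dif_pos hex]
  exact sub_eq_sub_of_exp_eq_exp hex.choose_spec.1 hf
    (fun t ↦ (hex.choose_spec.2 t).trans (h t).symm) 1 0

lemma extend_mem_range {X : Type*} [TopologicalSpace X] {a b : X} (γ : Path a b) (t : ℝ) :
    γ.extend t ∈ range γ :=
  γ.extend_range ▸ mem_range_self t

lemma exists_log_path_sub {γ : Path a b} (hp : p ∉ range γ) :
    ∃ f : ℝ → ℂ, Continuous f ∧ ∀ t, Complex.exp (f t) = γ.extend t - p :=
  exists_continuous_exp_eq (by fun_prop)
    fun t ↦ sub_ne_zero.2 fun h ↦ hp (h ▸ extend_mem_range γ t)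

lemma exp_logChange {γ : Path a b} (hp : p ∉ range γ) :
    Complex.exp (logChange γ p) = (b - p) / (a - p) := by
  obtain ⟨f, hf, hfγ⟩ := exists_log_path_sub hp
  rw [logChange_eq hf hfγ, Complex.exp_sub, hfγ, hfγ, γ.extend_one, γ.extend_zero]

-- Both sides are the change of a logarithm of `γ s - η t` between opposite corners of the square.
lemma logChange_add_logChange {γ : Path a b} {η : Path c d}
    (h : Disjoint (range γ) (range η)) :
    logChange γ c + logChange η b = logChange η a + logChange γ d := by
  obtain ⟨f, hf, hfγη⟩ := exists_continuous_exp_eq (X := ℝ × ℝ)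
    (g := fun t ↦ γ.extend t.1 - η.extend t.2) (by fun_prop)
    (fun t ↦ sub_ne_zero.2 (h.ne_of_mem (extend_mem_range γ _) (extend_mem_range η _)))
  have hη (s : ℝ) : logChange η (γ.extend s) = f (s, 1) - f (s, 0) := by
    rw [logChange_eq (f := fun t ↦ f (s, t) + Real.pi * Complex.I) (by fun_prop) fun t ↦ by
      rw [Complex.exp_add, Complex.exp_pi_mul_I, hfγη]; ring]
    ring
  have hγ (t : ℝ) : logChange γ (η.extend t) = f (1, t) - f (0, t) :=
    logChange_eq (f := fun s ↦ f (s, t)) (by fun_prop) fun s ↦ hfγη (s, t)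
  have h0 := hη 0
  have h1 := hη 1
  have h2 := hγ 0
  have h3 := hγ 1
  rw [Path.extend_zero] at h0 h2
  rw [Path.extend_one] at h1 h3
  rw [h0, h1, h2, h3]
  ring

lemma exists_log_div_sub_of_mem_ball {ε : ℝ} {K : Set ℂ} (hK : Disjoint (Metric.ball p ε) K)
    (hq : q ∈ Metric.ball p ε) :
    ∃ f : ℂ → ℂ, ContinuousOn f K ∧ ∀ w ∈ K, Complex.exp (f w) * (w - q) = w - p := by
  have hne {w o : ℂ} (hw : w ∈ K) (ho : o ∈ Metric.ball p ε) : w - o ≠ 0 :=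
    sub_ne_zero.2 (hK.ne_of_mem ho hw).symm
  have hp : p ∈ Metric.ball p ε := Metric.mem_ball_self (dist_nonneg.trans_lt hq)
  refine ⟨fun w ↦ -Complex.log ((w - q) / (w - p)), ?_, fun w hw ↦ ?_⟩
  · refine ((ContinuousOn.div (by fun_prop) (by fun_prop) fun w hw ↦ hne hw hp).clog ?_).neg
    intro w hw
    have hdist : ε ≤ ‖w - p‖ := not_lt.1 fun hlt ↦
      hK.notMem_of_mem_right hw (by rwa [Metric.mem_ball, dist_eq_norm])
    have hqp : ‖p - q‖ < ε := by rwa [← dist_eq_norm, dist_comm]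
    change (w - q) / (w - p) ∈ _
    rw [show (w - q) / (w - p) = 1 + (p - q) / (w - p) by field_simp [hne hw hp]; ring]
    apply Complex.mem_slitPlane_of_norm_lt_one
    rw [norm_div, div_lt_one (norm_pos_iff.2 (hne hw hp))]
    exact hqp.trans_le hdist
  · rw [Complex.exp_neg, Complex.exp_log (div_ne_zero (hne hw hq) (hne hw hp)), inv_div,
      div_mul_cancel₀ _ (hne hw hq)]

lemma exists_log_div_sub {K C : Set ℂ} (hK : IsClosed K) (hC : IsPreconnected C)
    (hCK : Disjoint C K) (hp : p ∈ C) (hq : q ∈ C) :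
    ∃ f : ℂ → ℂ, ContinuousOn f K ∧ ∀ w ∈ K, Complex.exp (f w) * (w - q) = w - p := by
  refine hC.induction₂ (fun p q ↦ ∃ f : ℂ → ℂ, ContinuousOn f K ∧
    ∀ w ∈ K, Complex.exp (f w) * (w - q) = w - p) (fun p hp ↦ ?_) ?_ ?_ hp hq
  · obtain ⟨ε, hε, hb⟩ := Metric.isOpen_iff.1 hK.isOpen_compl p (hCK.notMem_of_mem_left hp)
    filter_upwards [mem_nhdsWithin_of_mem_nhds (Metric.ball_mem_nhds p hε)] with q hq
    exact exists_log_div_sub_of_mem_ball (Set.subset_compl_iff_disjoint_right.1 hb) hq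
  · rintro p q o - - - ⟨f, hf, hfK⟩ ⟨g, hg, hgK⟩
    exact ⟨f + g, hf.add hg, fun w hw ↦ by
      rw [Pi.add_apply, Complex.exp_add, mul_assoc, hgK w hw, hfK w hw]⟩
  · rintro p q - - ⟨f, hf, hfK⟩
    exact ⟨-f, hf.neg, fun w hw ↦ by
      rw [← hfK w hw, ← mul_assoc, Pi.neg_apply, ← Complex.exp_add, neg_add_cancel,
        Complex.exp_zero, one_mul]⟩

lemma logChange_sub_logChange {γ : Path a b} {K : Set ℂ} {f : ℂ → ℂ} (hγ : range γ ⊆ K)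
    (hq : q ∉ K) (hf : ContinuousOn f K)
    (h : ∀ w ∈ K, Complex.exp (f w) * (w - q) = w - p) :
    logChange γ p - logChange γ q = f b - f a := by
  have hmem (t : ℝ) : γ.extend t ∈ K := hγ (extend_mem_range γ t)
  obtain ⟨g, hg, hgγ⟩ := exists_log_path_sub (γ := γ) fun hqγ ↦ hq (hγ hqγ)
  have hfγ : Continuous fun t ↦ f (γ.extend t) := hf.comp_continuous γ.continuous_extend hmem
  rw [logChange_eq hg hgγ, logChange_eq (hfγ.add hg) fun t ↦ by
    rw [Pi.add_apply, Complex.exp_add, hgγ, h _ (hmem t)]]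
  simp only [Pi.add_apply, Path.extend_zero, Path.extend_one]
  ring

/-! ### No tripod has its center and feet on a common face -/

lemma logChange_sub_add_logChange_sub {e : Path x y} {r : Path y z} {t : Path x z} {C : Set ℂ}
    (hC : IsPreconnected C) (hd : Disjoint C (range e ∪ range r ∪ range t)) (hp : p ∈ C)
    (hq : q ∈ C) :
    logChange e p - logChange e q + (logChange r p - logChange r q) =
      logChange t p - logChange t q := by
  have hK : IsClosed (range e ∪ range r ∪ range t) :=
    (((isCompact_range e.continuous).union (isCompact_range r.continuous)).union
      (isCompact_range t.continuous)).isClosed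
  have hqK := hd.notMem_of_mem_left hq
  obtain ⟨f, hf, hfK⟩ := exists_log_div_sub hK hC hd hp hq
  rw [logChange_sub_logChange (subset_union_left.trans subset_union_left) hqK hf hfK,
    logChange_sub_logChange (subset_union_right.trans subset_union_left) hqK hf hfK,
    logChange_sub_logChange subset_union_right hqK hf hfK]
  ring

lemma tripod_logChange_eq {y : Fin 3 → ℂ} {e : ∀ i, Path x (y i)} {r : ∀ i, Path (y i) z}
    {t : Path x z} {C : Fin 3 → Set ℂ} (her : ∀ i j, i ≠ j → Disjoint (range (e i)) (range (r j)))
    (hC : ∀ i, IsPreconnected (C i)) (hy : ∀ i j, i ≠ j → y j ∈ C i)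
    (hd : ∀ i, Disjoint (C i) (range (e i) ∪ range (r i) ∪ range t)) :
    logChange (r 1) x + logChange (e 1) z =
      logChange t (y 1) - logChange t (y 2) + (logChange (e 1) (y 2) + logChange (r 1) (y 2)) := by
  have hsq (i j : Fin 3) (hij : i ≠ j) := logChange_add_logChange (her i j hij)
  have hth (i j k : Fin 3) (hij : i ≠ j) (hik : i ≠ k) :=
    logChange_sub_add_logChange_sub (hC i) (hd i) (hy i j hij) (hy i k hik)
  linear_combination (1 / 2 : ℂ) * (hth 0 1 2 (by decide) (by decide)
    + hth 1 0 2 (by decide) (by decide) - hth 2 0 1 (by decide) (by decide)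
    - hsq 0 1 (by decide) - hsq 1 0 (by decide) + hsq 0 2 (by decide) + hsq 2 0 (by decide)
    - hsq 1 2 (by decide) - hsq 2 1 (by decide))

-- In the exponential of `tripod_logChange_eq`, the two sides have opposite signs.
theorem not_tripod_of_paths {y : Fin 3 → ℂ} (e : ∀ i, Path x (y i)) (r : ∀ i, Path (y i) z)
    (t : Path x z) {C : Fin 3 → Set ℂ} (hC : ∀ i, IsPreconnected (C i))
    (hy : ∀ i j, i ≠ j → y j ∈ C i)
    (hd : ∀ i, Disjoint (C i) (range (e i) ∪ range (r i) ∪ range t)) :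
    ¬∀ i j, i ≠ j → Disjoint (range (e i)) (range (r j)) := by
  intro her
  have hys {i j : Fin 3} (hij : i ≠ j) {s : Set ℂ}
      (hs : s ⊆ range (e i) ∪ range (r i) ∪ range t) : y j ∉ s :=
    fun hj ↦ (hd i).notMem_of_mem_left (hy i j hij) (hs hj)
  have hy₁t : y 1 ∉ range t := hys (i := 0) (by decide) subset_union_right
  have hy₂t : y 2 ∉ range t := hys (i := 0) (by decide) subset_union_right
  have hy₂e : y 2 ∉ range (e 1) :=
    hys (by decide) (subset_union_left.trans subset_union_left)
  have hy₂r : y 2 ∉ range (r 1) :=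
    hys (by decide) (subset_union_right.trans subset_union_left)
  have hx : x ∉ range (r 1) :=
    (her 0 1 (by decide)).notMem_of_mem_left ⟨0, (e 0).source⟩
  have hz : z ∉ range (e 1) :=
    (her 1 0 (by decide)).notMem_of_mem_right ⟨1, (r 0).target⟩
  have hne {a b p : ℂ} {γ : Path a b} (hp : p ∉ range γ) : a - p ≠ 0 ∧ b - p ≠ 0 :=
    ⟨sub_ne_zero.2 fun h ↦ hp ⟨0, γ.source.trans h⟩,
      sub_ne_zero.2 fun h ↦ hp ⟨1, γ.target.trans h⟩⟩
  have hexp := congrArg Complex.exp (tripod_logChange_eq her hC hy hd)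
  simp only [Complex.exp_add, Complex.exp_sub, exp_logChange, hx, hz, hy₁t, hy₂t, hy₂e, hy₂r,
    not_false_eq_true] at hexp
  obtain ⟨h₁, h₂⟩ := hne hx
  obtain ⟨h₃, -⟩ := hne hz
  obtain ⟨h₅, h₆⟩ := hne hy₁t
  obtain ⟨-, h₈⟩ := hne hy₂t
  obtain ⟨h₉, h₁₀⟩ := hne hy₂e
  field_simp at hexp
  have h0 : 2 * ((z - x) * (z - y 1) * (x - y 1)) = 0 := by linear_combination -hexp
  simp [h₂, h₅, h₆] at h0

theorem not_tripod_of_joinedIn {x z : ℝ × ℝ} {y : Fin 3 → ℝ × ℝ} {A A' R : Fin 3 → Set (ℝ × ℝ)}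
    {T : Set (ℝ × ℝ)} (hA : ∀ i, JoinedIn (A i) x (y i)) (hR : ∀ i, JoinedIn (R i) (y i) z)
    (hT : JoinedIn T x z) (hA' : ∀ i, JoinedIn (A' i) (y (i + 1)) (y (i + 2)))
    (hAA' : ∀ i, Disjoint (A' i) (A i)) (hAR : ∀ i, Disjoint (A' i) (R i))
    (hAT : ∀ i, Disjoint (A' i) T) :
    ¬∀ i j, i ≠ j → Disjoint (A i) (R j) := by
  intro hdisj
  let ι := Complex.equivRealProdCLM.symm
  let toC {S : Set (ℝ × ℝ)} {a b : ℝ × ℝ} (h : JoinedIn S a b) : Path (ι a) (ι b) :=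
    h.somePath.map ι.continuous
  have hrange {S a b} (h : JoinedIn S a b) : range (toC h) ⊆ ι '' S := by
    rintro _ ⟨t, rfl⟩
    exact mem_image_of_mem ι (h.somePath_mem t)
  have hι {S S'} {a b c d : ℝ × ℝ} (hS : JoinedIn S a b) (hS' : JoinedIn S' c d)
      (h : Disjoint S S') : Disjoint (range (toC hS)) (range (toC hS')) :=
    (disjoint_image_of_injective ι.injective h).mono (hrange hS) (hrange hS')
  refine not_tripod_of_paths (fun i ↦ toC (hA i)) (fun i ↦ toC (hR i)) (toC hT)
    (C := fun i ↦ range (toC (hA' i))) (fun i ↦ isPreconnected_range (toC (hA' i)).continuous)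
    (fun i j hij ↦ ?_) (fun i ↦ ?_) fun i j hij ↦ hι _ _ (hdisj i j hij)
  · obtain rfl | rfl : j = i + 1 ∨ j = i + 2 := by decide +revert
    exacts [⟨0, (toC (hA' i)).source⟩, ⟨1, (toC (hA' i)).target⟩]
  · exact ((hι _ _ (hAA' i)).union_right (hι _ _ (hAR i))).union_right (hι _ _ (hAT i))

end LogChange

/-! ### Plane graphs form a planar class -/

lemma isConnected_compl_closedBall {X : Type*} [NormedAddCommGroup X] [NormedSpace ℝ X]
    (h : 1 < Module.rank ℝ X) {R : ℝ} (hR : 0 ≤ R) :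
    IsConnected (Metric.closedBall (0 : X) R)ᶜ := by
  have himage : (fun p : ℝ × X ↦ p.1 • p.2) '' (Ioi R ×ˢ Metric.sphere 0 1) =
      (Metric.closedBall 0 R)ᶜ := by
    ext q
    simp only [mem_image, mem_prod, mem_Ioi, mem_sphere_zero_iff_norm, Prod.exists, mem_compl_iff,
      mem_closedBall_zero_iff, not_le]
    constructor
    · rintro ⟨r, p, ⟨hr, hp⟩, rfl⟩
      rwa [norm_smul, hp, mul_one, Real.norm_of_nonneg (hR.trans hr.le)]
    · intro hq
      have hq0 : ‖q‖ ≠ 0 := (hR.trans_lt hq).ne'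
      exact ⟨‖q‖, ‖q‖⁻¹ • q, ⟨hq, by rw [norm_smul, norm_inv, norm_norm, inv_mul_cancel₀ hq0]⟩,
        smul_inv_smul₀ hq0 q⟩
  rw [← himage]
  exact (isConnected_Ioi.prod (isConnected_sphere h 0 zero_le_one)).image _ (by fun_prop)

lemma joinedIn_union_of_mem_closure {X : Type*} [NormedAddCommGroup X] [NormedSpace ℝ X]
    {Z U : Set X} {w z : X} (hZo : IsOpen Z) (hZc : IsConnected Z) (hU : IsOpen U) (hwU : w ∈ U)
    (hwZ : w ∈ closure Z) (hz : z ∈ Z) : JoinedIn (Z ∪ U) w z := by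
  obtain ⟨ε, hε, hb⟩ := Metric.isOpen_iff.1 hU w hwU
  obtain ⟨q, hq, hd⟩ := Metric.mem_closure_iff.1 hwZ ε hε
  have hwq : JoinedIn (Metric.ball w ε) w q :=
    ((convex_ball w ε).isPathConnected ⟨w, Metric.mem_ball_self hε⟩).joinedIn _
      (Metric.mem_ball_self hε) _ (by rwa [Metric.mem_ball, dist_comm])
  have hqz : JoinedIn Z q z := (hZo.isConnected_iff_isPathConnected.1 hZc).joinedIn q hq z hz
  exact (hwq.mono (hb.trans subset_union_right)).trans (hqz.mono subset_union_left)

lemma subset_connectedComponentIn_of_mem_closure {X : Type*} [TopologicalSpace X] {I F : Set X}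
    {x : X} (hI : IsPreconnected I) (hx : x ∈ closure I) (hIF : I ⊆ F) (hxF : x ∈ F) :
    I ⊆ connectedComponentIn F x :=
  (subset_insert x I).trans <|
    (hI.subset_closure (subset_insert x I)
      (insert_subset hx subset_closure)).subset_connectedComponentIn (mem_insert x I)
      (insert_subset hxF hIF)

namespace PlaneGraph

open scoped Classical

variable {V : Type u} {G : PlaneGraph V} {E E' : Finset (Sym2 V)} {B S : Set V} {u v w x : V}
  {p : ℝ × ℝ}

lemma right_mem_verts (h : G.Adj u v) : v ∈ G.verts :=
  G.adj_mem v u (G.adj_symm u v h)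

/-- Every element of `E` is an edge of `G`. -/
def IsEdgeSet (G : PlaneGraph V) (E : Finset (Sym2 V)) : Prop :=
  ∀ ⦃u v⦄, s(u, v) ∈ E → G.Adj u v

lemma IsEdgeSet.mono (hE : G.IsEdgeSet E) (h : E' ⊆ E) : G.IsEdgeSet E' :=
  fun _ _ huv ↦ hE (h huv)

/-- The union of the arcs of the edges in `E`. -/
def edgeImage (G : PlaneGraph V) (E : Finset (Sym2 V)) : Set (ℝ × ℝ) :=
  ⋃ e ∈ E, G.arc e

lemma mem_edgeImage : p ∈ G.edgeImage E ↔ ∃ u v, s(u, v) ∈ E ∧ p ∈ G.arc s(u, v) := by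
  simp [edgeImage, Sym2.exists]

lemma edgeImage_mono (h : E' ⊆ E) : G.edgeImage E' ⊆ G.edgeImage E :=
  biUnion_subset_biUnion_left h

lemma isCompact_edgeImage (hE : G.IsEdgeSet E) : IsCompact (G.edgeImage E) := by
  refine Finset.isCompact_biUnion E fun e he ↦ ?_
  induction e with
  | h u v =>
    obtain ⟨f, hf, -, himage, -, -⟩ := G.arc_arc u v (hE he)
    exact himage ▸ isCompact_Icc.image_of_continuousOn hf

lemma isOpen_compl_edgeImage (hE : G.IsEdgeSet E) : IsOpen (G.edgeImage E)ᶜ :=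
  (isCompact_edgeImage hE).isClosed.isOpen_compl

lemma pos_notMem_edgeImage (hE : G.IsEdgeSet E) (hw : w ∈ G.verts) (h : ∀ e ∈ E, w ∉ e) :
    G.pos w ∉ G.edgeImage E := by
  intro hp
  obtain ⟨u, v, huv, hp⟩ := mem_edgeImage.1 hp
  exact h _ huv (Sym2.mem_iff.2 (G.arc_avoid u v (hE huv) w hw hp))

lemma exists_end_of_mem_arc_of_mem_edgeImage (hE : G.IsEdgeSet E) (huv : G.Adj u v)
    (hn : s(u, v) ∉ E) (hp : p ∈ G.arc s(u, v)) (hpE : p ∈ G.edgeImage E) :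
    ∃ w ∈ s(u, v), (∃ e ∈ E, w ∈ e) ∧ G.pos w = p := by
  obtain ⟨a, b, hab, hp'⟩ := mem_edgeImage.1 hpE
  obtain ⟨w, ⟨hw, hw'⟩, rfl⟩ :=
    G.arc_meet u v a b huv (hE hab) (fun h ↦ hn (h ▸ hab)) ⟨hp, hp'⟩
  exact ⟨w, Sym2.mem_iff.2 hw, ⟨_, hab, Sym2.mem_iff.2 hw'⟩, rfl⟩

lemma exists_isConnected_subset_compl_edgeImage (hE : G.IsEdgeSet E) (huv : G.Adj u v)
    (hn : s(u, v) ∉ E) :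
    ∃ I : Set (ℝ × ℝ), IsConnected I ∧ I ⊆ (G.edgeImage E)ᶜ ∧ G.pos u ∈ closure I ∧
      G.pos v ∈ closure I := by
  obtain ⟨f, hf, hinj, himage, hfu, hfv⟩ := G.arc_arc u v huv
  have hclosure {t : ℝ} (ht : t ∈ Icc (0 : ℝ) 1) : f t ∈ closure (f '' Ioo 0 1) := by
    rw [← closure_Ioo zero_ne_one] at hf ht
    exact hf.image_closure (mem_image_of_mem f ht)
  refine ⟨f '' Ioo 0 1, (isConnected_Ioo zero_lt_one).image f (hf.mono Ioo_subset_Icc_self), ?_,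
    hfu ▸ hclosure (by simp), hfv ▸ hclosure (by simp)⟩
  rintro _ ⟨t, ht, rfl⟩ hft
  have htI := Ioo_subset_Icc_self ht
  obtain ⟨w, hw, -, hwt⟩ := exists_end_of_mem_arc_of_mem_edgeImage hE huv hn
    (himage ▸ mem_image_of_mem f htI) hft
  rcases Sym2.mem_iff.1 hw with rfl | rfl
  · exact ht.1.ne (hinj (by simp) htI (hfu.trans hwt))
  · exact ht.2.ne' (hinj (by simp) htI (hfv.trans hwt))

/-- `E` consists of edges of `G`, and the vertices in `B` lie in the closure of a connected set
avoiding these edges, that is, on a common face of the drawing of `E`. -/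
structure OnCommonFace (G : PlaneGraph V) (E : Finset (Sym2 V)) (B : Set V) : Prop where
  isEdgeSet : G.IsEdgeSet E
  subset_verts : B ⊆ G.verts
  face : ∃ Z, IsConnected Z ∧ Z ⊆ (G.edgeImage E)ᶜ ∧ ∀ b ∈ B, G.pos b ∈ closure Z

namespace OnCommonFace

lemma exists_isOpen (h : G.OnCommonFace E B) :
    ∃ Z, IsOpen Z ∧ IsConnected Z ∧ Z ⊆ (G.edgeImage E)ᶜ ∧ ∀ b ∈ B, G.pos b ∈ closure Z := by
  obtain ⟨Z, hZc, hZE, hZB⟩ := h.face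
  obtain ⟨z, hz⟩ := hZc.nonempty
  refine ⟨connectedComponentIn (G.edgeImage E)ᶜ z,
    (isOpen_compl_edgeImage h.isEdgeSet).connectedComponentIn,
    isConnected_connectedComponentIn_iff.2 (hZE hz), connectedComponentIn_subset _ _,
    fun b hb ↦ closure_mono ?_ (hZB b hb)⟩
  exact hZc.isPreconnected.subset_connectedComponentIn hz hZE

lemma mono (h : G.OnCommonFace E B) (hE : E' ⊆ E) : G.OnCommonFace E' B := by
  obtain ⟨Z, hZc, hZE, hZB⟩ := h.face
  exact ⟨h.isEdgeSet.mono hE, h.subset_verts, Z, hZc,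
    hZE.trans (compl_subset_compl.2 (edgeImage_mono hE)), hZB⟩

lemma delete (h : G.OnCommonFace E B) (hx : x ∈ B) :
    G.OnCommonFace (E.filter (x ∉ ·)) (B ∪ {n | s(x, n) ∈ E}) := by
  have hsub : E.filter (x ∉ ·) ⊆ E := Finset.filter_subset _ _
  have hE := h.isEdgeSet.mono hsub
  obtain ⟨Z, hZc, hZE, hZB⟩ := (h.mono hsub).face
  have hxE : G.pos x ∈ (G.edgeImage (E.filter (x ∉ ·)))ᶜ :=
    pos_notMem_edgeImage hE (h.subset_verts hx) fun e he ↦ (Finset.mem_filter.1 he).2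
  refine ⟨hE, ?_, connectedComponentIn (G.edgeImage (E.filter (x ∉ ·)))ᶜ (G.pos x),
    isConnected_connectedComponentIn_iff.2 hxE, connectedComponentIn_subset _ _, ?_⟩
  · exact union_subset h.subset_verts fun n hn ↦ right_mem_verts (h.isEdgeSet hn)
  · rintro n (hn | hn)
    · exact closure_mono (subset_connectedComponentIn_of_mem_closure hZc.isPreconnected
        (hZB x hx) hZE hxE) (hZB n hn)
    · obtain ⟨I, hIc, hIE, hIx, hIn⟩ :=
        exists_isConnected_subset_compl_edgeImage hE (h.isEdgeSet hn) (by simp)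
      exact closure_mono (subset_connectedComponentIn_of_mem_closure hIc.isPreconnected hIx hIE
        hxE) hIn

lemma edge (h : G.OnCommonFace E B) (huv : s(u, v) ∈ E) :
    G.OnCommonFace (E.erase s(u, v)) {u, v} := by
  have hadj := h.isEdgeSet huv
  have hE := h.isEdgeSet.mono (Finset.erase_subset s(u, v) E)
  obtain ⟨I, hIc, hIE, hIu, hIv⟩ :=
    exists_isConnected_subset_compl_edgeImage hE hadj (Finset.notMem_erase _ _)
  refine ⟨hE, ?_, I, hIc, hIE, ?_⟩
  · rintro b (rfl | rfl)
    exacts [G.adj_mem _ _ hadj, right_mem_verts hadj]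
  · rintro b (rfl | rfl)
    exacts [hIu, hIv]

end OnCommonFace

/-- The edges of `E` with both ends in `S`. -/
noncomputable def edgesWithin (E : Finset (Sym2 V)) (S : Set V) : Finset (Sym2 V) :=
  E.filter fun e ↦ ∀ x ∈ e, x ∈ S

lemma edgesWithin_subset : edgesWithin E S ⊆ E :=
  Finset.filter_subset _ _

lemma edgesWithin_subset_filter_notMem (hw : w ∉ S) : edgesWithin E S ⊆ E.filter (w ∉ ·) :=
  Finset.monotone_filter_right E fun _ _ he hwe ↦ hw (he w hwe)

lemma disjoint_edgeImage_edgesWithin_compl (hE : G.IsEdgeSet E) (S : Set V) :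
    Disjoint (G.edgeImage (edgesWithin E Sᶜ)) (G.edgeImage (edgesWithin E S)) := by
  refine disjoint_left.2 fun p hp hpS ↦ ?_
  have hmem {e T w} (he : e ∈ edgesWithin E T) (hw : w ∈ e) : w ∈ T :=
    (Finset.mem_filter.1 he).2 w hw
  obtain ⟨u, v, huv, hp⟩ := mem_edgeImage.1 hp
  have hn : s(u, v) ∉ edgesWithin E S := fun h ↦
    hmem huv (Sym2.mem_mk_left u v) (hmem h (Sym2.mem_mk_left u v))
  obtain ⟨w, hw, ⟨e, he, hwe⟩, -⟩ := exists_end_of_mem_arc_of_mem_edgeImage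
    (hE.mono edgesWithin_subset) (hE (edgesWithin_subset huv)) hn hp hpS
  exact hmem huv hw (hmem he hwe)

lemma disjoint_edgeImage_edgesWithin_union {Z : Set (ℝ × ℝ)} (hZ : Z ⊆ (G.edgeImage E)ᶜ)
    (hw : w ∉ S) :
    Disjoint (G.edgeImage (edgesWithin E S)) (Z ∪ (G.edgeImage (E.filter (w ∉ ·)))ᶜ) := by
  refine Disjoint.union_right ?_ ?_
  · exact subset_compl_iff_disjoint_left.1
      (hZ.trans (compl_subset_compl.2 (edgeImage_mono edgesWithin_subset)))
  · exact disjoint_compl_right_iff_subset.2 (edgeImage_mono (edgesWithin_subset_filter_notMem hw))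

lemma joinedIn_arc (h : G.Adj u v) : JoinedIn (G.arc s(u, v)) (G.pos u) (G.pos v) := by
  obtain ⟨f, hf, -, himage, hu, hv⟩ := G.arc_arc u v h
  rw [← himage, ← hu, ← hv]
  exact (((convex_Icc (0 : ℝ) 1).isPathConnected (nonempty_Icc.2 zero_le_one)).image'
    hf).joinedIn _ (mem_image_of_mem f (by simp)) _ (mem_image_of_mem f (by simp))

lemma joinedIn_of_reachIn (hE : G.IsEdgeSet E) (h : ReachIn E S u v) (huv : u ≠ v) :
    JoinedIn (G.edgeImage (edgesWithin E S)) (G.pos u) (G.pos v) := by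
  induction h with
  | refl => exact absurd rfl huv
  | @tail b c _ hbc ih =>
    obtain ⟨hbcE, hb, hc⟩ := hbc
    have hmem : s(b, c) ∈ edgesWithin E S := by simp [edgesWithin, hbcE, hb, hc]
    have hjoined := (joinedIn_arc (hE hbcE)).mono (subset_biUnion_of_mem hmem)
    by_cases hub : u = b
    · exact hub ▸ hjoined
    · exact (ih hub).trans hjoined

lemma OnCommonFace.not_isTripod {y : Fin 3 → V} {S : Fin 3 → Set V} (h : G.OnCommonFace E B)
    (hx : x ∈ B) (hy : ∀ i, y i ∈ B) : ¬IsTripod E x y S := by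
  intro hT
  have hE := h.isEdgeSet
  obtain ⟨Z, hZo, hZc, hZE, hZB⟩ := h.exists_isOpen
  obtain ⟨z, hz⟩ := hZc.nonempty
  let R (w : V) : Set (ℝ × ℝ) := Z ∪ (G.edgeImage (E.filter (w ∉ ·)))ᶜ
  have hR (w : V) (hw : w ∈ B) : JoinedIn (R w) (G.pos w) z := by
    have hEw : G.IsEdgeSet (E.filter (w ∉ ·)) := hE.mono (Finset.filter_subset _ _)
    exact joinedIn_union_of_mem_closure hZo hZc (isOpen_compl_edgeImage hEw)
      (pos_notMem_edgeImage hEw (h.subset_verts hw) fun e he ↦ (Finset.mem_filter.1 he).2)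
      (hZB w hw) hz
  have hdisj {S : Set V} {w : V} (hw : w ∉ S) :
      Disjoint (G.edgeImage (edgesWithin E S)) (R w) :=
    disjoint_edgeImage_edgesWithin_union hZE hw
  have hfoot (i : Fin 3) : y i ∈ S i := (hT.foot_mem_iff i i).2 rfl
  have hne {i j : Fin 3} (hij : i ≠ j) : y i ∉ S j := mt (hT.foot_mem_iff i j).1 hij
  have hsucc (i : Fin 3) : i ≠ i + 1 ∧ i + 2 ≠ i + 1 := by revert i; decide
  refine not_tripod_of_joinedIn (fun i ↦ joinedIn_of_reachIn hE (hT.leg i) ?_)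
    (fun i ↦ hR (y i) (hy i)) (hR x hx)
    (fun i ↦ joinedIn_of_reachIn hE (hT.joined (k := i) (by decide +revert) (by decide +revert)) ?_)
    (fun i ↦ disjoint_edgeImage_edgesWithin_compl hE (S i))
    (fun i ↦ hdisj (not_not.2 (hfoot i))) (fun i ↦ hdisj (not_not.2 (hT.center_mem i)))
    fun i j hij ↦ hdisj (hne hij.symm)
  · rintro rfl
    exact hne (hsucc i).1 (hT.center_mem _)
  · intro heq
    exact hne (hsucc i).2 (heq ▸ hfoot _)

theorem planarClass_onCommonFace (G : PlaneGraph V) : PlanarClass G.OnCommonFace where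
  noloop h v hv := G.adj_irrefl v (h.isEdgeSet hv)
  finite h := G.finite_verts.subset h.subset_verts
  mono := OnCommonFace.mono
  delete := OnCommonFace.delete
  edge := OnCommonFace.edge
  not_tripod := OnCommonFace.not_isTripod

lemma finite_fromRel_adj (G : PlaneGraph V) : (Sym2.fromRel ⟨G.adj_symm⟩).Finite := by
  refine ((G.finite_verts.prod G.finite_verts).image fun p ↦ s(p.1, p.2)).subset fun e he ↦ ?_
  induction e with
  | h u v => exact ⟨(u, v), ⟨G.adj_mem u v he, right_mem_verts he⟩, rfl⟩

/-- The set of all edges of `G`. -/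
noncomputable def edgeFinset (G : PlaneGraph V) : Finset (Sym2 V) :=
  G.finite_fromRel_adj.toFinset

lemma mem_edgeFinset : s(u, v) ∈ G.edgeFinset ↔ G.Adj u v := by
  simp [edgeFinset]

lemma isEdgeSet_edgeFinset (G : PlaneGraph V) : G.IsEdgeSet G.edgeFinset :=
  fun _ _ ↦ mem_edgeFinset.1

lemma image_eq (G : PlaneGraph V) : G.image = G.pos '' G.verts ∪ G.edgeImage G.edgeFinset := by
  rw [image]
  congr 1
  ext p
  simp [mem_edgeImage, mem_edgeFinset]

lemma isConnected_outerFace (G : PlaneGraph V) : IsConnected G.outerFace := by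
  have hcompact : IsCompact G.image := G.image_eq ▸
    (G.finite_verts.image _).isCompact.union (isCompact_edgeImage G.isEdgeSet_edgeFinset)
  obtain ⟨R, hR, hGR⟩ := hcompact.isBounded.subset_closedBall_lt 0 (0 : ℝ × ℝ)
  have hrank : 1 < Module.rank ℝ (ℝ × ℝ) := by
    rw [← Module.finrank_eq_rank, Module.finrank_prod]
    simp
  have hconn := isConnected_compl_closedBall hrank hR.le
  have hsub : (Metric.closedBall (0 : ℝ × ℝ) R)ᶜ ⊆ G.imageᶜ := compl_subset_compl.2 hGR
  obtain ⟨o, ho⟩ := hconn.nonempty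
  have hcomp := hconn.isPreconnected.subset_connectedComponentIn ho hsub
  suffices G.outerFace = connectedComponentIn G.imageᶜ o by
    rw [this]
    exact isConnected_connectedComponentIn_iff.2 (hsub ho)
  refine Subset.antisymm (fun p ⟨hp, hunbdd⟩ ↦ ?_) fun p hp ↦
    ⟨connectedComponentIn_subset _ _ hp, fun hbdd ↦ ?_⟩
  · obtain ⟨q, hq, hqR⟩ := not_subset.1 fun h ↦ hunbdd (Metric.isBounded_closedBall.subset h)
    rw [connectedComponentIn_eq (hcomp hqR), ← connectedComponentIn_eq hq]
    exact mem_connectedComponentIn hp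
  · rw [← connectedComponentIn_eq hp] at hbdd
    refine NormedSpace.unbounded_univ ℝ (ℝ × ℝ) ?_
    rw [← union_compl_self (Metric.closedBall (0 : ℝ × ℝ) R)]
    exact Metric.isBounded_closedBall.union (hbdd.subset hcomp)

lemma onCommonFace_boundaryVerts (G : PlaneGraph V) :
    G.OnCommonFace G.edgeFinset G.boundaryVerts where
  isEdgeSet := G.isEdgeSet_edgeFinset
  subset_verts _ hv := hv.1
  face := ⟨G.outerFace, G.isConnected_outerFace,
    fun _ hp hpE ↦ hp.1 (G.image_eq ▸ Or.inr hpE), fun _ hb ↦ frontier_subset_closure hb.2⟩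

end PlaneGraph

/-- Theorem 2.3, Two with List of Size Two Theorem: if
`(G, S, L)` is a canvas with `V(S) = {v₁, v₂}` (and `S` edgeless),
`|L(v₁)| ≥ 2` and `|L(v₂)| ≥ 2`, then `G` has an `L`-coloring. -/
theorem two_with_list_of_size_two {V : Type u} (G : PlaneGraph V)
    (v1 v2 : V) (L : V → Finset ℕ)
    (hv : v1 ≠ v2)
    (h : IsCanvas G {v1, v2} (fun _ _ => False) L)
    (h1 : 2 ≤ (L v1).card) (h2 : 2 ≤ (L v2).card) :
    G.HasLColoring L := by
  classical
  have hv₁ : v1 ∈ G.verts := h.sverts_sub (by simp)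
  have hv₂ : v2 ∈ G.verts := h.sverts_sub (by simp)
  -- `L` is unrestricted outside `G.verts`, so it is replaced there by a list of size five.
  let L' (v : V) : Finset ℕ := if v ∈ G.verts then L v else Finset.range 5
  have hL' {v : V} (hvG : v ∈ G.verts) : L' v = L v := if_pos hvG
  have hThomassen : HasThomassenLists G.boundaryVerts L' {v1, v2} := by
    intro v hvS
    by_cases hvG : v ∈ G.verts
    · rw [hL' hvG]
      exact ⟨h.card_outside_S v hvG hvS, fun hB ↦ h.card_inner v hvG fun ho ↦ hB ⟨hvG, ho⟩⟩
    · simp [L', hvG]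
  obtain ⟨φ, hφ⟩ := G.planarClass_onCommonFace.exists_coloring G.onCommonFace_boundaryVerts hv
    ⟨hv₁, h.sverts_outer v1 (by simp)⟩ ⟨hv₂, h.sverts_outer v2 (by simp)⟩ hThomassen
    ((hL' hv₁).symm ▸ h1) ((hL' hv₂).symm ▸ h2)
  exact ⟨φ, fun v hvG ↦ hL' hvG ▸ hφ.mem (notMem_empty v),
    fun u v huv ↦ hφ.ne (PlaneGraph.mem_edgeFinset.2 huv)⟩
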